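/- arXiv:1408.0846 — 2 statements merged into one kernel-verified Lean document; each statement's English description precedes it below -/
import Mathlib

section
/- Let k ≥ 4 and let G be a graph such that ρ_{k,G}(S) > k(k−3) for every nonempty S ⊆ V(G). Then G is (k−1)-colorable. -/
open SimpleGraph

section Defs

variable {V : Type*}

instance instDecidableInduceAdj (G : SimpleGraph V) [DecidableRel G.Adj] (s : Set V) :
    DecidableRel (G.induce s).Adj := fun a b => ‹DecidableRel G.Adj› a.1 b.1

instance instDecidableDeleteEdgeAdj [DecidableEq V] (G : SimpleGraph V) [DecidableRel G.Adj]
    (e : Sym2 V) : DecidableRel (G.deleteEdges {e}).Adj := fun a b =>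
  decidable_of_iff (G.Adj a b ∧ ¬s(a, b) = e) (by simp)

/-- The `k`-potential of a vertex subset `R` of a graph `G`:
`ρ_{k,G}(R) = (k+1)(k-2)|R| - 2(k-1)|E(G[R])|`, where `G[R]` is the induced subgraph. -/
def potential (k : ℕ) (G : SimpleGraph V) [Fintype V] [DecidableEq V] [DecidableRel G.Adj]
    (R : Finset V) : ℤ :=
  ((k : ℤ) + 1) * ((k : ℤ) - 2) * R.card
    - 2 * ((k : ℤ) - 1) * ((G.induce (R : Set V)).edgeFinset.card)

/-- A graph is `k`-critical if its chromatic number is `k` and every proper subgraph is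
`(k-1)`-colorable. -/
def IsKCritical (k : ℕ) (G : SimpleGraph V) : Prop :=
  G.chromaticNumber = k ∧ ∀ H : SimpleGraph V, H < G → H.Colorable (k - 1)

/-- The graph underlying the DHGO-composition: delete the edge `xy` from `G₁`, split the vertex
`z` of `G₂` into two vertices, identify `x` with the half of `z` joined to the neighbors of `z`
lying in `P` and identify `y` with the half joined to the remaining neighbors of `z`. -/
def dhgoGraph {V₁ V₂ : Type*} (G₁ : SimpleGraph V₁) (G₂ : SimpleGraph V₂)
    (x y : V₁) (z : V₂) (P : Set V₂) :
    SimpleGraph (V₁ ⊕ {w : V₂ // w ≠ z}) :=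
  SimpleGraph.fromRel (fun a b =>
    match a, b with
    | Sum.inl a, Sum.inl b => G₁.Adj a b ∧ s(a, b) ≠ s(x, y)
    | Sum.inl a, Sum.inr b => (a = x ∧ (b : V₂) ∈ P) ∨ (a = y ∧ (b : V₂) ∈ G₂.neighborSet z \ P)
    | Sum.inr a, Sum.inr b => G₂.Adj a b
    | _, _ => False)

/-- `G` is a DHGO-composition of `G₁` and `G₂`: some edge `xy` of `G₁` is deleted, some vertex
`z` of `G₂` is split into two vertices of positive degree (its neighborhood is partitioned into
two nonempty parts `P` and `N(z) \ P`), and `x`, `y` are identified with the two halves of `z`. -/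
def IsDHGO {V₁ V₂ U : Type*} (G : SimpleGraph U) (G₁ : SimpleGraph V₁) (G₂ : SimpleGraph V₂) :
    Prop :=
  ∃ (x y : V₁) (z : V₂) (P : Set V₂),
    G₁.Adj x y ∧ P ⊆ G₂.neighborSet z ∧ P.Nonempty ∧ (G₂.neighborSet z \ P).Nonempty ∧
    Nonempty (G ≃g dhgoGraph G₁ G₂ x y z P)

/-- `k`-Ore graphs on the canonical finite vertex types `Fin n`: graphs obtained from copies of
`K_k` by a sequence of DHGO-compositions. -/
inductive IsOreFin (k : ℕ) : ∀ {n : ℕ}, SimpleGraph (Fin n) → Prop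
  | complete {n : ℕ} {G : SimpleGraph (Fin n)}
      (h : Nonempty (G ≃g (⊤ : SimpleGraph (Fin k)))) : IsOreFin k G
  | comp {n₁ n₂ n : ℕ} {G₁ : SimpleGraph (Fin n₁)} {G₂ : SimpleGraph (Fin n₂)}
      {G : SimpleGraph (Fin n)} (h₁ : IsOreFin k G₁) (h₂ : IsOreFin k G₂)
      (h : IsDHGO G G₁ G₂) : IsOreFin k G

/-- A graph is a `k`-Ore graph if it is obtained from copies of `K_k` by a sequence of
DHGO-compositions. -/
def IsKOre (k : ℕ) {V : Type*} (G : SimpleGraph V) : Prop :=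
  ∃ (n : ℕ) (H : SimpleGraph (Fin n)), IsOreFin k H ∧ Nonempty (G ≃g H)

/-- `y_k = max {2k - 6, k² - 5k + 2}`. -/
def yk (k : ℕ) : ℤ := max (2 * (k : ℤ) - 6) ((k : ℤ) ^ 2 - 5 * (k : ℤ) + 2)

/-- A `k`-critical graph is `k`-extremal if `2(k-1)|E(G)| = (k+1)(k-2)|V(G)| - k(k-3)`. -/
def IsKExtremal (k : ℕ) {V : Type*} [Fintype V] [DecidableEq V] (G : SimpleGraph V)
    [DecidableRel G.Adj] : Prop :=
  IsKCritical k G ∧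
    2 * ((k : ℤ) - 1) * G.edgeFinset.card =
      ((k : ℤ) + 1) * ((k : ℤ) - 2) * Fintype.card V - (k : ℤ) * ((k : ℤ) - 3)

/-- A graph is 3-connected if it has more than 3 vertices and deleting any set of at most 2
vertices leaves it connected. -/
def IsThreeConnected {V : Type*} [Fintype V] (G : SimpleGraph V) : Prop :=
  3 < Fintype.card V ∧ ∀ s : Set V, s.ncard ≤ 2 → (G.induce sᶜ).Connected

/-- `Q` is a `k`-quasi-`xy`-vertex: `G[Q]` is `(k-1)`-colorable, every proper `(k-1)`-coloring
of `G[Q]` gives `x` and `y` the same color, and for every edge `e` of `G[Q]` the graph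
`G[Q] - e` has a proper `(k-1)`-coloring giving `x` and `y` different colors. -/
def IsQuasiVertex (k : ℕ) {V : Type*} [DecidableEq V] (G : SimpleGraph V) (x y : V)
    (Q : Set V) : Prop :=
  ∃ (hx : x ∈ Q) (hy : y ∈ Q),
    (G.induce Q).Colorable (k - 1) ∧
    (∀ C : (G.induce Q).Coloring (Fin (k - 1)), C ⟨x, hx⟩ = C ⟨y, hy⟩) ∧
    (∀ a b : Q, (G.induce Q).Adj a b →
      ∃ C : ((G.induce Q).deleteEdges {s(a, b)}).Coloring (Fin (k - 1)),
        C ⟨x, hx⟩ ≠ C ⟨y, hy⟩)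

/-- A set `S` of vertices is standard if `ρ_{k,G}(S) = (k+1)(k-2)`, `G` has a separating set
`{x,y} ⊆ S` such that `S - {x,y}` induces a component of `G - {x,y}`, and `S` is a
`k`-quasi-`xy`-vertex. -/
def IsStandardSet (k : ℕ) {V : Type*} [Fintype V] [DecidableEq V] (G : SimpleGraph V)
    [DecidableRel G.Adj] (S : Finset V) : Prop :=
  potential k G S = ((k : ℤ) + 1) * ((k : ℤ) - 2) ∧
  ∃ x y : V, x ≠ y ∧ x ∈ S ∧ y ∈ S ∧
    ¬(G.induce ({x, y}ᶜ : Set V)).Connected ∧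
    (G.induce ((S : Set V) \ {x, y})).Connected ∧
    (∀ a ∈ (S : Set V) \ {x, y}, ∀ b : V, G.Adj a b → b ∈ (S : Set V) ∪ {x, y}) ∧
    IsQuasiVertex k G x y (S : Set V)

end Defs

/-!
This is the potential method of Kostochka and Yancey. Take a counterexample `G[U]` with as few
vertices as possible, then as few edges, then as many pairs of twins (adjacent vertices with the
same closed neighborhood) as possible.

* *Small potential.* Color a proper subset `R` with `k - 1` colors and identify each color class,
  after adding a few edges inside `R` so that no color class carries too many of the edges leaving
  `R`. The smaller graph must contain a set of potential at most `k(k-3)`, and undoing the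
  identification produces a larger set of smaller potential than `R`. Hence every subset with at
  least two vertices and potential at most `2(k-1)(k-2)` is `U` itself or a clique of size `k - 1`.
* *Twins.* Let `x` have degree `k - 1` and `s` twins, counting `x`. Rewiring a neighbor of `x` so
  that it becomes a twin of `x` increases the number of twins, so the new graph is colorable or has
  a set of low potential. It follows that the neighbors of `x` that are not its twins have degree at
  least `k - 1 + s`, unless `x` lies in a `(k - 1)`-clique. In that case the same bound holds for
  those in the clique, and not all vertices of the clique other than `x` have degree `k`.
* *Sparsity.* Let `A` be the set of vertices of degree `k - 1` without neighbors of that degree and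
  `B` the set of vertices of degree `k`. If there were many edges between `A` and `B`, some subset
  of `A ∪ B` would have a kernel-perfect orientation with small outdegrees, and a coloring of the
  rest of the graph would extend to it by the Bondy–Boppana–Siegel lemma.
* *Discharging.* Vertices of degree at least `k + 1` send their surplus along their edges to the
  vertices of degree `k - 1`. The total shows that the potential of `U` is at most `0`.
-/

namespace KostochkaYancey

open Finset
open scoped Classical

variable {V : Type*} {k : ℕ} {G : SimpleGraph V} {U : Finset V}

/-- The neighbors of `v` inside `U`. -/
noncomputable def nbhd (G : SimpleGraph V) (U : Finset V) (v : V) : Finset V := {u ∈ U | G.Adj v u}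

/-- The degree of `v` into `U`. -/
noncomputable def deg (G : SimpleGraph V) (U : Finset V) (v : V) : ℕ := #(nbhd G U v)

/-- The closed neighborhood of `v` in `G[U]`. -/
noncomputable def closedNbhd (G : SimpleGraph V) (U : Finset V) (v : V) : Finset V :=
  insert v (nbhd G U v)

/-- The number of ordered pairs of `S × T` that are adjacent, as an integer. Every edge of `G[S]`
is counted twice in `edgePairs G S S`. -/
noncomputable def edgePairs (G : SimpleGraph V) (S T : Finset V) : ℤ := #(G.interedges S T)

/-- The `k`-potential of a finite vertex set, written with `edgePairs` so that the ambient vertex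
type may be infinite. -/
noncomputable def rho (k : ℕ) (G : SimpleGraph V) (S : Finset V) : ℤ :=
  ((k : ℤ) + 1) * ((k : ℤ) - 2) * #S - ((k : ℤ) - 1) * edgePairs G S S

section Neighborhoods

variable {S T : Finset V} {u v : V}

lemma mem_nbhd : u ∈ nbhd G U v ↔ u ∈ U ∧ G.Adj v u := mem_filter

lemma nbhd_subset (v : V) : nbhd G U v ⊆ U := filter_subset _ _

lemma notMem_nbhd_self : v ∉ nbhd G U v := fun h => G.irrefl (mem_nbhd.1 h).2

lemma nbhd_eq_inter (h : S ⊆ T) (v : V) : nbhd G S v = nbhd G T v ∩ S := by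
  ext u
  simp only [mem_nbhd, mem_inter]
  have := @h u
  tauto

lemma deg_union (h : Disjoint S T) (v : V) : deg G (S ∪ T) v = deg G S v + deg G T v := by
  unfold deg nbhd
  rw [filter_union, card_union_of_disjoint (disjoint_filter_filter h)]

lemma nbhd_eq_erase_of_isClique (h : G.IsClique (S : Set V)) (hv : v ∈ S) :
    nbhd G S v = S.erase v := by
  ext u
  rw [mem_nbhd, mem_erase]
  exact ⟨fun hu => ⟨hu.2.ne', hu.1⟩, fun hu => ⟨hu.2, h hv hu.2 hu.1.symm⟩⟩

lemma mem_closedNbhd : u ∈ closedNbhd G U v ↔ u = v ∨ u ∈ U ∧ G.Adj v u := by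
  rw [closedNbhd, mem_insert, mem_nbhd]

lemma self_mem_closedNbhd : v ∈ closedNbhd G U v := mem_insert_self _ _

lemma nbhd_subset_closedNbhd : nbhd G U v ⊆ closedNbhd G U v := subset_insert _ _

lemma closedNbhd_subset (hv : v ∈ U) : closedNbhd G U v ⊆ U := insert_subset hv (nbhd_subset v)

lemma card_closedNbhd (v : V) : #(closedNbhd G U v) = deg G U v + 1 :=
  card_insert_of_notMem notMem_nbhd_self

lemma card_closedNbhd_erase (hu : u ∈ closedNbhd G U v) :
    #((closedNbhd G U v).erase u) = deg G U v := by
  rw [card_erase_of_mem hu, card_closedNbhd, Nat.add_sub_cancel]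

end Neighborhoods

section EdgePairs

variable {G' : SimpleGraph V} {S S' T T' : Finset V} {v : V}

lemma edgePairs_eq_sum_deg (G : SimpleGraph V) (S T : Finset V) :
    edgePairs G S T = ∑ v ∈ S, (deg G T v : ℤ) := by
  simp only [edgePairs, interedges_def, deg, nbhd, card_filter, sum_product]
  push_cast
  rfl

lemma edgePairs_comm (G : SimpleGraph V) (S T : Finset V) :
    edgePairs G S T = edgePairs G T S := by
  have : Std.Symm G.Adj := G.symm
  exact congrArg Nat.cast (Rel.card_interedges_comm S T)

lemma edgePairs_nonneg (G : SimpleGraph V) (S T : Finset V) : 0 ≤ edgePairs G S T :=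
  Int.natCast_nonneg _

lemma edgePairs_union_left (h : Disjoint S S') (T : Finset V) :
    edgePairs G (S ∪ S') T = edgePairs G S T + edgePairs G S' T := by
  simp only [edgePairs_eq_sum_deg, sum_union h]

lemma edgePairs_union_right (h : Disjoint T T') (S : Finset V) :
    edgePairs G S (T ∪ T') = edgePairs G S T + edgePairs G S T' := by
  rw [edgePairs_comm, edgePairs_union_left h, edgePairs_comm G S, edgePairs_comm G S]

lemma edgePairs_add_sdiff_right (h : T ⊆ T') (S : Finset V) :
    edgePairs G S T' = edgePairs G S T + edgePairs G S (T' \ T) := by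
  rw [← edgePairs_union_right disjoint_sdiff, union_sdiff_of_subset h]

lemma edgePairs_mono (hS : S ⊆ S') (hT : T ⊆ T') : edgePairs G S T ≤ edgePairs G S' T' :=
  Int.ofNat_le.2 (card_le_card (Rel.interedges_mono hS hT))

lemma edgePairs_congr (h : ∀ u ∈ S, ∀ v ∈ T, (G.Adj u v ↔ G'.Adj u v)) :
    edgePairs G S T = edgePairs G' S T := by
  unfold edgePairs
  congr 2
  ext ⟨u, v⟩
  simp only [mk_mem_interedges_iff]
  exact and_congr_right fun hu => and_congr_right fun hv => h u hu v hv

lemma edgePairs_singleton_left (v : V) (T : Finset V) : edgePairs G {v} T = deg G T v := by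
  rw [edgePairs_eq_sum_deg, sum_singleton]

lemma edgePairs_self_eq_erase (hv : v ∈ U) :
    edgePairs G U U = edgePairs G (U.erase v) (U.erase v) + 2 * deg G U v := by
  have hdisj : Disjoint {v} (U.erase v) := by simp
  have hdeg : deg G U v = deg G (U.erase v) v := by
    rw [deg, deg, nbhd_eq_inter (erase_subset v U), inter_erase, inter_eq_left.2 (nbhd_subset v),
      erase_eq_of_notMem notMem_nbhd_self]
  have hself : edgePairs G {v} {v} = 0 := by
    rw [edgePairs_singleton_left, deg, nbhd, filter_singleton, if_neg G.irrefl]; rfl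
  rw [hdeg]
  nth_rw 1 2 [← insert_erase hv]
  rw [insert_eq, edgePairs_union_left hdisj, edgePairs_union_right hdisj,
    edgePairs_union_right hdisj, edgePairs_comm G (U.erase v) {v}, hself,
    edgePairs_singleton_left]
  ring

lemma natCast_card_offDiag (S : Finset V) : (#S.offDiag : ℤ) = #S * (#S - 1) := by
  rw [offDiag_card, Nat.cast_sub (Nat.le_mul_self _)]
  push_cast
  ring

lemma interedges_self_subset_offDiag (G : SimpleGraph V) (S : Finset V) :
    G.interedges S S ⊆ S.offDiag := fun _ hp =>
  have h := G.mem_interedges_iff.1 hp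
  mem_offDiag.2 ⟨h.1, h.2.1, h.2.2.ne⟩

lemma edgePairs_self_le (G : SimpleGraph V) (S : Finset V) :
    edgePairs G S S ≤ #S * ((#S : ℤ) - 1) := by
  rw [← natCast_card_offDiag]
  exact Int.ofNat_le.2 (card_le_card (interedges_self_subset_offDiag G S))

lemma isClique_iff_edgePairs_self_eq :
    G.IsClique (S : Set V) ↔ edgePairs G S S = #S * ((#S : ℤ) - 1) := by
  have hsub := interedges_self_subset_offDiag G S
  rw [← natCast_card_offDiag, edgePairs, Nat.cast_inj]
  constructor <;> intro h
  · refine le_antisymm (card_le_card hsub) (card_le_card fun p hp => ?_)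
    obtain ⟨h₁, h₂, hne⟩ := mem_offDiag.1 hp
    exact G.mem_interedges_iff.2 ⟨h₁, h₂, h h₁ h₂ hne⟩
  · intro u hu v hv huv
    have huv' : (u, v) ∈ S.offDiag := mem_offDiag.2 ⟨hu, hv, huv⟩
    rw [← eq_of_subset_of_card_le hsub h.ge] at huv'
    exact (G.mk_mem_interedges_iff.1 huv').2.2

end EdgePairs

section Potential

variable {G' : SimpleGraph V} {S T : Finset V} {v : V}

lemma rho_union (k : ℕ) (h : Disjoint S T) :
    rho k G (S ∪ T) = rho k G S + rho k G T - 2 * ((k : ℤ) - 1) * edgePairs G S T := by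
  unfold rho
  rw [card_union_of_disjoint h, edgePairs_union_left h, edgePairs_union_right h,
    edgePairs_union_right h, edgePairs_comm G T S]
  push_cast
  ring

lemma rho_empty (k : ℕ) (G : SimpleGraph V) : rho k G ∅ = 0 := by
  simp [rho, edgePairs_eq_sum_deg]

lemma rho_singleton (k : ℕ) (G : SimpleGraph V) (v : V) :
    rho k G {v} = ((k : ℤ) + 1) * ((k : ℤ) - 2) := by
  have := edgePairs_self_le G {v}
  have h : edgePairs G {v} {v} = 0 := le_antisymm (by simpa using this) (edgePairs_nonneg ..)
  rw [rho, h, card_singleton]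
  ring

lemma rho_congr (k : ℕ) (h : ∀ u ∈ S, ∀ v ∈ S, (G.Adj u v ↔ G'.Adj u v)) :
    rho k G S = rho k G' S := by
  rw [rho, rho, edgePairs_congr h]

lemma rho_insert (k : ℕ) (h : v ∉ S) :
    rho k G (insert v S) =
      rho k G S + ((k : ℤ) + 1) * ((k : ℤ) - 2) - 2 * ((k : ℤ) - 1) * deg G S v := by
  rw [insert_eq, rho_union k (disjoint_singleton_left.2 h), rho_singleton,
    edgePairs_singleton_left]
  ring

lemma rho_union_add_rho_inter_le (hk : 1 ≤ k) (G : SimpleGraph V) (S T : Finset V) :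
    rho k G (S ∪ T) + rho k G (S ∩ T) ≤ rho k G S + rho k G T := by
  have hST : Disjoint S (T \ S) := disjoint_sdiff
  have h_union := rho_union (G := G) k hST
  have h_right := rho_union (G := G) k (hST.mono_left (inter_subset_left (s₂ := T)))
  rw [union_sdiff_self_eq_union] at h_union
  rw [inter_comm, union_comm, sdiff_union_inter, inter_comm] at h_right
  have h_mono : edgePairs G (S ∩ T) (T \ S) ≤ edgePairs G S (T \ S) :=
    edgePairs_mono inter_subset_left Subset.rfl
  have : (1 : ℤ) ≤ k := mod_cast hk
  nlinarith

lemma rho_of_isClique (k : ℕ) (h : G.IsClique (S : Set V)) :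
    rho k G S = #S * (((k : ℤ) + 1) * ((k : ℤ) - 2) - ((k : ℤ) - 1) * ((#S : ℤ) - 1)) := by
  rw [rho, isClique_iff_edgePairs_self_eq.1 h]
  ring

lemma rho_of_isNClique (hk : 1 ≤ k) (h : G.IsNClique (k - 1) S) :
    rho k G S = 2 * ((k : ℤ) - 1) * ((k : ℤ) - 2) := by
  rw [rho_of_isClique k h.isClique, h.card_eq]
  push_cast [Nat.cast_sub hk]
  ring

lemma card_mul_le_rho (hk : 1 ≤ k) (G : SimpleGraph V) (S : Finset V) :
    #S * (((k : ℤ) + 1) * ((k : ℤ) - 2) - ((k : ℤ) - 1) * ((#S : ℤ) - 1)) ≤ rho k G S := by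
  have h := edgePairs_self_le G S
  have : (1 : ℤ) ≤ k := mod_cast hk
  unfold rho
  nlinarith

lemma two_mul_le_rho_of_card_lt (hk : 4 ≤ k) (h₂ : 2 ≤ #S) (hlt : #S < k) :
    2 * ((k : ℤ) - 1) * ((k : ℤ) - 2) ≤ rho k G S := by
  refine le_trans ?_ (card_mul_le_rho (by lia) G S)
  have : (4 : ℤ) ≤ k := mod_cast hk
  have : (2 : ℤ) ≤ #S := mod_cast h₂
  have : (#S : ℤ) ≤ k - 1 := by lia
  have : 0 ≤ ((k : ℤ) - 1 - #S) * (((k : ℤ) - 1) * #S - 2 * ((k : ℤ) - 2)) := by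
    apply mul_nonneg <;> nlinarith
  nlinarith

lemma isNClique_of_rho_le (hk : 4 ≤ k) (h₂ : 2 ≤ #S) (hlt : #S < k)
    (hρ : rho k G S ≤ 2 * ((k : ℤ) - 1) * ((k : ℤ) - 2)) : G.IsNClique (k - 1) S := by
  have h := card_mul_le_rho (by lia : 1 ≤ k) G S
  have : (4 : ℤ) ≤ k := mod_cast hk
  have : (2 : ℤ) ≤ #S := mod_cast h₂
  have hcard : #S = k - 1 := by
    by_contra hne
    have : (#S : ℤ) < k - 1 := by lia
    have : 0 < ((k : ℤ) - 1 - #S) * (((k : ℤ) - 1) * #S - 2 * ((k : ℤ) - 2)) := by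
      apply mul_pos <;> nlinarith
    nlinarith
  refine ⟨isClique_iff_edgePairs_self_eq.2 (le_antisymm (edgePairs_self_le G S) ?_), hcard⟩
  have hcard' : (#S : ℤ) = k - 1 := by lia
  rw [rho, hcard'] at hρ
  rw [hcard']
  nlinarith

end Potential

section Coloring

variable {G' : SimpleGraph V} {R S : Finset V} {α β : Type*} {c d : V → α} {n : ℕ}

/-- `c` restricts to a proper coloring of `G[U]`. Colorings are total functions on `V`, so that
colorings of different vertex sets can be compared and glued. -/
def IsColoringOn (G : SimpleGraph V) (U : Finset V) (c : V → α) : Prop :=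
  ∀ u ∈ U, ∀ v ∈ U, G.Adj u v → c u ≠ c v

/-- `G[U]` is `n`-colorable. -/
def ColorableOn (G : SimpleGraph V) (U : Finset V) (n : ℕ) : Prop :=
  ∃ c : V → Fin n, IsColoringOn G U c

lemma IsColoringOn.mono (h : IsColoringOn G U c) (hS : S ⊆ U) : IsColoringOn G S c :=
  fun u hu v hv => h u (hS hu) v (hS hv)

lemma IsColoringOn.comp_injective (h : IsColoringOn G U c) {f : α → β}
    (hf : Function.Injective f) : IsColoringOn G U (f ∘ c) :=
  fun u hu v hv huv e => h u hu v hv huv (hf e)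

lemma IsColoringOn.piecewise (hc : IsColoringOn G R c) (hd : IsColoringOn G (U \ R) d)
    (hcross : ∀ u ∈ R, ∀ v ∈ U \ R, G.Adj u v → c u ≠ d v) :
    IsColoringOn G U (R.piecewise c d) := by
  intro u hu v hv huv
  by_cases huR : u ∈ R <;> by_cases hvR : v ∈ R <;>
    simp only [piecewise_eq_of_mem _ _ _, piecewise_eq_of_notMem _ _ _, huR, hvR,
      not_false_eq_true]
  · exact hc u huR v hvR huv
  · exact hcross u huR v (mem_sdiff.2 ⟨hv, hvR⟩) huv
  · exact (hcross v hvR u (mem_sdiff.2 ⟨hu, huR⟩) huv.symm).symm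
  · exact hd u (mem_sdiff.2 ⟨hu, huR⟩) v (mem_sdiff.2 ⟨hv, hvR⟩) huv

lemma IsColoringOn.update {v : V} {a : α} (hc : IsColoringOn G (U.erase v) c)
    (ha : ∀ u ∈ nbhd G U v, c u ≠ a) : IsColoringOn G U (Function.update c v a) := by
  have hglue := IsColoringOn.piecewise (R := {v}) (U := U) (c := fun _ => a) (d := c) (G := G)
    (by simp [IsColoringOn]) (by rwa [sdiff_singleton_eq_erase]) fun u hu w hw huw => by
      obtain rfl := mem_singleton.1 hu
      exact (ha w (mem_nbhd.2 ⟨(mem_sdiff.1 hw).1, huw⟩)).symm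
  rwa [piecewise_singleton] at hglue

lemma exists_forall_ne_of_card_lt (c : V → Fin n) (h : #S < n) : ∃ a, ∀ u ∈ S, c u ≠ a := by
  have hlt : #(S.image c) < #(univ : Finset (Fin n)) := by
    simpa using card_image_le.trans_lt h
  obtain ⟨a, -, ha⟩ := exists_mem_notMem_of_card_lt_card hlt
  exact ⟨a, fun u hu e => ha (e ▸ mem_image_of_mem c hu)⟩

end Coloring

section MinimalCounterexamples

variable {R S : Finset V} {v : V}

/-- Every nonempty subset of `U` has `k`-potential larger than `k(k-3)`, the potential of `K_k`. -/
def HighPotential (k : ℕ) (G : SimpleGraph V) (U : Finset V) : Prop :=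
  ∀ S ⊆ U, S.Nonempty → (k : ℤ) * ((k : ℤ) - 3) < rho k G S

/-- The cluster of `v`: the vertices of `U` with the same closed neighborhood as `v` in `G[U]`. -/
noncomputable def cluster (G : SimpleGraph V) (U : Finset V) (v : V) : Finset V :=
  {u ∈ U | closedNbhd G U u = closedNbhd G U v}

/-- The number of ordered pairs of vertices of `U` (repetitions allowed) with the same closed
neighborhood in `G[U]`. -/
noncomputable def twinCount (G : SimpleGraph V) (U : Finset V) : ℕ := ∑ u ∈ U, #(cluster G U u)

/-- `(G, U)` is a counterexample to the theorem that has the fewest vertices, subject to that the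
fewest edges, and subject to that the most twin pairs. -/
structure IsMinCounterexample (k : ℕ) (G : SimpleGraph V) (U : Finset V) : Prop where
  four_le : 4 ≤ k
  highPotential : HighPotential k G U
  not_colorableOn : ¬ ColorableOn G U (k - 1)
  colorableOn_of_card_lt : ∀ (G' : SimpleGraph V) (U' : Finset V), #U' < #U →
    HighPotential k G' U' → ColorableOn G' U' (k - 1)
  colorableOn_of_edgePairs_lt : ∀ G' : SimpleGraph V, edgePairs G' U U < edgePairs G U U →
    HighPotential k G' U → ColorableOn G' U (k - 1)
  colorableOn_of_twinCount_lt : ∀ G' : SimpleGraph V, edgePairs G' U U = edgePairs G U U →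
    twinCount G U < twinCount G' U → HighPotential k G' U → ColorableOn G' U (k - 1)

lemma not_highPotential_iff : ¬ HighPotential k G U ↔
    ∃ W ⊆ U, W.Nonempty ∧ rho k G W ≤ (k : ℤ) * ((k : ℤ) - 3) := by
  simp only [HighPotential, not_forall, not_lt, exists_prop]

lemma twinCount_le (G : SimpleGraph V) (U : Finset V) : twinCount G U ≤ #U * #U :=
  (sum_le_card_nsmul U _ #U fun _ _ => card_filter_le _ _).trans_eq (smul_eq_mul ..)

lemma exists_isMinCounterexample (hk : 4 ≤ k) (hρ : HighPotential k G U)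
    (hc : ¬ ColorableOn G U (k - 1)) :
    ∃ (G' : SimpleGraph V) (U' : Finset V), IsMinCounterexample k G' U' := by
  let μ : SimpleGraph V × Finset V → ℕ ×ₗ ℕ ×ₗ ℕ := fun p =>
    toLex (#p.2, toLex (#(p.1.interedges p.2 p.2), #p.2 * #p.2 - twinCount p.1 p.2))
  obtain ⟨⟨G', U'⟩, ⟨hρ', hc'⟩, hmin⟩ := (InvImage.wf μ wellFounded_lt).has_min
    {p | HighPotential k p.1 p.2 ∧ ¬ ColorableOn p.1 p.2 (k - 1)} ⟨(G, U), hρ, hc⟩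
  have hlt : ∀ (H : SimpleGraph V) (W : Finset V), μ (H, W) < μ (G', U') →
      HighPotential k H W → ColorableOn H W (k - 1) := fun H W h hH => by
    by_contra hn
    exact hmin (H, W) ⟨hH, hn⟩ h
  simp only [μ, Prod.Lex.toLex_lt_toLex] at hlt
  refine ⟨G', U', hk, hρ', hc', fun H W h => hlt H W (.inl h),
    fun H h => hlt H U' (.inr ⟨rfl, .inl (Int.ofNat_lt.1 h)⟩), fun H h ht => hlt H U' ?_⟩
  have := twinCount_le H U'
  exact .inr ⟨rfl, .inr ⟨Int.ofNat_inj.1 h, by lia⟩⟩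

namespace IsMinCounterexample

lemma four_le_cast (M : IsMinCounterexample k G U) : (4 : ℤ) ≤ k := mod_cast M.four_le

lemma lt_rho (M : IsMinCounterexample k G U) (hS : S ⊆ U) (hne : S.Nonempty) :
    (k : ℤ) * ((k : ℤ) - 3) < rho k G S := M.highPotential S hS hne

lemma exists_rho_le_of_card_lt (M : IsMinCounterexample k G U) {G' : SimpleGraph V}
    {U' : Finset V} (hlt : #U' < #U) (hc : ¬ ColorableOn G' U' (k - 1)) :
    ∃ W ⊆ U', W.Nonempty ∧ rho k G' W ≤ (k : ℤ) * ((k : ℤ) - 3) :=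
  not_highPotential_iff.1 fun h => hc (M.colorableOn_of_card_lt G' U' hlt h)

lemma colorableOn_of_ssubset (M : IsMinCounterexample k G U) (hR : R ⊂ U) :
    ColorableOn G R (k - 1) :=
  M.colorableOn_of_card_lt G R (card_lt_card hR) fun S hS =>
    M.highPotential S (hS.trans hR.subset)

lemma le_deg (M : IsMinCounterexample k G U) (hv : v ∈ U) : k - 1 ≤ deg G U v := by
  by_contra! hlt
  obtain ⟨c, hc⟩ := M.colorableOn_of_ssubset (erase_ssubset hv)
  obtain ⟨a, ha⟩ := exists_forall_ne_of_card_lt c hlt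
  exact M.not_colorableOn ⟨_, hc.update ha⟩

/-- If fewer than `k - 1` edges left `R`, then one of the `k - 1` cyclic shifts of a coloring of
`G[R]` would agree with a coloring of `G[U \ R]`. -/
lemma sub_one_le_edgePairs_sdiff (M : IsMinCounterexample k G U) (hR : R ⊂ U)
    (hne : R.Nonempty) : (k : ℤ) - 1 ≤ edgePairs G R (U \ R) := by
  have hk := M.four_le
  have : NeZero (k - 1) := ⟨by lia⟩
  obtain ⟨c, hc⟩ := M.colorableOn_of_ssubset hR
  obtain ⟨d, hd⟩ := M.colorableOn_of_ssubset (sdiff_ssubset hR.subset hne)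
  have hconflict (a : Fin (k - 1)) : ∃ p ∈ G.interedges R (U \ R), c p.1 + a = d p.2 := by
    by_contra! hno
    refine M.not_colorableOn ⟨_, (hc.comp_injective (add_left_injective a)).piecewise hd ?_⟩
    exact fun u hu v hv huv => hno (u, v) (G.mk_mem_interedges_iff.2 ⟨hu, hv, huv⟩)
  choose f hf hfa using hconflict
  have hinj : Function.Injective f := fun a b e => by
    have := hfa a
    rwa [e, ← hfa b, add_right_inj] at this
  have := card_le_card_of_injOn f (s := univ) (fun a _ => hf a) hinj.injOn
  rw [card_univ, Fintype.card_fin] at this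
  unfold edgePairs
  lia

end IsMinCounterexample

end MinimalCounterexamples

section AddEdges

/-- The graph `G` with the pairs in `E` added as edges. -/
def addEdges (G : SimpleGraph V) (E : Finset (V × V)) : SimpleGraph V :=
  G ⊔ SimpleGraph.fromRel fun a b => (a, b) ∈ E

variable {E : Finset (V × V)} {R : Finset V} {a b : V}

lemma addEdges_adj :
    (addEdges G E).Adj a b ↔ G.Adj a b ∨ a ≠ b ∧ ((a, b) ∈ E ∨ (b, a) ∈ E) := by
  simp only [addEdges, sup_adj, fromRel_adj]

lemma IsColoringOn.of_addEdges {α : Type*} {c : V → α} (h : IsColoringOn (addEdges G E) U c) :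
    IsColoringOn G U c := fun u hu v hv huv => h u hu v hv (addEdges_adj.2 (.inl huv))

lemma IsColoringOn.ne_of_mem {α : Type*} {c : V → α} (h : IsColoringOn (addEdges G E) U c)
    (hE : E ⊆ U.offDiag) {p : V × V} (hp : p ∈ E) : c p.1 ≠ c p.2 := by
  obtain ⟨h₁, h₂, hne⟩ := mem_offDiag.1 (hE hp)
  exact h _ h₁ _ h₂ (addEdges_adj.2 (.inr ⟨hne, .inl hp⟩))

lemma edgePairs_addEdges_le (E : Finset (V × V)) (W : Finset V) :
    edgePairs (addEdges G E) W W ≤ edgePairs G W W + 2 * #(E ∩ W ×ˢ W) := by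
  set F := E ∩ W ×ˢ W with hF
  have hsub : (addEdges G E).interedges W W ⊆ G.interedges W W ∪ (F ∪ F.image Prod.swap) := by
    rintro ⟨a, b⟩ h
    simp only [mk_mem_interedges_iff, addEdges_adj] at h
    simp only [hF, mem_union, mk_mem_interedges_iff, mem_inter, mem_product, mem_image,
      Prod.exists, Prod.swap_prod_mk, Prod.mk.injEq]
    grind
  have hcard := (card_le_card hsub).trans (card_union_le _ _)
  have hF₂ := (card_union_le F (F.image Prod.swap)).trans
    (Nat.add_le_add_left card_image_le _)
  unfold edgePairs
  lia

lemma rho_le_rho_addEdges (hk : 1 ≤ k) (E : Finset (V × V)) (W : Finset V) :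
    rho k G W ≤ rho k (addEdges G E) W + 2 * ((k : ℤ) - 1) * #(E ∩ W ×ˢ W) := by
  have : (1 : ℤ) ≤ k := mod_cast hk
  have := edgePairs_addEdges_le (G := G) E W
  unfold rho
  nlinarith

end AddEdges

section Hedging

variable {R : Finset V} {w : V → ℕ} {i : ℕ}

/-- The tokens `0, …, w(R) - 1` are dealt to the vertices of `R` so that `v` owns only tokens of
the interval `[s v, s v + w v)`. -/
lemma exists_ownership [Nonempty V] (R : Finset V) (w : V → ℕ) : ∃ (o : ℕ → V) (s : V → ℕ),
    ∀ t < ∑ u ∈ R, w u, o t ∈ R ∧ s (o t) ≤ t ∧ t < s (o t) + w (o t) := by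
  induction R using Finset.induction_on with
  | empty => exact ⟨fun _ => Classical.arbitrary V, fun _ => 0, by simp⟩
  | insert u R hu ih =>
    obtain ⟨o, s, h⟩ := ih
    rw [sum_insert hu]
    set m := ∑ u ∈ R, w u
    refine ⟨fun t => if t < m then o t else u, Function.update s u m, fun t ht => ?_⟩
    by_cases htm : t < m
    · obtain ⟨hR, hs⟩ := h t htm
      simp only [if_pos htm, Function.update_of_ne (ne_of_mem_of_not_mem hR hu)]
      exact ⟨mem_insert_of_mem hR, hs⟩
    · simp only [if_neg htm, Function.update_self]
      exact ⟨mem_insert_self _ _, by lia, by lia⟩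

lemma exists_hedge_of_le_weight {u₀ : V} (hu₀ : u₀ ∈ R) (hi : i ≤ w u₀) :
    ∃ E ⊆ R.offDiag, #E ≤ i ∧ ∀ M ⊆ R, Disjoint E (M ×ˢ M) →
      i ≤ ∑ u ∈ R \ M, w u ∨ ∀ a ∈ M, ∀ b ∈ M, 0 < w a → 0 < w b → a = b := by
  set P := {u ∈ R.erase u₀ | 0 < w u} with hP
  have hmem : ∀ u ∈ P, u ≠ u₀ ∧ u ∈ R ∧ 0 < w u := fun u hu => by
    simpa only [hP, mem_filter, mem_erase, and_assoc] using hu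
  obtain ⟨Q, hQP, hQ⟩ := exists_subset_card_eq (min_le_right i #P)
  refine ⟨Q.image fun u => (u₀, u), ?_, card_image_le.trans (by lia), fun M hM hE => ?_⟩
  · intro p hp
    obtain ⟨u, hu, rfl⟩ := mem_image.1 hp
    exact mem_offDiag.2 ⟨hu₀, (hmem u (hQP hu)).2.1, (hmem u (hQP hu)).1.symm⟩
  by_cases h₀ : u₀ ∉ M
  · exact .inl (hi.trans (single_le_sum_of_canonicallyOrdered (mem_sdiff.2 ⟨hu₀, h₀⟩)))
  have hQM : ∀ u ∈ Q, u ∉ M := fun u hu hm => disjoint_left.1 hE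
    (mem_image_of_mem _ hu) (mem_product.2 ⟨not_not.1 h₀, hm⟩)
  rcases le_or_gt #P i with hle | hlt
  · have hQ_eq : Q = P := eq_of_subset_of_card_le hQP (by lia)
    have hpos : ∀ a ∈ M, 0 < w a → a = u₀ := fun a ha hwa => by
      by_contra hne
      refine hQM a ?_ ha
      rw [hQ_eq, hP, mem_filter, mem_erase]
      exact ⟨⟨hne, hM ha⟩, hwa⟩
    exact .inr fun a ha b hb hwa hwb => (hpos a ha hwa).trans (hpos b hb hwb).symm
  · refine .inl ?_
    calc i = ∑ u ∈ Q, 1 := by rw [sum_const, smul_eq_mul, mul_one, hQ, min_eq_left hlt.le]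
      _ ≤ ∑ u ∈ Q, w u := sum_le_sum fun u hu => (hmem u (hQP hu)).2.2
      _ ≤ ∑ u ∈ R \ M, w u := sum_le_sum_of_subset fun u hu =>
        mem_sdiff.2 ⟨(hmem u (hQP hu)).2.1, hQM u hu⟩

/-- Token `t` is paired with token `t + i`; their owners differ since no vertex owns tokens that
are `i` apart. -/
lemma exists_hedge_of_weight_lt [Nonempty V] (hsum : 2 * i ≤ ∑ u ∈ R, w u)
    (hw : ∀ u ∈ R, w u < i) :
    ∃ E ⊆ R.offDiag, #E ≤ i ∧ ∀ M, Disjoint E (M ×ˢ M) → i ≤ ∑ u ∈ R \ M, w u := by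
  obtain ⟨o, s, ho⟩ := exists_ownership R w
  have hoR : ∀ t < i, o t ∈ R ∧ o (t + i) ∈ R := fun t ht =>
    ⟨(ho t (by lia)).1, (ho (t + i) (by lia)).1⟩
  refine ⟨(range i).image fun t => (o t, o (t + i)), ?_, card_image_le.trans (by simp),
    fun M hM => ?_⟩
  · intro p hp
    obtain ⟨t, ht, rfl⟩ := mem_image.1 hp
    obtain ⟨h₁, h₂⟩ := hoR t (mem_range.1 ht)
    refine mem_offDiag.2 ⟨h₁, h₂, fun e => ?_⟩
    have ht' := ho t (by grind)
    have hti := ho (t + i) (by grind)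
    have hlt := hw _ h₁
    dsimp only at e
    rw [← e] at hti
    lia
  set f : ℕ → ℕ := fun t => if o t ∉ M then t else t + i
  have hf (t : ℕ) (ht : t < i) : f t < ∑ u ∈ R, w u ∧ o (f t) ∈ R \ M := by
    have hne := disjoint_left.1 hM (mem_image_of_mem (fun t => (o t, o (t + i)))
      (mem_range.2 ht))
    have := hoR t ht
    simp only [f, mem_sdiff]
    grind
  have hinj : Set.InjOn f (range i) := fun t ht t' ht' e => by
    simp only [coe_range, Set.mem_Iio] at ht ht'
    simp only [f] at e
    split_ifs at e <;> lia
  calc i = #((range i).image f) := by rw [card_image_of_injOn hinj, card_range]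
    _ ≤ #((R \ M).biUnion fun v => Ico (s v) (s v + w v)) := card_le_card fun x hx => by
      obtain ⟨t, ht, rfl⟩ := mem_image.1 hx
      obtain ⟨hft, hfM⟩ := hf t (mem_range.1 ht)
      exact mem_biUnion.2 ⟨_, hfM, mem_Ico.2 (ho _ hft).2⟩
    _ ≤ ∑ v ∈ R \ M, #(Ico (s v) (s v + w v)) := card_biUnion_le
    _ = ∑ v ∈ R \ M, w v := sum_congr rfl fun v _ => by
      rw [Nat.card_Ico, Nat.add_sub_cancel_left]

lemma exists_hedge [Nonempty V] (hsum : 2 * i ≤ ∑ u ∈ R, w u) :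
    ∃ E ⊆ R.offDiag, #E ≤ i ∧ ∀ M ⊆ R, Disjoint E (M ×ˢ M) →
      i ≤ ∑ u ∈ R \ M, w u ∨ ∀ a ∈ M, ∀ b ∈ M, 0 < w a → 0 < w b → a = b := by
  by_cases! h : ∃ u₀ ∈ R, i ≤ w u₀
  · obtain ⟨u₀, hu₀, hi⟩ := h
    exact exists_hedge_of_le_weight hu₀ hi
  · obtain ⟨E, hE, hcard, hM⟩ := exists_hedge_of_weight_lt hsum h
    exact ⟨E, hE, hcard, fun M _ hd => .inl (hM M hd)⟩

lemma exists_forall_ne_eq_zero (hR : R.Nonempty)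
    (h : ∀ a ∈ R, ∀ b ∈ R, 0 < w a → 0 < w b → a = b) :
    ∃ u ∈ R, ∀ v ∈ R, v ≠ u → w v = 0 := by
  by_cases! hex : ∃ u ∈ R, 0 < w u
  · obtain ⟨u, hu, hpos⟩ := hex
    exact ⟨u, hu, fun v hv hne => by_contra fun h₀ =>
      hne (h v hv u hu (Nat.pos_of_ne_zero h₀) hpos)⟩
  · obtain ⟨t, ht⟩ := hR
    exact ⟨t, ht, fun v hv _ => Nat.le_zero.1 (hex v hv)⟩

end Hedging

section Collapse

variable [Nonempty V] {α : Type*} {R A T : Finset V} {φ ψ : V → α} {a b u v : V} {n : ℕ}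

/-- The map sending every vertex of `R` to a fixed representative of its color class in `R`, and
fixing all other vertices. -/
noncomputable def classRep (R : Finset V) (φ : V → α) : V → V :=
  R.piecewise (Function.invFunOn φ R ∘ φ) id

/-- The graph obtained from `G` by identifying each color class of `φ` in `R` with its
representative and joining all vertices of `R` to each other. -/
noncomputable def collapse (G : SimpleGraph V) (R : Finset V) (φ : V → α) : SimpleGraph V :=
  G.map (classRep R φ) ⊔ SimpleGraph.fromRel fun a b => a ∈ R ∧ b ∈ R

lemma classRep_of_notMem (hu : u ∉ R) : classRep R φ u = u := piecewise_eq_of_notMem _ _ _ hu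

lemma classRep_of_mem (hu : u ∈ R) : classRep R φ u = Function.invFunOn φ R (φ u) :=
  piecewise_eq_of_mem _ _ _ hu

lemma classRep_mem_iff : classRep R φ u ∈ R ↔ u ∈ R := by
  by_cases hu : u ∈ R
  · rw [classRep_of_mem hu, iff_true_right hu]
    exact Function.invFunOn_apply_mem (mem_coe.2 hu)
  · rw [classRep_of_notMem hu]

lemma color_classRep (φ : V → α) (u : V) : φ (classRep R φ u) = φ u := by
  by_cases hu : u ∈ R
  · rw [classRep_of_mem hu]
    exact Function.invFunOn_apply_eq (mem_coe.2 hu)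
  · rw [classRep_of_notMem hu]

lemma classRep_ne_of_adj (hφ : IsColoringOn G R φ) (h : G.Adj u v) :
    classRep R φ u ≠ classRep R φ v := by
  intro e
  have hmem : u ∈ R ↔ v ∈ R := by rw [← classRep_mem_iff (φ := φ), e, classRep_mem_iff]
  by_cases hu : u ∈ R
  · exact hφ u hu v (hmem.1 hu) h (by rw [← color_classRep (R := R) φ u, e, color_classRep φ])
  · rw [classRep_of_notMem hu, classRep_of_notMem (mt hmem.2 hu)] at e
    exact h.ne e

lemma card_image_classRep_le (R : Finset V) (φ : V → Fin n) : #(R.image (classRep R φ)) ≤ n := by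
  have hinj : Set.InjOn φ (R.image (classRep R φ)) := by
    intro x hx y hy e
    obtain ⟨u, hu, rfl⟩ := mem_image.1 (mem_coe.1 hx)
    obtain ⟨v, hv, rfl⟩ := mem_image.1 (mem_coe.1 hy)
    rw [color_classRep φ, color_classRep φ] at e
    rw [classRep_of_mem hu, classRep_of_mem hv, e]
  rw [← card_image_of_injOn hinj]
  exact (card_le_univ _).trans_eq (Fintype.card_fin n)

lemma card_image_classRep_lt (φ : V → Fin n) (hR : R ⊆ U) (hn : n < #R) :
    #(U.image (classRep R φ)) < #U := by
  refine lt_of_le_of_ne card_image_le fun h => ?_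
  have := card_image_of_injOn ((card_image_iff.1 h).mono (coe_subset.2 hR))
  have := card_image_classRep_le R φ
  lia

lemma collapse_adj_of_notMem (ha : a ∉ R) :
    (collapse G R φ).Adj a b ↔ ∃ v, G.Adj a v ∧ classRep R φ v = b := by
  simp only [collapse, sup_adj, fromRel_adj, map_adj', ha, false_and, and_false, or_false]
  constructor
  · rintro ⟨-, u, v, huv, rfl, rfl⟩
    rw [classRep_mem_iff] at ha
    exact ⟨v, (classRep_of_notMem (φ := φ) ha).symm ▸ huv, rfl⟩
  · rintro ⟨v, hav, rfl⟩
    refine ⟨fun e => ?_, a, v, hav, classRep_of_notMem ha, rfl⟩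
    have hv : v ∉ R := by rwa [e, classRep_mem_iff] at ha
    exact hav.ne (e.trans (classRep_of_notMem hv))

lemma rho_collapse_of_disjoint (k : ℕ) (hA : Disjoint A R) :
    rho k (collapse G R φ) A = rho k G A := by
  refine rho_congr k fun u hu v hv => ?_
  have hvR := disjoint_left.1 hA hv
  rw [collapse_adj_of_notMem (disjoint_left.1 hA hu)]
  constructor
  · rintro ⟨w, huw, rfl⟩
    rw [classRep_mem_iff] at hvR
    rwa [classRep_of_notMem hvR]
  · exact fun huv => ⟨v, huv, classRep_of_notMem hvR⟩

lemma edgePairs_collapse_le (hA : Disjoint A R) (hT : T ⊆ R) :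
    edgePairs (collapse G R φ) A T ≤ edgePairs G A {u ∈ R | classRep R φ u ∈ T} := by
  rw [edgePairs_eq_sum_deg, edgePairs_eq_sum_deg]
  refine sum_le_sum fun a ha => Int.ofNat_le.2 ?_
  refine (card_le_card (t := (nbhd G _ a).image (classRep R φ)) fun t ht => ?_).trans
    card_image_le
  obtain ⟨htT, hat⟩ := mem_nbhd.1 ht
  obtain ⟨v, hav, rfl⟩ := (collapse_adj_of_notMem (disjoint_left.1 hA ha)).1 hat
  exact mem_image_of_mem _ (mem_nbhd.2
    ⟨mem_filter.2 ⟨classRep_mem_iff.1 (hT htT), htT⟩, hav⟩)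

lemma IsColoringOn.of_collapse {β : Type*} {ψ : V → β} (hφ : IsColoringOn G R φ)
    (hψ : IsColoringOn (collapse G R φ) (U.image (classRep R φ)) ψ) :
    IsColoringOn G U (ψ ∘ classRep R φ) := fun _ hu _ hv huv =>
  hψ _ (mem_image_of_mem _ hu) _ (mem_image_of_mem _ hv)
    (.inl (map_adj_apply' huv (classRep_ne_of_adj hφ huv)))

end Collapse

section LargeSubsets

variable {R S : Finset V} {i : ℕ} {E : Finset (V × V)}

lemma exists_potential_step (hk : 4 ≤ k) {r : ℤ} (hlt : (k : ℤ) * (k - 3) < r)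
    (hle : r ≤ 2 * ((k : ℤ) - 1) * (k - 2)) :
    ∃ i : ℕ, 2 * i ≤ k - 2 ∧ (k : ℤ) * (k - 3) + 2 * (k - 1) * i < r ∧
      r ≤ (k : ℤ) * (k - 3) + 2 * (k - 1) * (i + 1) := by
  have : (4 : ℤ) ≤ k := mod_cast hk
  have hpos : (0 : ℤ) < 2 * (k - 1) := by linarith
  set m := r - (k : ℤ) * (k - 3) - 1
  have hdiv := Int.mul_ediv_add_emod m (2 * (k - 1))
  have hmod₀ := Int.emod_nonneg m hpos.ne'
  have hmod := Int.emod_lt_of_pos m hpos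
  obtain ⟨i, hi⟩ := Int.eq_ofNat_of_zero_le (Int.ediv_nonneg (by linarith : 0 ≤ m) hpos.le)
  rw [hi] at hdiv
  refine ⟨i, ?_, by linarith, by linarith⟩
  by_contra! hc
  have : (k : ℤ) - 1 ≤ 2 * i := by lia
  nlinarith

namespace IsMinCounterexample

lemma exists_rho_le_of_isColoringOn [Nonempty V] (M : IsMinCounterexample k G U) (hR : R ⊆ U)
    (hcard : k ≤ #R) {φ : V → Fin (k - 1)} (hφ : IsColoringOn G R φ) :
    ∃ A ⊆ U \ R, ∃ T ⊆ R.image (classRep R φ), (A ∪ T).Nonempty ∧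
      rho k G A + rho k (collapse G R φ) T -
        2 * ((k : ℤ) - 1) * edgePairs G A {u ∈ R | classRep R φ u ∈ T} ≤
      (k : ℤ) * ((k : ℤ) - 3) := by
  have := M.four_le_cast
  obtain ⟨W, hWU, hWne, hW⟩ := M.exists_rho_le_of_card_lt
    (card_image_classRep_lt φ hR (by have := M.four_le; lia))
    fun ⟨ψ, hψ⟩ => M.not_colorableOn ⟨_, hφ.of_collapse hψ⟩
  have hdisj : Disjoint (W \ R) R := sdiff_disjoint
  refine ⟨W \ R, fun v hv => ?_, W ∩ R, fun v hv => ?_, by rwa [sdiff_union_inter], ?_⟩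
  · obtain ⟨u, hu, rfl⟩ := mem_image.1 (hWU (mem_sdiff.1 hv).1)
    have huR := mt classRep_mem_iff.2 (mem_sdiff.1 hv).2
    rw [classRep_of_notMem huR]
    exact mem_sdiff.2 ⟨hu, huR⟩
  · obtain ⟨u, -, rfl⟩ := mem_image.1 (hWU (mem_inter.1 hv).1)
    exact mem_image_of_mem _ (classRep_mem_iff.1 (mem_inter.1 hv).2)
  · rw [← sdiff_union_inter W R, rho_union k (hdisj.mono_right inter_subset_right),
      rho_collapse_of_disjoint k hdisj] at hW
    have := edgePairs_collapse_le (G := G) (φ := φ) hdisj (inter_subset_right (s₁ := W))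
    nlinarith

lemma exists_colorClass_rho_le [Nonempty V] (M : IsMinCounterexample k G U) (hR : R ⊆ U)
    (hcard : k ≤ #R) (hρ : rho k G R ≤ 2 * ((k : ℤ) - 1) * ((k : ℤ) - 2))
    {φ : V → Fin (k - 1)} (hφ : IsColoringOn G R φ) :
    ∃ A ⊆ U \ R, ∃ t ∈ R, rho k G A + ((k : ℤ) + 1) * ((k : ℤ) - 2) -
      2 * ((k : ℤ) - 1) * edgePairs G A {u ∈ R | φ u = φ t} ≤ (k : ℤ) * ((k : ℤ) - 3) := by
  have hk := M.four_le
  have := M.four_le_cast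
  obtain ⟨A, hA, T, hT, hne, hle⟩ := M.exists_rho_le_of_isColoringOn hR hcard hφ
  have hAU := hA.trans sdiff_subset
  have hTcard := (card_le_card hT).trans (card_image_classRep_le R φ)
  obtain hT₀ | hT₁ | hT₂ : #T = 0 ∨ #T = 1 ∨ 2 ≤ #T := by lia
  · obtain rfl := card_eq_zero.1 hT₀
    rw [union_empty] at hne
    simp only [notMem_empty, filter_false, rho_empty, edgePairs_comm G A, edgePairs_eq_sum_deg,
      sum_empty, add_zero, mul_zero, sub_zero] at hle
    exact absurd hle (M.lt_rho hAU hne).not_ge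
  · obtain ⟨t, rfl⟩ := card_eq_one.1 hT₁
    obtain ⟨s, hs, rfl⟩ := mem_image.1 (hT (mem_singleton_self t))
    refine ⟨A, hA, s, hs, ?_⟩
    have hsub : {u ∈ R | classRep R φ u ∈ ({classRep R φ s} : Finset V)} ⊆
        {u ∈ R | φ u = φ s} := monotone_filter_right R fun u _ hu => by
      rw [← color_classRep (R := R) φ u, mem_singleton.1 hu, color_classRep φ]
    rw [rho_singleton] at hle
    have := edgePairs_mono (G := G) (Subset.refl A) hsub
    nlinarith
  · have := two_mul_le_rho_of_card_lt (G := collapse G R φ) hk hT₂ (by lia)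
    have hsub := filter_subset (fun u => classRep R φ u ∈ T) R
    have := edgePairs_mono (G := G) (Subset.refl A) hsub
    have hne : R.Nonempty := card_pos.1 (by lia)
    have h := M.lt_rho (union_subset hAU hR) (hne.mono subset_union_right)
    rw [rho_union k (disjoint_sdiff.symm.mono_left hA)] at h
    nlinarith

lemma colorableOn_addEdges_of_rho_le (M : IsMinCounterexample k G U) (hR : R ⊂ U)
    (hmin : ∀ S ⊂ U, k ≤ #S → rho k G R ≤ rho k G S)
    (hρ : rho k G R ≤ 2 * ((k : ℤ) - 1) * ((k : ℤ) - 2))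
    (hlt : (k : ℤ) * (k - 3) + 2 * (k - 1) * i < rho k G R) (hE : #E ≤ i) :
    ColorableOn (addEdges G E) R (k - 1) := by
  have hk := M.four_le
  have := M.four_le_cast
  by_contra hc
  obtain ⟨W, hWR, hWne, hW⟩ := M.exists_rho_le_of_card_lt (card_lt_card hR) hc
  have hadd := rho_le_rho_addEdges (G := G) (by lia : 1 ≤ k) E W
  have : (#(E ∩ W ×ˢ W) : ℤ) ≤ i := mod_cast (card_le_card inter_subset_left).trans hE
  have hlow : rho k G W < rho k G R := by nlinarith
  have := card_pos.2 hWne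
  obtain h₁ | h₂ | h₃ : #W = 1 ∨ (2 ≤ #W ∧ #W < k) ∨ k ≤ #W := by lia
  · obtain ⟨v, rfl⟩ := card_eq_one.1 h₁
    rw [rho_singleton] at hW
    nlinarith
  · have := two_mul_le_rho_of_card_lt (G := G) hk h₂.1 h₂.2
    linarith
  · exact (hmin W (hWR.trans_ssubset hR) h₃).not_gt hlow

/-- The hedge `E` leaves a color class `N` of `R` either few of the edges between `R` and `U \ R`,
and then `U` has low potential, or only edges ending in a single vertex `u`, and then `insert u A`
has low potential. -/
lemma not_rho_le_of_forall_ssubset_le [Nonempty V] (M : IsMinCounterexample k G U) (hR : R ⊂ U)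
    (hcard : k ≤ #R) (hmin : ∀ S ⊂ U, k ≤ #S → rho k G R ≤ rho k G S) :
    ¬ rho k G R ≤ 2 * ((k : ℤ) - 1) * ((k : ℤ) - 2) := by
  intro hρ
  have hk := M.four_le
  have := M.four_le_cast
  have hRne : R.Nonempty := card_pos.1 (by lia)
  obtain ⟨i, hi, hlt, hle⟩ := exists_potential_step hk (M.lt_rho hR.subset hRne) hρ
  have hsum (S : Finset V) : edgePairs G (U \ R) S = (∑ u ∈ S, deg G (U \ R) u : ℕ) := by
    rw [edgePairs_comm, edgePairs_eq_sum_deg, Nat.cast_sum]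
  have hcut := M.sub_one_le_edgePairs_sdiff hR hRne
  rw [edgePairs_comm, hsum] at hcut
  obtain ⟨E, hER, hE, hedge⟩ := exists_hedge (R := R) (w := deg G (U \ R)) (i := i) (by lia)
  obtain ⟨φ, hφ⟩ := M.colorableOn_addEdges_of_rho_le hR hmin hρ hlt hE
  obtain ⟨A, hA, t, htR, hAt⟩ :=
    M.exists_colorClass_rho_le hR.subset hcard hρ hφ.of_addEdges
  set N := {u ∈ R | φ u = φ t} with hN
  have hNR : N ⊆ R := filter_subset _ _
  have hdisj : Disjoint A R := disjoint_sdiff.symm.mono_left hA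
  have hARU : A ∪ R ⊆ U := union_subset (hA.trans sdiff_subset) hR.subset
  have hunion := rho_union (G := G) k hdisj
  rw [edgePairs_add_sdiff_right hNR A] at hunion
  obtain rfl : A = U \ R := by
    by_contra hne
    have hne' : A ∪ R ≠ U := fun e => hne (by rw [← e, union_sdiff_cancel_right hdisj])
    have := hmin (A ∪ R) (hARU.ssubset_of_ne hne')
      (hcard.trans (card_le_card subset_union_right))
    have := edgePairs_nonneg G A (R \ N)
    nlinarith
  rcases hedge N hNR (disjoint_left.2 fun p hp hpN => hφ.ne_of_mem hER hp (by grind)) with h | h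
  · have := M.lt_rho hARU (hRne.mono subset_union_right)
    have : (i : ℤ) ≤ edgePairs G (U \ R) (R \ N) := by rw [hsum]; exact_mod_cast h
    nlinarith
  · obtain ⟨u, huN, hu⟩ := exists_forall_ne_eq_zero ⟨t, by simp [hN, htR]⟩ h
    rw [hsum, sum_eq_single_of_mem u huN hu] at hAt
    have huA : u ∉ U \ R := disjoint_right.1 hdisj (hNR huN)
    have := M.lt_rho (insert_subset (hR.subset (hNR huN)) sdiff_subset) (insert_nonempty u (U \ R))
    rw [rho_insert k huA] at this
    linarith

theorem lt_rho_of_ssubset (M : IsMinCounterexample k G U) (hR : R ⊂ U) (hcard : k ≤ #R) :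
    2 * ((k : ℤ) - 1) * ((k : ℤ) - 2) < rho k G R := by
  obtain ⟨S, hS, hmin⟩ := exists_min_image {S ∈ U.powerset | S ⊂ U ∧ k ≤ #S} (rho k G)
    ⟨R, by simp [hR, hR.subset, hcard]⟩
  simp only [mem_filter, mem_powerset, and_imp] at hS hmin
  obtain ⟨v, -⟩ := card_pos.1 (by have := M.four_le; lia : 0 < #R)
  have : Nonempty V := ⟨v⟩
  by_contra! h
  exact M.not_rho_le_of_forall_ssubset_le hS.2.1 hS.2.2
    (fun T hT => hmin T hT.subset hT) ((hmin R hR.subset hR hcard).trans h)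

lemma isNClique_of_rho_le (M : IsMinCounterexample k G U) (hR : R ⊂ U) (h₂ : 2 ≤ #R)
    (hρ : rho k G R ≤ 2 * ((k : ℤ) - 1) * ((k : ℤ) - 2)) : G.IsNClique (k - 1) R := by
  rcases lt_or_ge #R k with hlt | hge
  · exact KostochkaYancey.isNClique_of_rho_le M.four_le h₂ hlt hρ
  · exact absurd (M.lt_rho_of_ssubset hR hge) hρ.not_gt

lemma exists_rho_le_of_not_colorableOn_addEdges (M : IsMinCounterexample k G U) (hR : R ⊂ U)
    (hc : ¬ ColorableOn (addEdges G E) R (k - 1)) : ∃ W ⊆ R, W.Nonempty ∧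
      rho k G W ≤ (k : ℤ) * (k - 3) + 2 * (k - 1) * #(E ∩ W ×ˢ W) ∧
      (#W ≠ 1 → k - 1 ≤ 2 * #(E ∩ W ×ˢ W)) := by
  have hk := M.four_le
  have := M.four_le_cast
  obtain ⟨W, hWR, hne, hW⟩ := M.exists_rho_le_of_card_lt (card_lt_card hR) hc
  have hadd := rho_le_rho_addEdges (G := G) (by lia : 1 ≤ k) E W
  refine ⟨W, hWR, hne, by linarith, fun h₁ => ?_⟩
  by_contra! hlt
  have h₂ : 2 ≤ #W := by have := card_pos.2 hne; lia
  have : 2 * (#(E ∩ W ×ˢ W) : ℤ) ≤ k - 2 := by lia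
  have hρ : rho k G W < 2 * ((k : ℤ) - 1) * ((k : ℤ) - 2) := by nlinarith
  have hclique := M.isNClique_of_rho_le (hWR.trans_ssubset hR) h₂ hρ.le
  exact hρ.ne (rho_of_isNClique (by lia) hclique)

end IsMinCounterexample

end LargeSubsets

section Hall

variable {α β : Type*} [Nonempty β] {S : Finset α}

lemma exists_injOn_mapsTo {T : Finset β} (h : #S ≤ #T) :
    ∃ f : α → β, Set.InjOn f S ∧ ∀ x ∈ S, f x ∈ T := by
  obtain ⟨f, hf, hinj⟩ := S.finite_toSet.exists_injOn_of_encard_le (t := (T : Set β))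
    (by simpa only [Set.encard_coe_eq_coe_finsetCard, Nat.cast_le] using h)
  exact ⟨f, hinj, hf⟩

lemma exists_injOn_mem_of_card_le_biUnion [DecidableEq β] (t : α → Finset β)
    (h : ∀ s ⊆ S, #s ≤ #(s.biUnion t)) : ∃ f : α → β, Set.InjOn f S ∧ ∀ x ∈ S, f x ∈ t x := by
  obtain ⟨f, hf, hft⟩ := (all_card_le_biUnion_card_iff_exists_injective
    (fun x : S => t x)).1 fun s => by
      have := h (s.image Subtype.val) fun _ hx => by
        obtain ⟨y, -, rfl⟩ := mem_image.1 hx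
        exact y.2
      rwa [card_image_of_injective _ Subtype.val_injective, image_biUnion] at this
  refine ⟨fun x => if hx : x ∈ S then f ⟨x, hx⟩ else Classical.arbitrary β, ?_, ?_⟩
  · intro x hx y hy e
    rw [mem_coe] at hx hy
    simp only [hx, hy, dif_pos] at e
    exact congrArg Subtype.val (hf e)
  · intro x hx
    simpa only [hx, dif_pos] using hft ⟨x, hx⟩

end Hall

section TwoCliques

variable {K₁ K₂ : Finset V} {n : ℕ}

/-- Hall's condition for the bipartite graph of non-adjacencies between two cliques fails only
if the cliques span a larger clique. -/
lemma exists_injOn_not_adj [Nonempty V] (h₁ : G.IsClique (K₁ : Set V))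
    (h₂ : G.IsClique (K₂ : Set V))
    (hmax : ∀ S ⊆ K₁ ∪ K₂, G.IsClique (S : Set V) → #S ≤ #K₁) :
    ∃ f : V → V, Set.InjOn f (K₂ \ K₁ : Finset V) ∧
      ∀ u ∈ K₂ \ K₁, f u ∈ K₁ ∧ ¬ G.Adj u (f u) := by
  have hHall : ∀ T ⊆ K₂ \ K₁, #T ≤ #(T.biUnion fun u => {v ∈ K₁ | ¬ G.Adj u v}) := by
    intro T hT
    set B := T.biUnion fun u => {v ∈ K₁ | ¬ G.Adj u v}
    have hBK : B ⊆ K₁ := biUnion_subset.2 fun u _ => filter_subset _ _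
    have hTK₂ : T ⊆ K₂ := hT.trans sdiff_subset
    have hcross : ∀ u ∈ T, ∀ v ∈ K₁ \ B, G.Adj u v := fun u hu v hv => by
      obtain ⟨hv₁, hvB⟩ := mem_sdiff.1 hv
      by_contra hn
      exact hvB (mem_biUnion.2 ⟨u, hu, mem_filter.2 ⟨hv₁, hn⟩⟩)
    have hclique : G.IsClique (T ∪ K₁ \ B : Finset V) := by
      intro u hu v hv huv
      rcases mem_union.1 (mem_coe.1 hu) with hu | hu <;>
        rcases mem_union.1 (mem_coe.1 hv) with hv | hv
      · exact h₂ (hTK₂ hu) (hTK₂ hv) huv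
      · exact hcross u hu v hv
      · exact (hcross v hv u hu).symm
      · exact h₁ (mem_sdiff.1 hu).1 (mem_sdiff.1 hv).1 huv
    have hdisj : Disjoint T (K₁ \ B) :=
      (disjoint_sdiff.mono_left sdiff_subset).symm.mono_left hT
    have hle := hmax _ (union_subset (hTK₂.trans subset_union_right)
      (sdiff_subset.trans subset_union_left)) hclique
    rw [card_union_of_disjoint hdisj, card_sdiff_of_subset hBK] at hle
    have := card_le_card hBK
    lia
  obtain ⟨f, hf, hfmem⟩ := exists_injOn_mem_of_card_le_biUnion _ hHall
  exact ⟨f, hf, fun u hu => mem_filter.1 (hfmem u hu)⟩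

lemma colorableOn_union_of_isClique [NeZero n] (h₁ : G.IsNClique n K₁)
    (h₂ : G.IsClique (K₂ : Set V))
    (hmax : ∀ S ⊆ K₁ ∪ K₂, G.IsClique (S : Set V) → #S ≤ n) :
    ColorableOn G (K₁ ∪ K₂) n := by
  obtain ⟨v, -⟩ := card_pos.1 (h₁.card_eq ▸ Nat.pos_of_ne_zero (NeZero.ne n))
  have : Nonempty V := ⟨v⟩
  obtain ⟨f, hf, hfmem⟩ := exists_injOn_not_adj h₁.isClique h₂ (h₁.card_eq.symm ▸ hmax)
  obtain ⟨c, hc, -⟩ := exists_injOn_mapsTo (S := K₁) (T := (univ : Finset (Fin n)))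
    (by rw [h₁.card_eq, card_fin])
  refine ⟨_, IsColoringOn.piecewise (R := K₁) (c := c) (d := c ∘ f) ?_ ?_ ?_⟩
  · exact fun u hu v hv huv e => huv.ne (hc hu hv e)
  · rw [union_sdiff_left]
    exact fun u hu v hv huv e =>
      huv.ne (hf hu hv (hc (hfmem u hu).1 (hfmem v hv).1 e))
  · rw [union_sdiff_left]
    exact fun u hu v hv huv e => (hfmem v hv).2 (hc hu (hfmem v hv).1 e ▸ huv.symm)

namespace IsMinCounterexample

lemma card_le_of_isClique (M : IsMinCounterexample k G U) {S : Finset V} (hS : S ⊆ U)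
    (hc : G.IsClique (S : Set V)) : #S ≤ k - 1 := by
  by_contra! hlt
  have := M.four_le
  obtain ⟨T, hTS, hT⟩ := exists_subset_card_eq (by lia : k ≤ #S)
  have hρ := M.lt_rho (hTS.trans hS) (card_pos.1 (by lia))
  rw [rho_of_isClique k (hc.subset (coe_subset.2 hTS)), hT] at hρ
  linarith

lemma eq_of_two_le_card_inter (M : IsMinCounterexample k G U) {K₁ K₂ : Finset V} (h₁ : K₁ ⊆ U)
    (h₂ : K₂ ⊆ U) (hK₁ : G.IsNClique (k - 1) K₁) (hK₂ : G.IsNClique (k - 1) K₂)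
    (hinter : 2 ≤ #(K₁ ∩ K₂)) : K₁ = K₂ := by
  by_contra hne
  have hk := M.four_le
  have hsub := rho_union_add_rho_inter_le (by lia : 1 ≤ k) G K₁ K₂
  have hlt : #(K₁ ∩ K₂) < k := by
    have := card_le_card (inter_subset_left (s₁ := K₁) (s₂ := K₂))
    have := hK₁.card_eq
    lia
  have := two_mul_le_rho_of_card_lt (G := G) hk hinter hlt
  rw [rho_of_isNClique (by lia) hK₁, rho_of_isNClique (by lia) hK₂] at hsub
  have hcard : k ≤ #(K₁ ∪ K₂) := by
    by_contra! hlt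
    have heq {K : Finset V} (hK : #K = k - 1) (hKu : K ⊆ K₁ ∪ K₂) : K = K₁ ∪ K₂ :=
      eq_of_subset_of_card_le hKu (by lia)
    exact hne ((heq hK₁.card_eq subset_union_left).trans
      (heq hK₂.card_eq subset_union_right).symm)
  have hU : K₁ ∪ K₂ = U := by
    by_contra hn
    have := M.lt_rho_of_ssubset ((union_subset h₁ h₂).ssubset_of_ne hn) hcard
    linarith
  have : NeZero (k - 1) := ⟨by lia⟩
  refine M.not_colorableOn (hU ▸ colorableOn_union_of_isClique hK₁ hK₂.isClique fun S hS => ?_)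
  exact M.card_le_of_isClique (hS.trans hU.subset)

end IsMinCounterexample

end TwoCliques

section Clusters

variable {u v x : V}

lemma mem_cluster : u ∈ cluster G U v ↔ u ∈ U ∧ closedNbhd G U u = closedNbhd G U v := mem_filter

lemma self_mem_cluster (hv : v ∈ U) : v ∈ cluster G U v := mem_cluster.2 ⟨hv, rfl⟩

lemma mem_cluster_comm (hu : u ∈ U) (hv : v ∈ U) : u ∈ cluster G U v ↔ v ∈ cluster G U u := by
  simp only [mem_cluster, hu, hv, true_and, eq_comm]

lemma cluster_subset_closedNbhd : cluster G U v ⊆ closedNbhd G U v := fun u hu => by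
  rw [← (mem_cluster.1 hu).2]
  exact self_mem_closedNbhd

lemma adj_of_mem_cluster (hu : u ∈ cluster G U v) (hx : x ∈ closedNbhd G U v) (hne : x ≠ u) :
    G.Adj u x := by
  rw [← (mem_cluster.1 hu).2] at hx
  exact ((mem_closedNbhd.1 hx).resolve_left hne).2

lemma twinCount_add_one (hv : v ∈ U) : twinCount G U + 1 =
    ∑ a ∈ U.erase v, #((cluster G U a).erase v) + 2 * #(cluster G U v) := by
  have hcard : ∀ a ∈ U.erase v, #(cluster G U a) =
      #((cluster G U a).erase v) + if a ∈ cluster G U v then 1 else 0 := fun a ha => by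
    split_ifs with h <;> rw [mem_cluster_comm (mem_of_mem_erase ha) hv] at h
    · rw [card_erase_add_one h]
    · rw [erase_eq_of_notMem h, add_zero]
  have hfilter : {a ∈ U.erase v | a ∈ cluster G U v} = (cluster G U v).erase v := by
    ext a
    simp only [mem_filter, mem_erase, mem_cluster]
    tauto
  rw [twinCount, ← sum_erase_add _ _ hv, sum_congr rfl hcard, sum_add_distrib, ← card_filter,
    hfilter]
  have := card_erase_add_one (self_mem_cluster (G := G) hv)
  lia

end Clusters

section Rewiring

variable {x v a b : V} {D : Finset V} {n : ℕ}

/-- The graph obtained from `G` by replacing the neighborhood of `v` by `D`. -/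
def rewire (G : SimpleGraph V) (v : V) (D : Finset V) : SimpleGraph V :=
  SimpleGraph.fromRel fun a b => (a ≠ v ∧ b ≠ v ∧ G.Adj a b) ∨ (a = v ∧ b ∈ D)

lemma rewire_adj_of_ne (ha : a ≠ v) (hb : b ≠ v) : (rewire G v D).Adj a b ↔ G.Adj a b := by
  simp only [rewire, fromRel_adj, ha, hb, G.adj_comm b a, false_and, or_false, or_self, ne_eq,
    not_false_eq_true, true_and, and_iff_right_iff_imp]
  exact fun h => h.ne

lemma rewire_adj_self (hv : v ∉ D) : (rewire G v D).Adj v b ↔ b ∈ D := by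
  simp only [rewire, fromRel_adj, ne_eq, not_true_eq_false, false_and, and_false, true_and,
    false_or, hv, or_false, and_iff_right_iff_imp]
  rintro hb rfl
  exact hv hb

lemma rho_rewire_of_notMem (k : ℕ) {S : Finset V} (hv : v ∉ S) :
    rho k (rewire G v D) S = rho k G S :=
  rho_congr k fun _ ha _ hb =>
    rewire_adj_of_ne (ne_of_mem_of_not_mem ha hv) (ne_of_mem_of_not_mem hb hv)

lemma nbhd_rewire_self (hv : v ∉ D) (S : Finset V) : nbhd (rewire G v D) S v = D ∩ S := by
  ext b
  rw [mem_nbhd, rewire_adj_self hv, mem_inter, and_comm]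

/-- The graph obtained from `G` by making `v` a twin of its neighbor `x` in `G[U]`. -/
noncomputable def makeTwin (G : SimpleGraph V) (U : Finset V) (x v : V) : SimpleGraph V :=
  rewire G v ((closedNbhd G U x).erase v)

lemma makeTwin_adj_of_ne (ha : a ≠ v) (hb : b ≠ v) : (makeTwin G U x v).Adj a b ↔ G.Adj a b :=
  rewire_adj_of_ne ha hb

lemma makeTwin_adj_self : (makeTwin G U x v).Adj v b ↔ b ≠ v ∧ b ∈ closedNbhd G U x := by
  rw [makeTwin, rewire_adj_self (notMem_erase _ _), mem_erase]

lemma cluster_subset_nbhd (hv : v ∈ nbhd G U x) (hvC : v ∉ cluster G U x) :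
    cluster G U x ⊆ nbhd G U v := fun _ ha => mem_nbhd.2 ⟨(mem_cluster.1 ha).1,
  (adj_of_mem_cluster ha (nbhd_subset_closedNbhd hv) fun e => hvC (e ▸ ha)).symm⟩

/-- Some color `a` is missing from the neighbors of `v` outside the cluster of `x`. Recolor `v`
with `a`, and the vertices of the cluster that have color `a` with the old color of `v`. -/
lemma ColorableOn.of_makeTwin (hx : x ∈ U) (hv : v ∈ nbhd G U x) (hvC : v ∉ cluster G U x)
    (hdeg : deg G U v < n + #(cluster G U x)) (h : ColorableOn (makeTwin G U x v) U n) :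
    ColorableOn G U n := by
  obtain ⟨ψ, hψ⟩ := h
  set C := cluster G U x
  have hvU := (mem_nbhd.1 hv).1
  have hCN : C ⊆ nbhd G U v := cluster_subset_nbhd hv hvC
  obtain ⟨a, ha⟩ := exists_forall_ne_of_card_lt (S := nbhd G U v \ C) ψ (by
    have : deg G U v = #(nbhd G U v) := rfl
    have := card_le_card hCN
    have := card_pos.2 ⟨x, self_mem_cluster (G := G) hx⟩
    rw [card_sdiff_of_subset hCN]
    lia)
  have hvψ : ∀ w ∈ U, w ≠ v → w ∈ closedNbhd G U x → ψ v ≠ ψ w := fun w hw hwv hwx =>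
    hψ v hvU w hw (makeTwin_adj_self.2 ⟨hwv, hwx⟩)
  have hψ' : IsColoringOn G (U.erase v) ψ := fun u hu w hw huw =>
    hψ u (mem_of_mem_erase hu) w (mem_of_mem_erase hw)
      ((makeTwin_adj_of_ne (ne_of_mem_erase hu) (ne_of_mem_erase hw)).2 huw)
  set S := {u ∈ C | ψ u = a}
  have hswap : IsColoringOn G (U.erase v) (S.piecewise (fun _ => ψ v) ψ) := by
    refine IsColoringOn.piecewise ?_ (hψ'.mono sdiff_subset) fun u hu w hw huw => ?_
    · intro u hu w hw huw
      have hmem : ∀ c ∈ C, c ∈ U.erase v := fun c hc =>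
        mem_erase.2 ⟨fun e => hvC (e ▸ hc), (mem_cluster.1 hc).1⟩
      have hu' := mem_filter.1 hu
      have hw' := mem_filter.1 hw
      exact (hψ' u (hmem u hu'.1) w (hmem w hw'.1) huw (hu'.2.trans hw'.2.symm)).elim
    · obtain ⟨hwv, hwU⟩ := mem_erase.1 (mem_sdiff.1 hw).1
      refine hvψ w hwU hwv ?_
      rw [← (mem_cluster.1 (mem_filter.1 hu).1).2]
      exact mem_closedNbhd.2 (.inr ⟨hwU, huw⟩)
  refine ⟨_, hswap.update (a := a) fun w hw => ?_⟩
  obtain ⟨hwU, hvw⟩ := mem_nbhd.1 hw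
  by_cases hwS : w ∈ S
  · rw [piecewise_eq_of_mem _ _ _ hwS, ← (mem_filter.1 hwS).2]
    exact hvψ w hwU hvw.ne' (cluster_subset_closedNbhd (mem_filter.1 hwS).1)
  · rw [piecewise_eq_of_notMem _ _ _ hwS]
    by_cases hwC : w ∈ C
    · exact fun e => hwS (mem_filter.2 ⟨hwC, e⟩)
    · exact ha w (mem_sdiff.2 ⟨hw, hwC⟩)

lemma mem_closedNbhd_makeTwin (hx : x ∈ U) (hv : v ∈ U) (ha : a ∈ U) (hav : a ≠ v) :
    b ∈ closedNbhd (makeTwin G U x v) U a ↔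
      b ≠ v ∧ b ∈ closedNbhd G U a ∨ b = v ∧ x ∈ closedNbhd G U a := by
  by_cases hb : b = v
  · subst hb
    rw [mem_closedNbhd, adj_comm, makeTwin_adj_self, mem_closedNbhd, mem_closedNbhd,
      mem_closedNbhd, G.adj_comm a x]
    have := hav.symm
    tauto
  · rw [mem_closedNbhd, makeTwin_adj_of_ne hav hb, mem_closedNbhd]
    tauto

lemma closedNbhd_makeTwin_self (hx : x ∈ U) (hv : v ∈ nbhd G U x) :
    closedNbhd (makeTwin G U x v) U v = closedNbhd G U x := by
  ext b
  rw [mem_closedNbhd, makeTwin_adj_self]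
  by_cases hb : b = v
  · simp only [hb, true_or, nbhd_subset_closedNbhd hv]
  · simp only [hb, false_or, ne_eq, not_false_eq_true, true_and, and_iff_right_iff_imp]
    exact fun h => closedNbhd_subset hx h

lemma edgePairs_makeTwin (hx : x ∈ U) (hv : v ∈ nbhd G U x) :
    edgePairs (makeTwin G U x v) U U + 2 * deg G U v = edgePairs G U U + 2 * deg G U x := by
  have hvU := (mem_nbhd.1 hv).1
  have herase : edgePairs (makeTwin G U x v) (U.erase v) (U.erase v) =
      edgePairs G (U.erase v) (U.erase v) :=
    edgePairs_congr fun a ha b hb => makeTwin_adj_of_ne (ne_of_mem_erase ha) (ne_of_mem_erase hb)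
  have hdeg : deg (makeTwin G U x v) U v = deg G U x := by
    have := congrArg card (closedNbhd_makeTwin_self hx hv)
    rw [card_closedNbhd, card_closedNbhd] at this
    lia
  rw [edgePairs_self_eq_erase hvU, edgePairs_self_eq_erase (G := G) hvU, herase, hdeg]
  ring

lemma card_cluster_lt_card_cluster_makeTwin (hx : x ∈ U) (hv : v ∈ nbhd G U x)
    (hvC : v ∉ cluster G U x) : #(cluster G U x) < #(cluster (makeTwin G U x v) U v) := by
  have hvU := (mem_nbhd.1 hv).1
  have hsub : insert v (cluster G U x) ⊆ cluster (makeTwin G U x v) U v := by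
    refine insert_subset (self_mem_cluster hvU) fun c hc => ?_
    obtain ⟨hcU, hcx⟩ := mem_cluster.1 hc
    refine mem_cluster.2 ⟨hcU, ?_⟩
    ext b
    rw [closedNbhd_makeTwin_self hx hv,
      mem_closedNbhd_makeTwin hx hvU hcU (fun e => hvC (e ▸ hc)), hcx]
    by_cases hb : b = v
    · simp only [hb, ne_eq, not_true_eq_false, false_and, false_or, true_and,
        nbhd_subset_closedNbhd hv, self_mem_closedNbhd]
    · simp only [hb, ne_eq, not_false_eq_true, true_and, false_and, or_false]
  rw [Nat.lt_iff_add_one_le, ← card_insert_of_notMem hvC]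
  exact card_le_card hsub

lemma twinCount_lt_twinCount_makeTwin (hx : x ∈ U) (hv : v ∈ nbhd G U x)
    (hvC : v ∉ cluster G U x) (hle : #(cluster G U v) ≤ #(cluster G U x)) :
    twinCount G U < twinCount (makeTwin G U x v) U := by
  have hvU := (mem_nbhd.1 hv).1
  have hrest : ∑ a ∈ U.erase v, #((cluster G U a).erase v) ≤
      ∑ a ∈ U.erase v, #((cluster (makeTwin G U x v) U a).erase v) := by
    refine sum_le_sum fun a ha => card_le_card fun b hb => ?_
    obtain ⟨hav, haU⟩ := mem_erase.1 ha
    obtain ⟨hbv, hb⟩ := mem_erase.1 hb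
    obtain ⟨hbU, hba⟩ := mem_cluster.1 hb
    refine mem_erase.2 ⟨hbv, mem_cluster.2 ⟨hbU, ?_⟩⟩
    ext c
    rw [mem_closedNbhd_makeTwin hx hvU haU hav, mem_closedNbhd_makeTwin hx hvU hbU hbv, hba]
  have := card_cluster_lt_card_cluster_makeTwin hx hv hvC
  have := twinCount_add_one (G := G) hvU
  have := twinCount_add_one (G := makeTwin G U x v) hvU
  lia

lemma IsMinCounterexample.mem_of_rho_makeTwin_le (M : IsMinCounterexample k G U) (hx : x ∈ U)
    {R : Finset V} (hRU : R ⊆ U) (hvR : v ∉ R)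
    (hρ : rho k (makeTwin G U x v) (insert v R) ≤ (k : ℤ) * ((k : ℤ) - 3)) : x ∈ R := by
  by_contra hxR
  refine (M.lt_rho (insert_subset hx hRU) (insert_nonempty x R)).not_ge ?_
  have hnbhd : nbhd (makeTwin G U x v) R v = nbhd G R x := by
    ext b
    rw [mem_nbhd, mem_nbhd, makeTwin_adj_self, mem_closedNbhd]
    refine and_congr_right fun hb => ?_
    have hbv : b ≠ v := ne_of_mem_of_not_mem hb hvR
    have hbx : b ≠ x := ne_of_mem_of_not_mem hb hxR
    simp only [hbv, hbx, hRU hb, ne_eq, not_false_eq_true, true_and, false_or]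
  rw [rho_insert k hvR, makeTwin, rho_rewire_of_notMem k hvR, ← makeTwin, deg, hnbhd] at hρ
  rwa [rho_insert k hxR, deg]

lemma IsMinCounterexample.colorableOn_makeTwin (M : IsMinCounterexample k G U) (hx : x ∈ U)
    (hdx : deg G U x = k - 1) (hv : v ∈ nbhd G U x) (hvC : v ∉ cluster G U x)
    (hle : deg G U v = k - 1 → #(cluster G U v) ≤ #(cluster G U x))
    (hρ : HighPotential k (makeTwin G U x v) U) :
    ColorableOn (makeTwin G U x v) U (k - 1) := by
  have hedges := edgePairs_makeTwin hx hv
  rcases (M.le_deg (mem_nbhd.1 hv).1).eq_or_lt with hdv | hdv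
  · exact M.colorableOn_of_twinCount_lt _ (by lia)
      (twinCount_lt_twinCount_makeTwin hx hv hvC (hle hdv.symm)) hρ
  · exact M.colorableOn_of_edgePairs_lt _ (by lia) hρ

lemma IsMinCounterexample.exists_rho_le_of_makeTwin (M : IsMinCounterexample k G U) (hx : x ∈ U)
    (hdx : deg G U x = k - 1) (hv : v ∈ nbhd G U x) (hvC : v ∉ cluster G U x)
    (hdv : deg G U v < k - 1 + #(cluster G U x))
    (hle : deg G U v = k - 1 → #(cluster G U v) ≤ #(cluster G U x)) :
    ∃ R ⊂ U, v ∉ R ∧ x ∈ R ∧ rho k G R ≤ (k : ℤ) * ((k : ℤ) - 3)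
      - ((k : ℤ) + 1) * ((k : ℤ) - 2) + 2 * ((k : ℤ) - 1) * deg (makeTwin G U x v) R v := by
  obtain ⟨W, hWU, hWne, hρW⟩ := not_highPotential_iff.1 fun hρ =>
    M.not_colorableOn ((M.colorableOn_makeTwin hx hdx hv hvC hle hρ).of_makeTwin hx hv hvC hdv)
  have hvW : v ∈ W := by
    by_contra hvW
    rw [makeTwin, rho_rewire_of_notMem k hvW] at hρW
    exact (M.lt_rho hWU hWne).not_ge hρW
  have hvR : v ∉ W.erase v := notMem_erase v W
  have hRU : W.erase v ⊂ U :=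
    (ssubset_iff_of_subset ((erase_subset _ _).trans hWU)).2 ⟨v, (mem_nbhd.1 hv).1, hvR⟩
  rw [← insert_erase hvW] at hρW
  refine ⟨W.erase v, hRU, hvR, M.mem_of_rho_makeTwin_le hx hRU.subset hvR hρW, ?_⟩
  rw [rho_insert k hvR, makeTwin, rho_rewire_of_notMem k hvR, ← makeTwin] at hρW
  linarith

lemma IsMinCounterexample.isNClique_closedNbhd_erase (M : IsMinCounterexample k G U) (hx : x ∈ U)
    (hdx : deg G U x = k - 1) (hv : v ∈ nbhd G U x) (hvC : v ∉ cluster G U x)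
    (hdv : deg G U v < k - 1 + #(cluster G U x))
    (hle : deg G U v = k - 1 → #(cluster G U v) ≤ #(cluster G U x)) :
    G.IsNClique (k - 1) ((closedNbhd G U x).erase v) := by
  have hk := M.four_le
  have := M.four_le_cast
  obtain ⟨R, hRU, hvR, hxR, hρR⟩ := M.exists_rho_le_of_makeTwin hx hdx hv hvC hdv hle
  set N := nbhd (makeTwin G U x v) R v with hN
  rw [deg, ← hN] at hρR
  have hcardD : #((closedNbhd G U x).erase v) = k - 1 := by
    rw [card_closedNbhd_erase (nbhd_subset_closedNbhd hv), hdx]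
  have hND : N ⊆ (closedNbhd G U x).erase v := fun b hb =>
    mem_erase.2 (makeTwin_adj_self.1 (mem_nbhd.1 hb).2)
  have hNcard : (#N : ℤ) ≤ k - 1 := by
    have := card_le_card hND
    lia
  have hR2 : 2 ≤ #R := by
    by_contra! hlt
    obtain ⟨y, hy⟩ := card_eq_one.1 (by have := card_pos.2 ⟨x, hxR⟩; lia : #R = 1)
    have : (#N : ℤ) ≤ 1 := by
      have := card_le_card (nbhd_subset (G := makeTwin G U x v) (U := R) v)
      lia
    rw [hy, rho_singleton] at hρR
    nlinarith
  have hclique := M.isNClique_of_rho_le hRU hR2 (by nlinarith)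
  have hRD : R ⊆ (closedNbhd G U x).erase v := fun b hb => mem_erase.2
    ⟨ne_of_mem_of_not_mem hb hvR, mem_closedNbhd.2 <| or_iff_not_imp_left.2 fun hbx =>
      ⟨hRU.subset hb, hclique.isClique hxR hb (Ne.symm hbx)⟩⟩
  rwa [← eq_of_subset_of_card_le hRD (by rw [hcardD, hclique.card_eq])]

end Rewiring

section SmallDegree

variable {u v x z w a b : V} {K C W : Finset V} {n : ℕ}

lemma isClique_closedNbhd_erase_of_sdiff_subset (h : closedNbhd G U x \ cluster G U x ⊆ {a, b}) :
    G.IsClique ((closedNbhd G U x).erase a : Set V) := by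
  intro u hu w hw huw
  obtain ⟨hua, hux⟩ := mem_erase.1 (mem_coe.1 hu)
  obtain ⟨hwa, hwx⟩ := mem_erase.1 (mem_coe.1 hw)
  by_cases huC : u ∈ cluster G U x
  · exact adj_of_mem_cluster huC hwx huw.symm
  by_cases hwC : w ∈ cluster G U x
  · exact (adj_of_mem_cluster hwC hux huw).symm
  have hu := h (mem_sdiff.2 ⟨hux, huC⟩)
  have hw := h (mem_sdiff.2 ⟨hwx, hwC⟩)
  simp only [mem_insert, mem_singleton, hua, hwa, false_or] at hu hw
  exact absurd (hu.trans hw.symm) huw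

lemma IsMinCounterexample.eq_of_isNClique_closedNbhd_erase (M : IsMinCounterexample k G U)
    (hx : x ∈ U) (hb : b ∈ nbhd G U x)
    (hca : G.IsNClique (k - 1) ((closedNbhd G U x).erase a))
    (hcb : G.IsNClique (k - 1) ((closedNbhd G U x).erase b)) : a = b := by
  by_contra hne
  have := M.four_le
  have hb' : b ∈ (closedNbhd G U x).erase a :=
    mem_erase.2 ⟨Ne.symm hne, nbhd_subset_closedNbhd hb⟩
  have hsub : ((closedNbhd G U x).erase a).erase b ⊆
      (closedNbhd G U x).erase a ∩ (closedNbhd G U x).erase b :=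
    subset_inter (erase_subset _ _) (erase_subset_erase _ (erase_subset _ _))
  have hinter := card_le_card hsub
  rw [card_erase_of_mem hb', hca.card_eq] at hinter
  have hxU := closedNbhd_subset (G := G) hx
  rw [M.eq_of_two_le_card_inter ((erase_subset _ _).trans hxU) ((erase_subset _ _).trans hxU)
    hca hcb (by lia)] at hb'
  exact notMem_erase b _ hb'

lemma IsMinCounterexample.card_cluster_le (M : IsMinCounterexample k G U) (hx : x ∈ U)
    (hdx : deg G U x = k - 1) :
    #(cluster G U x) ≤ k - 3 := by
  have hk := M.four_le
  by_contra! hlt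
  have hsub : closedNbhd G U x \ cluster G U x ⊆ nbhd G U x := fun w hw => by
    obtain ⟨hw, hwC⟩ := mem_sdiff.1 hw
    rcases mem_closedNbhd.1 hw with rfl | h
    · exact absurd (self_mem_cluster hx) hwC
    · exact mem_nbhd.2 h
  have hcard : #(closedNbhd G U x \ cluster G U x) ≤ 2 := by
    rw [card_sdiff_of_subset cluster_subset_closedNbhd, card_closedNbhd, hdx]
    lia
  obtain ⟨P, hP, hPx, hP₂⟩ := exists_subsuperset_card_eq hsub hcard
    (by rw [← deg, hdx]; lia)
  obtain ⟨a, b, hab, rfl⟩ := card_eq_two.1 hP₂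
  have ha : a ∈ nbhd G U x := hPx (mem_insert_self a _)
  have hb : b ∈ nbhd G U x := hPx (mem_insert_of_mem (mem_singleton_self b))
  refine hab (M.eq_of_isNClique_closedNbhd_erase hx hb
    ⟨isClique_closedNbhd_erase_of_sdiff_subset hP, ?_⟩
    ⟨isClique_closedNbhd_erase_of_sdiff_subset (by rwa [pair_comm]), ?_⟩)
  · rw [card_closedNbhd_erase (nbhd_subset_closedNbhd ha), hdx]
  · rw [card_closedNbhd_erase (nbhd_subset_closedNbhd hb), hdx]

lemma IsMinCounterexample.le_deg_of_mem_isNClique (M : IsMinCounterexample k G U) (hx : x ∈ U)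
    (hz : z ∈ nbhd G U x)
    (hc : G.IsNClique (k - 1) ((closedNbhd G U x).erase z))
    (hw : w ∈ (closedNbhd G U x).erase z) (hwC : w ∉ cluster G U x) :
    k - 1 + #(cluster G U x) ≤ deg G U w := by
  have hk := M.four_le
  by_contra! hlt
  have hdx : deg G U x = k - 1 := by
    rw [← hc.card_eq, card_closedNbhd_erase (nbhd_subset_closedNbhd hz)]
  obtain ⟨hwz, hwx⟩ := mem_erase.1 hw
  have hne : w ≠ x := fun e => hwC (e.symm ▸ self_mem_cluster hx)
  have hwn : w ∈ nbhd G U x := mem_nbhd.2 ((mem_closedNbhd.1 hwx).resolve_left hne)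
  have hxK : x ∈ (closedNbhd G U x).erase z :=
    mem_erase.2 ⟨(mem_nbhd.1 hz).2.ne, self_mem_closedNbhd⟩
  by_cases ht : deg G U w = k - 1 → #(cluster G U w) ≤ #(cluster G U x)
  · exact hwz (M.eq_of_isNClique_closedNbhd_erase hx hz
      (M.isNClique_closedNbhd_erase hx hdx hwn hwC hlt ht) hc)
  obtain ⟨hdw, ht⟩ := Classical.not_imp.1 ht
  have hwU := (mem_nbhd.1 hwn).1
  have hxw : x ∈ nbhd G U w := mem_nbhd.2 ⟨hx, (mem_nbhd.1 hwn).2.symm⟩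
  have hcw := M.isNClique_closedNbhd_erase hwU hdw hxw
    (fun h => hwC ((mem_cluster_comm hx hwU).1 h)) (by lia) fun _ => (not_le.1 ht).le
  have hsub : ((closedNbhd G U x).erase z).erase x ⊆
      (closedNbhd G U x).erase z ∩ (closedNbhd G U w).erase x := by
    intro u hu
    obtain ⟨hux, hu⟩ := mem_erase.1 hu
    refine mem_inter.2 ⟨hu, mem_erase.2 ⟨hux, mem_closedNbhd.2 ?_⟩⟩
    exact or_iff_not_imp_left.2 fun hne =>
      ⟨closedNbhd_subset hx (mem_of_mem_erase hu), hc.isClique hw hu (Ne.symm hne)⟩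
  have hinter := card_le_card hsub
  rw [card_erase_of_mem hxK, hc.card_eq] at hinter
  rw [M.eq_of_two_le_card_inter ((erase_subset _ _).trans (closedNbhd_subset hx))
    ((erase_subset _ _).trans (closedNbhd_subset hwU)) hc hcw (by lia)] at hxK
  exact notMem_erase x _ hxK

lemma IsColoringOn.colorableOn_of_sdiff_insert {ψ : V → Fin n} {a : Fin n}
    (hψ : IsColoringOn G (U \ insert x C) ψ) (hK : #K ≤ n) (hCK : C ⊆ K)
    (hC : ∀ c ∈ C, nbhd G U c ⊆ insert x K) (haK : a ∈ (K \ C).image ψ)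
    (ha : ∀ w ∈ nbhd G U x \ C, ψ w ≠ a) : ColorableOn G U n := by
  set A := (K \ C).image ψ
  have hcard : #C ≤ #(univ \ A) := by
    have := card_image_le (s := K \ C) (f := ψ)
    have := card_le_card hCK
    rw [card_univ_sdiff, Fintype.card_fin]
    grind [card_sdiff_of_subset]
  have : Nonempty (Fin n) := ⟨a⟩
  obtain ⟨f, hf, hfA⟩ := exists_injOn_mapsTo hcard
  simp only [mem_sdiff, mem_univ, true_and] at hfA
  have hx : IsColoringOn G (U \ C) (Function.update ψ x a) :=
    IsColoringOn.update (by rwa [← sdiff_insert]) fun w hw => ha w <| by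
      simp only [mem_nbhd, mem_sdiff] at hw ⊢
      tauto
  refine ⟨_, IsColoringOn.piecewise (R := C) (fun u hu v hv huv e => huv.ne (hf hu hv e)) hx
    fun c hc w hw hcw e => hfA c hc (e ▸ ?_)⟩
  obtain ⟨hwU, hwC⟩ := mem_sdiff.1 hw
  by_cases hwx : w = x
  · rwa [hwx, Function.update_self]
  · rw [Function.update_of_ne hwx]
    exact mem_image_of_mem ψ (mem_sdiff.2
      ⟨(mem_insert.1 (hC c hc (mem_nbhd.2 ⟨hwU, hcw⟩))).resolve_left hwx, hwC⟩)

/-- The added edges force the color of `u` out of `K \ C`, so some color used in `K \ C` is free at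
`x`; the vertices of `C` then get the colors missing from `K \ C`. -/
lemma ColorableOn.of_addEdges_star (hK : G.IsNClique n K) (hKU : K ⊆ U) (hCK : C ⊆ K)
    (hxK : x ∉ K) (hCx : C ⊆ nbhd G U x) (hC : ∀ c ∈ C, nbhd G U c ⊆ insert x K)
    (hdx : deg G U x ≤ n) (hu : u ∈ nbhd G U x) (huK : u ∉ K)
    (h : ColorableOn (addEdges G ({u} ×ˢ (K \ C))) (U \ insert x C) n) : ColorableOn G U n := by
  obtain ⟨ψ, hψ⟩ := h
  have huC : u ∉ C := fun h => huK (hCK h)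
  have hKC : ∀ w ∈ K \ C, w ∈ U \ insert x C := fun w hw => by
    obtain ⟨hwK, hwC⟩ := mem_sdiff.1 hw
    exact mem_sdiff.2 ⟨hKU hwK, by simp [hwC, ne_of_mem_of_not_mem hwK hxK]⟩
  have hcard : #((K \ C).image ψ) = n - #C := by
    rw [card_image_of_injOn, card_sdiff_of_subset hCK, hK.card_eq]
    intro p hp q hq e
    by_contra hne
    exact hψ.of_addEdges p (hKC p hp) q (hKC q hq)
      (hK.isClique (mem_sdiff.1 hp).1 (mem_sdiff.1 hq).1 hne) e
  have huψ : ∀ w ∈ K \ C, ψ w ≠ ψ u := fun w hw e => by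
    have huU : u ∈ U \ insert x C :=
      mem_sdiff.2 ⟨(mem_nbhd.1 hu).1, by simp [huC, (mem_nbhd.1 hu).2.ne']⟩
    refine hψ u huU w (hKC w hw) (addEdges_adj.2 (.inr ⟨?_, .inl ?_⟩)) e.symm
    · rintro rfl
      exact huK (mem_sdiff.1 hw).1
    · exact mem_product.2 ⟨mem_singleton_self u, hw⟩
  have hlt : #(((nbhd G U x \ C).erase u).image ψ) < #((K \ C).image ψ) := by
    have := card_image_le (s := (nbhd G U x \ C).erase u) (f := ψ)
    have hu' : u ∈ nbhd G U x \ C := mem_sdiff.2 ⟨hu, huC⟩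
    have := card_pos.2 ⟨u, hu'⟩
    rw [card_erase_of_mem hu', card_sdiff_of_subset hCx] at *
    have : deg G U x = #(nbhd G U x) := rfl
    lia
  obtain ⟨a, haK, ha⟩ := exists_mem_notMem_of_card_lt_card hlt
  refine hψ.of_addEdges.colorableOn_of_sdiff_insert hK.card_eq.le hCK hC haK fun w hw e => ?_
  have hwu : w ≠ u := by
    rintro rfl
    obtain ⟨p, hp, hpa⟩ := mem_image.1 haK
    exact huψ p hp (hpa.trans e.symm)
  exact ha (mem_image.2 ⟨w, mem_erase.2 ⟨hwu, hw⟩, e⟩)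

lemma le_rho_of_isClique_of_card_le (hK : G.IsClique (K : Set V)) (h₁ : 1 ≤ #K) (h₂ : #K + 3 ≤ k) :
    (k : ℤ) * ((k : ℤ) - 3) + 2 * ((k : ℤ) - 1) * #K ≤ rho k G K := by
  rw [rho_of_isClique k hK]
  have : (1 : ℤ) ≤ #K := mod_cast h₁
  have : (#K : ℤ) + 3 ≤ k := mod_cast h₂
  have : 0 ≤ ((#K : ℤ) - 1) * ((k : ℤ) * (k - 3) - (k - 1) * #K) :=
    mul_nonneg (by linarith) (by nlinarith)
  linarith

/-- `W ∪ K` is a proper subset of `U` of cardinality at least `k`, so its potential exceeds that of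
`K`, and submodularity applies. -/
lemma IsMinCounterexample.lt_rho_of_inter_isNClique (M : IsMinCounterexample k G U) (hx : x ∈ U)
    (hK : G.IsNClique (k - 1) K) (hKU : K ⊆ U) (hxK : x ∉ K) (hW : W ⊆ U) (hxW : x ∉ W)
    (hu : u ∈ W) (huK : u ∉ K) (h₁ : 1 ≤ #(W ∩ K)) (h₂ : #(W ∩ K) + 3 ≤ k) :
    (k : ℤ) * ((k : ℤ) - 3) + 2 * ((k : ℤ) - 1) * #(W ∩ K) < rho k G W := by
  have hk := M.four_le
  have hρJ := le_rho_of_isClique_of_card_le (k := k)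
    (hK.isClique.subset (coe_subset.2 inter_subset_right : ((W ∩ K : Finset V) : Set V) ⊆ K)) h₁ h₂
  have hxWK : x ∉ W ∪ K := fun h => (mem_union.1 h).elim hxW hxK
  have hlt := M.lt_rho_of_ssubset
    ((ssubset_iff_of_subset (union_subset hW hKU)).2 ⟨x, hx, hxWK⟩) (by
      have := card_le_card (insert_subset (mem_union_left K hu) subset_union_right)
      rw [card_insert_of_notMem huK, hK.card_eq] at this
      lia)
  have hsub := rho_union_add_rho_inter_le (by lia : 1 ≤ k) G W K
  rw [rho_of_isNClique (by lia) hK] at hsub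
  linarith

/-- A set `W` of low potential after the addition of the star contains at most `#(W ∩ K)` of the new
edges, so its potential in `G` would be too low. -/
lemma IsMinCounterexample.colorableOn_addEdges_star (M : IsMinCounterexample k G U) (hx : x ∈ U)
    (hK : G.IsNClique (k - 1) K) (hKU : K ⊆ U) (hCK : C ⊆ K) (hxK : x ∉ K) (hC₂ : 2 ≤ #C)
    (huK : u ∉ K) :
    ColorableOn (addEdges G ({u} ×ˢ (K \ C))) (U \ insert x C) (k - 1) := by
  by_contra hc
  have hk := M.four_le
  have hssub : U \ insert x C ⊂ U :=
    (ssubset_iff_of_subset sdiff_subset).2 ⟨x, hx, by simp⟩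
  obtain ⟨W, hW, hne, hρW, -⟩ := M.exists_rho_le_of_not_colorableOn_addEdges hssub hc
  have hWU := hW.trans hssub.subset
  set E := ({u} ×ˢ (K \ C)) ∩ W ×ˢ W with hE
  have hE₀ : E.Nonempty := by
    rw [nonempty_iff_ne_empty]
    intro h
    rw [h, card_empty] at hρW
    exact (M.lt_rho hWU hne).not_ge (by simpa using hρW)
  obtain ⟨p, hp⟩ := hE₀
  have huW : u ∈ W := by
    simp only [hE, mem_inter, mem_product, mem_singleton] at hp
    exact hp.1.1 ▸ hp.2.1
  have hEcard : #E ≤ #(W ∩ K) := by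
    have hsub : E ⊆ {u} ×ˢ (W ∩ K) := fun p hp => by
      simp only [hE, mem_inter, mem_product, mem_sdiff] at hp ⊢
      tauto
    simpa only [card_product, card_singleton, one_mul] using card_le_card hsub
  have hEpos := card_pos.2 ⟨p, hp⟩
  have hinter : W ∩ K ⊆ K \ C := fun w hw => by
    have := mem_sdiff.1 (hW (mem_inter.1 hw).1)
    exact mem_sdiff.2 ⟨(mem_inter.1 hw).2, fun h => this.2 (mem_insert_of_mem h)⟩
  have hcard := card_le_card hinter
  rw [card_sdiff_of_subset hCK, hK.card_eq] at hcard
  have hlt := M.lt_rho_of_inter_isNClique hx hK hKU hxK hWU (fun h => by simpa using hW h) huW huK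
    (by lia) (by lia)
  have := M.four_le_cast
  have : (#E : ℤ) ≤ #(W ∩ K) := mod_cast hEcard
  nlinarith

lemma IsMinCounterexample.not_isNClique_closedNbhd_erase (M : IsMinCounterexample k G U)
    (hv : v ∈ U) (hx : x ∈ nbhd G U v) (hxC : x ∉ cluster G U v)
    (hdx : deg G U x = k - 1) (hC₂ : 2 ≤ #(cluster G U v)) :
    ¬ G.IsNClique (k - 1) ((closedNbhd G U v).erase x) := by
  intro hK
  set K := (closedNbhd G U v).erase x
  have hxv := nbhd_subset_closedNbhd hx
  have hinsert : insert x K = closedNbhd G U v := insert_erase hxv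
  have hxU := (mem_nbhd.1 hx).1
  have hKU : K ⊆ U := (erase_subset _ _).trans (closedNbhd_subset hv)
  have hCK : cluster G U v ⊆ K := fun c hc =>
    mem_erase.2 ⟨fun e => hxC (e ▸ hc), cluster_subset_closedNbhd hc⟩
  have hxK : x ∉ K := notMem_erase _ _
  obtain ⟨u, hu, huK⟩ : ∃ u ∈ nbhd G U x, u ∉ K := by
    by_contra! hsub
    have heq : nbhd G U x = K := eq_of_subset_of_card_le hsub (by rw [hK.card_eq, ← hdx, deg])
    exact hxC (mem_cluster.2 ⟨hxU, by rw [closedNbhd, heq, hinsert]⟩)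
  have hstar := M.colorableOn_addEdges_star hxU hK hKU hCK hxK hC₂ huK
  refine M.not_colorableOn (hstar.of_addEdges_star hK hKU hCK hxK (cluster_subset_nbhd hx hxC)
    (fun c hc => ?_) hdx.le hu huK)
  rw [hinsert, ← (mem_cluster.1 hc).2]
  exact nbhd_subset_closedNbhd

lemma IsMinCounterexample.le_deg_of_notMem_cluster (M : IsMinCounterexample k G U)
    (hx : x ∈ U) (hdx : deg G U x = k - 1)
    (hno : ∀ z ∈ nbhd G U x, ¬ G.IsNClique (k - 1) ((closedNbhd G U x).erase z))
    (hv : v ∈ nbhd G U x) (hvC : v ∉ cluster G U x) : k - 1 + #(cluster G U x) ≤ deg G U v := by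
  by_contra! hlt
  by_cases ht : deg G U v = k - 1 → #(cluster G U v) ≤ #(cluster G U x)
  · exact hno v hv (M.isNClique_closedNbhd_erase hx hdx hv hvC hlt ht)
  obtain ⟨hdv, ht⟩ := Classical.not_imp.1 ht
  have hvU := (mem_nbhd.1 hv).1
  have hxv : x ∈ nbhd G U v := mem_nbhd.2 ⟨hx, (mem_nbhd.1 hv).2.symm⟩
  have hxC : x ∉ cluster G U v := fun h => hvC ((mem_cluster_comm hx hvU).1 h)
  have := card_pos.2 ⟨x, self_mem_cluster (G := G) hx⟩
  exact M.not_isNClique_closedNbhd_erase hvU hxv hxC hdx (by lia)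
    (M.isNClique_closedNbhd_erase hvU hdv hxv hxC (by lia) fun _ => (not_le.1 ht).le)

end SmallDegree

section ListColoring

variable {α : Type*} {D : V → V → Prop} {S S' I A B : Finset V} {u b : V} {n : ℕ}

/-- `I` is a kernel of the digraph `D` on `S`: it is independent in `G`, and every other vertex of
`S` has an out-neighbor in it. -/
def IsKernel (G : SimpleGraph V) (D : V → V → Prop) (S I : Finset V) : Prop :=
  I ⊆ S ∧ G.IsIndepSet (I : Set V) ∧ ∀ u ∈ S \ I, ∃ v ∈ I, D u v

/-- Every induced subdigraph of `D` on a subset of `S` has a kernel. -/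
def IsKernelPerfect (G : SimpleGraph V) (D : V → V → Prop) (S : Finset V) : Prop :=
  ∀ S' ⊆ S, ∃ I, IsKernel G D S' I

lemma IsKernel.card_filter_sdiff_lt (hI : IsKernel G D S' I) (hS : S' ⊆ S) (hu : u ∈ S' \ I) :
    #{v ∈ S \ I | D u v} < #{v ∈ S | D u v} := by
  obtain ⟨v, hv, hD⟩ := hI.2.2 u hu
  exact card_lt_card <| (ssubset_iff_of_subset (filter_subset_filter _ sdiff_subset)).2
    ⟨v, mem_filter.2 ⟨hS (hI.1 hv), hD⟩, by simp [hv]⟩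

/-- The Bondy–Boppana–Siegel lemma: a kernel of the set of vertices whose list contains `a` is
colored `a`, and every other such vertex loses one color but also one out-neighbor. -/
lemma IsKernelPerfect.exists_listColoring [Nonempty α] (hS : IsKernelPerfect G D S)
    (L : V → Finset α) (hL : ∀ u ∈ S, #{v ∈ S | D u v} < #(L u)) :
    ∃ c : V → α, (∀ u ∈ S, c u ∈ L u) ∧ IsColoringOn G S c := by
  induction S using Finset.strongInduction generalizing L with
  | H S ih =>
  rcases S.eq_empty_or_nonempty with rfl | ⟨u₀, hu₀⟩
  · exact ⟨fun _ => Classical.arbitrary α, by simp, by simp [IsColoringOn]⟩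
  obtain ⟨a, ha⟩ := card_pos.1 ((Nat.zero_le _).trans_lt (hL u₀ hu₀))
  obtain ⟨I, hI⟩ := hS {v ∈ S | a ∈ L v} (filter_subset _ _)
  have hIS : I ⊆ S := hI.1.trans (filter_subset _ _)
  have hne : I.Nonempty := by
    by_contra! h
    obtain ⟨v, hv, -⟩ := hI.2.2 u₀ (by simp [h, hu₀, ha])
    simp [h] at hv
  obtain ⟨c, hcL, hc⟩ := ih (S \ I) (sdiff_ssubset hIS hne)
    (fun S' hS' => hS S' (hS'.trans sdiff_subset)) (fun u => (L u).erase a) fun u hu => by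
      have hLu := hL u (mem_sdiff.1 hu).1
      by_cases hau : a ∈ L u
      · have := hI.card_filter_sdiff_lt (filter_subset _ _) (u := u) (by
          simp only [mem_sdiff, mem_filter] at hu ⊢
          exact ⟨⟨hu.1, hau⟩, hu.2⟩)
        rw [card_erase_of_mem hau]
        lia
      · rw [erase_eq_of_notMem hau]
        exact (card_le_card (filter_subset_filter _ sdiff_subset)).trans_lt hLu
  refine ⟨I.piecewise (fun _ => a) c, fun u hu => ?_, IsColoringOn.piecewise
    (fun u hu v hv huv => absurd huv (hI.2.1 hu hv huv.ne)) hc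
    fun _ _ v hv _ => (ne_of_mem_erase (hcL v hv)).symm⟩
  by_cases huI : u ∈ I
  · rw [piecewise_eq_of_mem _ _ _ huI]
    exact (mem_filter.1 (hI.1 huI)).2
  · rw [piecewise_eq_of_notMem _ _ _ huI]
    exact mem_of_mem_erase (hcL u (mem_sdiff.2 ⟨hu, huI⟩))

lemma IsKernelPerfect.colorableOn (hD : IsKernelPerfect G D S) (hSU : S ⊆ U)
    (hc : ColorableOn G (U \ S) n)
    (hdeg : ∀ u ∈ S, #{v ∈ S | D u v} + deg G (U \ S) u < n) : ColorableOn G U n := by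
  rcases S.eq_empty_or_nonempty with rfl | ⟨u₀, hu₀⟩
  · rwa [sdiff_empty] at hc
  have : Nonempty (Fin n) := ⟨⟨0, (Nat.zero_le _).trans_lt (hdeg u₀ hu₀)⟩⟩
  obtain ⟨c, hc⟩ := hc
  obtain ⟨d, hdL, hd⟩ := hD.exists_listColoring
    (fun u => univ \ (nbhd G (U \ S) u).image c) fun u hu => by
      have := card_image_le (s := nbhd G (U \ S) u) (f := c)
      have := hdeg u hu
      have := le_card_sdiff ((nbhd G (U \ S) u).image c) univ
      rw [card_univ, Fintype.card_fin] at this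
      unfold deg at *
      lia
  refine ⟨_, hd.piecewise hc fun u hu v hv huv e => (mem_sdiff.1 (hdL u hu)).2 ?_⟩
  exact e ▸ mem_image_of_mem c (mem_nbhd.2 ⟨hv, huv⟩)

lemma IsKernel.insert (hI : IsKernel G D {v ∈ S.erase b | ¬ G.Adj b v} I) (hb : b ∈ S)
    (hin : ∀ u ∈ S, G.Adj b u → D u b) : IsKernel G D S (insert b I) := by
  obtain ⟨hIS, hind, habs⟩ := hI
  have hIb : ∀ w ∈ I, w ∈ S ∧ ¬ G.Adj b w := fun w hw => by
    have := mem_filter.1 (hIS hw)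
    exact ⟨mem_of_mem_erase this.1, this.2⟩
  refine ⟨insert_subset hb fun w hw => (hIb w hw).1, ?_, fun u hu => ?_⟩
  · rw [coe_insert]
    exact hind.insert fun w hw _ => ⟨(hIb w hw).2, fun h => (hIb w hw).2 h.symm⟩
  · simp only [mem_sdiff, mem_insert, not_or] at hu
    by_cases hbu : G.Adj b u
    · exact ⟨b, mem_insert_self _ _, hin u hu.1 hbu⟩
    · obtain ⟨v, hv, hD⟩ := habs u (by simp [hu, hbu])
      exact ⟨v, mem_insert_of_mem hv, hD⟩

/-- If `A ∩ S` does not absorb `S`, then some `b ∈ B` has no out-neighbor in it, hence receives arcs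
from all its neighbors and can be put into the kernel. -/
lemma isKernelPerfect_union (hA : G.IsIndepSet (A : Set V))
    (hAB : ∀ a ∈ A, ∀ b ∈ B, G.Adj a b → D a b ∨ D b a)
    (hB : ∀ b ∈ B, ∀ b' ∈ B, G.Adj b b' → D b b') : IsKernelPerfect G D (A ∪ B) := by
  intro S hS
  induction S using Finset.strongInduction with
  | H S ih =>
  by_cases! hall : ∀ b ∈ S \ A, ∃ a ∈ S ∩ A, D b a
  · exact ⟨S ∩ A, inter_subset_left, hA.mono (coe_subset.2 inter_subset_right), by simpa using hall⟩
  obtain ⟨b, hb, hno⟩ := hall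
  obtain ⟨hbS, hbA⟩ := mem_sdiff.1 hb
  have hbB := (mem_union.1 (hS hbS)).resolve_left hbA
  obtain ⟨I, hI⟩ := ih {v ∈ S.erase b | ¬ G.Adj b v}
    ((filter_subset _ _).trans_ssubset (erase_ssubset hbS))
    ((filter_subset _ _).trans ((erase_subset _ _).trans hS))
  refine ⟨_, hI.insert hbS fun u hu hbu => ?_⟩
  rcases mem_union.1 (hS hu) with huA | huB
  · exact (hAB u huA b hbB hbu.symm).resolve_right (hno u (mem_inter.2 ⟨hu, huA⟩))
  · exact hB u huB b hbB hbu.symm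

end ListColoring

section SparseBetween

variable {α β : Type*} {A B : Finset V}

/-- Hall's theorem, applied to `w x` copies of each `x`. -/
lemma exists_pairwiseDisjoint_of_sum_le_card_biUnion [DecidableEq β] {S : Finset α}
    (t : α → Finset β) (w : α → ℕ) (h : ∀ X ⊆ S, ∑ x ∈ X, w x ≤ #(X.biUnion t)) :
    ∃ P : α → Finset β, (∀ x ∈ S, P x ⊆ t x ∧ #(P x) = w x) ∧ (S : Set α).PairwiseDisjoint P := by
  rcases isEmpty_or_nonempty β with hβ | hβ
  · refine ⟨fun _ => ∅, fun x hx => ⟨empty_subset _, ?_⟩, fun _ _ _ _ _ => disjoint_empty_left _⟩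
    have := h {x} (singleton_subset_iff.2 hx)
    rw [sum_singleton, eq_empty_of_isEmpty (Finset.biUnion _ _)] at this
    simpa [eq_comm] using this
  obtain ⟨f, hf, hft⟩ := exists_injOn_mem_of_card_le_biUnion
    (S := S.sigma fun x => range (w x)) (fun s => t s.1) fun X hX => by
      have hsub : X ⊆ (X.image Sigma.fst).sigma fun x => range (w x) := fun s hs =>
        mem_sigma.2 ⟨mem_image_of_mem _ hs, (mem_sigma.1 (hX hs)).2⟩
      have hXS : X.image Sigma.fst ⊆ S := image_subset_iff.2 fun s hs => (mem_sigma.1 (hX hs)).1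
      calc #X ≤ ∑ x ∈ X.image Sigma.fst, w x := by
            simpa only [card_sigma, card_range] using card_le_card hsub
        _ ≤ #((X.image Sigma.fst).biUnion t) := h _ hXS
        _ = #(X.biUnion fun s => t s.1) := by rw [image_biUnion]
  have hmem : ∀ {x i}, x ∈ S → i ∈ range (w x) → (⟨x, i⟩ : Σ _ : α, ℕ) ∈
      S.sigma fun x => range (w x) := fun hx hi => mem_sigma.2 ⟨hx, hi⟩
  refine ⟨fun x => (range (w x)).image fun i => f ⟨x, i⟩, fun x hx => ⟨?_, ?_⟩, ?_⟩
  · exact image_subset_iff.2 fun i hi => hft _ (hmem hx hi)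
  · rw [card_image_of_injOn fun i hi j hj e => ?_, card_range]
    exact eq_of_heq (Sigma.mk.inj_iff.1 (hf (hmem hx hi) (hmem hx hj) e)).2
  · intro x hx y hy hxy
    simp only [Function.onFun, Finset.disjoint_left, mem_image, not_exists, not_and,
      forall_exists_index, and_imp]
    rintro _ i hi rfl j hj e
    exact hxy (Sigma.mk.inj_iff.1 (hf (hmem hy hj) (hmem hx hi) e)).1.symm

lemma exists_subset_of_lt_edgePairs (h : (#A + 2 * #B : ℤ) < edgePairs G A B) :
    ∃ A' ⊆ A, ∃ B' ⊆ B, (A' ∪ B').Nonempty ∧ ∀ Z,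
      edgePairs G (A' \ Z) (B' \ Z) + #(A' ∩ Z) + 2 * #(B' ∩ Z) ≤ edgePairs G A' B' := by
  obtain ⟨⟨A', B'⟩, hmem, hmax⟩ := exists_max_image (A.powerset ×ˢ B.powerset)
    (fun p => edgePairs G p.1 p.2 - #p.1 - 2 * #p.2) ⟨(∅, ∅), by simp⟩
  simp only [mem_product, mem_powerset] at hmem hmax
  refine ⟨A', hmem.1, B', hmem.2, ?_, fun Z => ?_⟩
  · by_contra! hempty
    obtain ⟨rfl, rfl⟩ := union_eq_empty.1 hempty
    have := hmax (A, B) ⟨Subset.rfl, Subset.rfl⟩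
    simp only [edgePairs, interedges_empty_left, card_empty] at this h
    lia
  · have := hmax (A' \ Z, B' \ Z) ⟨sdiff_subset.trans hmem.1, sdiff_subset.trans hmem.2⟩
    dsimp only at this
    have := card_sdiff_add_card_inter A' Z
    have := card_sdiff_add_card_inter B' Z
    lia

lemma injOn_sym2_mk_product (h : Disjoint A B) :
    Set.InjOn (fun p : V × V => s(p.1, p.2)) (A ×ˢ B : Finset (V × V)) := by
  rintro ⟨a, b⟩ hp ⟨a', b'⟩ hp' e
  rw [mem_coe, mem_product] at hp hp'
  rcases Sym2.eq_iff.1 e with ⟨rfl, rfl⟩ | ⟨rfl, rfl⟩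
  · rfl
  · exact absurd hp'.2 (Finset.disjoint_left.1 h hp.1)

/-- The edges of `G` between `A` and `B`. -/
noncomputable def crossEdges (G : SimpleGraph V) (A B : Finset V) : Finset (Sym2 V) :=
  (G.interedges A B).image fun p => s(p.1, p.2)

lemma mk_mem_crossEdges {u v : V} : s(u, v) ∈ crossEdges G A B ↔
    G.Adj u v ∧ (u ∈ A ∧ v ∈ B ∨ v ∈ A ∧ u ∈ B) := by
  simp only [crossEdges, mem_image, mem_interedges_iff, Prod.exists, Sym2.eq_iff]
  constructor
  · rintro ⟨a, b, ⟨ha, hb, hab⟩, ⟨rfl, rfl⟩ | ⟨rfl, rfl⟩⟩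
    exacts [⟨hab, .inl ⟨ha, hb⟩⟩, ⟨hab.symm, .inr ⟨ha, hb⟩⟩]
  · rintro ⟨hab, ⟨hu, hv⟩ | ⟨hv, hu⟩⟩
    exacts [⟨u, v, ⟨hu, hv, hab⟩, .inl ⟨rfl, rfl⟩⟩, ⟨v, u, ⟨hv, hu, hab.symm⟩, .inr ⟨rfl, rfl⟩⟩]

lemma edgePairs_le_add_card_filter_crossEdges (h : Disjoint A B) (Z : Finset V) :
    edgePairs G A B ≤
      edgePairs G (A \ Z) (B \ Z) + #{e ∈ crossEdges G A B | ∃ v ∈ Z, v ∈ e} := by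
  have hinj : #(crossEdges G A B) = #(G.interedges A B) :=
    card_image_of_injOn ((injOn_sym2_mk_product h).mono (coe_subset.2 (filter_subset _ _)))
  have hsub : {e ∈ crossEdges G A B | ¬ ∃ v ∈ Z, v ∈ e} ⊆ crossEdges G (A \ Z) (B \ Z) := by
    intro e he
    induction e with | _ u v =>
    simp only [mem_filter, mk_mem_crossEdges, Sym2.mem_iff, mem_sdiff] at he ⊢
    grind
  have := (card_le_card hsub).trans card_image_le
  have := card_filter_add_card_filter_not (s := crossEdges G A B) (fun e => ∃ v ∈ Z, v ∈ e)
  unfold edgePairs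
  lia

lemma exists_edge_assignment (hAB : Disjoint A B) (h : ∀ Z,
      edgePairs G (A \ Z) (B \ Z) + #(A ∩ Z) + 2 * #(B ∩ Z) ≤ edgePairs G A B) :
    ∃ P : V → Finset (Sym2 V),
      (∀ v ∈ A ∪ B, P v ⊆ {e ∈ crossEdges G A B | v ∈ e} ∧ #(P v) = if v ∈ A then 1 else 2) ∧
      ((A ∪ B : Finset V) : Set V).PairwiseDisjoint P := by
  refine exists_pairwiseDisjoint_of_sum_le_card_biUnion _ _ fun X hX => ?_
  have hsum : ∑ v ∈ X, (if v ∈ A then 1 else 2) ≤ #(A ∩ X) + 2 * #(B ∩ X) := by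
    rw [sum_ite, sum_const, sum_const, smul_eq_mul, smul_eq_mul, mul_one, mul_comm]
    have hA : #{v ∈ X | v ∈ A} ≤ #(A ∩ X) := card_le_card (by grind)
    have hB : #{v ∈ X | v ∉ A} ≤ #(B ∩ X) := card_le_card (by grind)
    lia
  have := edgePairs_le_add_card_filter_crossEdges (G := G) hAB X
  have := h X
  refine le_trans ?_ (card_le_card (s := {e ∈ crossEdges G A B | ∃ v ∈ X, v ∈ e}) fun e he => ?_)
  · lia
  · obtain ⟨he, v, hv, hve⟩ := mem_filter.1 he
    exact mem_biUnion.2 ⟨v, hv, mem_filter.2 ⟨he, hve⟩⟩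

/-- The digraph on `A ∪ B` obtained by directing every edge of `G` both ways and deleting at each
vertex the arcs assigned to it by `P`. -/
def residualArc (G : SimpleGraph V) (P : V → Finset (Sym2 V)) (u v : V) : Prop :=
  G.Adj u v ∧ s(u, v) ∉ P u

variable {P : V → Finset (Sym2 V)}

lemma isKernelPerfect_residualArc (hA : G.IsIndepSet (A : Set V)) (hAB : Disjoint A B)
    (hP : ∀ v ∈ B, P v ⊆ crossEdges G A B)
    (hdisj : ((A ∪ B : Finset V) : Set V).PairwiseDisjoint P) :
    IsKernelPerfect G (residualArc G P) (A ∪ B) := by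
  refine isKernelPerfect_union hA (fun a ha b hb hab => ?_) fun b hb b' hb' hbb' => ⟨hbb', ?_⟩
  · by_contra hno
    simp only [residualArc, hab, hab.symm, true_and, not_or, not_not] at hno
    exact Finset.disjoint_left.1 (hdisj (mem_coe.2 (mem_union_left B ha))
      (mem_coe.2 (mem_union_right A hb)) hab.ne) hno.1 (Sym2.eq_swap ▸ hno.2)
  · intro h
    rcases (mk_mem_crossEdges.1 (hP b hb h)).2 with ⟨h, -⟩ | ⟨h, -⟩
    exacts [Finset.disjoint_left.1 hAB h hb, Finset.disjoint_left.1 hAB h hb']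

lemma card_filter_residualArc_add_card_le {S : Finset V} {u : V}
    (hP : P u ⊆ (nbhd G S u).image fun v => s(u, v)) :
    #{v ∈ S | residualArc G P u v} + #(P u) ≤ deg G S u := by
  have hinj : Function.Injective fun v => s(u, v) := fun _ _ => Sym2.congr_right.1
  rw [← card_image_of_injective _ hinj, deg, ← card_image_of_injective (nbhd G S u) hinj,
    ← card_union_of_disjoint]
  · refine card_le_card (union_subset (image_subset_image fun v hv => ?_) hP)
    exact mem_nbhd.2 ⟨(mem_filter.1 hv).1, (mem_filter.1 hv).2.1⟩
  · rw [Finset.disjoint_left]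
    intro e he
    obtain ⟨v, hv, rfl⟩ := mem_image.1 he
    exact (mem_filter.1 hv).2.2

/-- Otherwise shrink `A ∪ B` to a set `S` from which one can delete, to obtain a kernel-perfect
digraph, one arc at each vertex of `A` and two arcs at each vertex of `B`; then a coloring of
`U \ S` extends to `U`. -/
lemma IsMinCounterexample.edgePairs_le_of_isIndepSet (M : IsMinCounterexample k G U) (hAU : A ⊆ U)
    (hBU : B ⊆ U) (hAB : Disjoint A B) (hA : G.IsIndepSet (A : Set V))
    (hAd : ∀ a ∈ A, deg G U a = k - 1) (hBd : ∀ b ∈ B, deg G U b = k) :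
    edgePairs G A B ≤ #A + 2 * #B := by
  by_contra! hlt
  obtain ⟨A', hA', B', hB', hne, hmax⟩ := exists_subset_of_lt_edgePairs hlt
  have hdisj := disjoint_of_subset_left hA' (disjoint_of_subset_right hB' hAB)
  have hSU : A' ∪ B' ⊆ U := union_subset (hA'.trans hAU) (hB'.trans hBU)
  obtain ⟨P, hP, hPdisj⟩ := exists_edge_assignment hdisj hmax
  have hPc : ∀ v ∈ A' ∪ B', P v ⊆ crossEdges G A' B' := fun v hv =>
    (hP v hv).1.trans (filter_subset _ _)
  have hD := isKernelPerfect_residualArc (hA.mono (coe_subset.2 hA')) hdisj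
    (fun v hv => hPc v (mem_union_right _ hv)) hPdisj
  refine M.not_colorableOn (hD.colorableOn hSU (M.colorableOn_of_ssubset (sdiff_ssubset hSU hne))
    fun u hu => ?_)
  have hsplit := deg_union (G := G) (disjoint_sdiff (s := A' ∪ B') (t := U)) u
  rw [union_sdiff_of_subset hSU] at hsplit
  have hcard := (hP u hu).2
  have := card_filter_residualArc_add_card_le (P := P) (S := A' ∪ B') (G := G) (u := u) <| by
    intro e he
    obtain ⟨v, rfl⟩ := Sym2.mem_iff_exists.1 (mem_filter.1 ((hP u hu).1 he)).2
    have := mk_mem_crossEdges.1 (hPc u hu he)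
    exact mem_image_of_mem _ (mem_nbhd.2 ⟨by grind, this.1⟩)
  have := M.four_le
  rcases mem_union.1 hu with huA | huB
  · rw [if_pos huA] at hcard
    have := hAd u (hA' huA)
    lia
  · rw [if_neg (Finset.disjoint_right.1 hdisj huB)] at hcard
    have := hBd u (hB' huB)
    lia

end SparseBetween

section TightClique

variable {K X : Finset V} {x z w w₁ w₂ w₃ a b : V} {n : ℕ}

lemma deg_eq_add_deg_sdiff (hK : G.IsNClique n K) (hKU : K ⊆ U) (hw : w ∈ K) :
    deg G U w = n - 1 + deg G (U \ K) w := by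
  have hin : deg G K w = n - 1 := by
    rw [deg, nbhd_eq_erase_of_isClique hK.isClique hw, card_erase_of_mem hw, hK.card_eq]
  rw [← hin, ← deg_union disjoint_sdiff, union_sdiff_of_subset hKU]

lemma deg_add_sum_deg_le_edgePairs {P : Finset V} (hx : x ∈ K) (hP : P ⊆ K.erase x)
    (X : Finset V) : deg G X x + ∑ w ∈ P, (deg G X w : ℤ) ≤ edgePairs G K X := by
  rw [← sum_insert (f := fun w => (deg G X w : ℤ)) fun h => notMem_erase x K (hP h),
    ← edgePairs_eq_sum_deg]
  exact edgePairs_mono (insert_subset hx (hP.trans (erase_subset x K))) Subset.rfl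

lemma IsMinCounterexample.le_rho_of_ssubset (M : IsMinCounterexample k G U) {R : Finset V}
    (hR : R ⊂ U) (h₂ : 2 ≤ #R) : 2 * ((k : ℤ) - 1) * ((k : ℤ) - 2) ≤ rho k G R := by
  rcases Nat.lt_or_ge #R k with h | h
  · exact two_mul_le_rho_of_card_lt M.four_le h₂ h
  · exact (M.lt_rho_of_ssubset hR h).le

lemma IsColoringOn.colorableOn_of_forall_card_le [NeZero n] {ψ : V → Fin n}
    (hψ : IsColoringOn G (U \ K) ψ)
    (hall : ∀ s ⊆ K, #s ≤ #(s.biUnion fun w => ((nbhd G (U \ K) w).image ψ)ᶜ)) :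
    ColorableOn G U n := by
  obtain ⟨f, hf_inj, hf⟩ := exists_injOn_mem_of_card_le_biUnion _ hall
  have hcross : ∀ u ∈ K, ∀ v ∈ U \ K, G.Adj u v → f u ≠ ψ v := fun u hu v hv huv e =>
    mem_compl.1 (hf u hu) (e ▸ mem_image_of_mem ψ (mem_nbhd.2 ⟨hv, huv⟩))
  exact ⟨_, .piecewise (fun u hu v hv huv e => huv.ne (hf_inj hu hv e)) hψ hcross⟩

section ListSizes

variable {α : Type*} [DecidableEq α] [Fintype α] {I : V → Finset α} {s : Finset V}

lemma card_univ_le_card_biUnion_compl_add {J : Finset α}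
    (hJ : ∀ c, (∀ w ∈ s, c ∈ I w) → c ∈ J) :
    Fintype.card α ≤ #(s.biUnion fun w => (I w)ᶜ) + #J := by
  have hcover : univ ⊆ (s.biUnion fun w => (I w)ᶜ) ∪ J := by
    intro c _
    by_cases h : ∀ w ∈ s, c ∈ I w
    · exact mem_union_right _ (hJ c h)
    · push Not at h
      obtain ⟨w, hw, hcw⟩ := h
      exact mem_union_left _ (mem_biUnion.2 ⟨w, hw, mem_compl.2 hcw⟩)
  exact (card_le_card hcover).trans (card_union_le _ _)

lemma card_le_card_biUnion_compl (hK : #K ≤ Fintype.card α) (hI : ∀ w ∈ K, #(I w) ≤ 2)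
    (hx : x ∈ K) {c : α} (hIx : I x = {c}) (hw₁ : w₁ ∈ K) (hcw₁ : c ∉ I w₁)
    (hw₂ : w₂ ∈ K.erase x) (hw₃ : w₃ ∈ K.erase x) (hne : I w₂ ≠ I w₃) (hs : s ⊆ K) :
    #s ≤ #(s.biUnion fun w => (I w)ᶜ) := by
  rcases s.eq_empty_or_nonempty with rfl | ⟨w, hw⟩
  · simp
  rcases hs.eq_or_ssubset with rfl | hs'
  · have := card_univ_le_card_biUnion_compl_add (I := I) (s := s) (J := ∅) fun d hd => by
      have hdc : d = c := mem_singleton.1 (hIx ▸ hd x hx)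
      exact absurd (hd w₁ hw₁) (hdc ▸ hcw₁)
    simp only [card_empty] at this
    omega
  have hlt := card_lt_card hs'
  by_cases hxs : x ∈ s
  · have := card_univ_le_card_biUnion_compl_add (I := I) (s := s) fun d hd => hd x hxs
    rw [hIx, card_singleton] at this
    omega
  have hs_erase : s ⊆ K.erase x := fun u hu => mem_erase.2 ⟨fun e => hxs (e ▸ hu), hs hu⟩
  rcases hs_erase.eq_or_ssubset with rfl | hs''
  · have hinter : #(I w₂ ∩ I w₃) ≤ 1 := by
      have h₂ := hI w₂ (mem_of_mem_erase hw₂)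
      have h₃ := hI w₃ (mem_of_mem_erase hw₃)
      by_contra! h
      exact hne ((eq_of_subset_of_card_le inter_subset_left (by omega)).symm.trans
        (eq_of_subset_of_card_le inter_subset_right (by omega)))
    have := card_univ_le_card_biUnion_compl_add (I := I) (s := K.erase x) fun d hd =>
      mem_inter.2 ⟨hd w₂ hw₂, hd w₃ hw₃⟩
    omega
  · have := card_univ_le_card_biUnion_compl_add (I := I) (s := s) fun d hd => hd w hw
    have := hI w (hs hw)
    have := card_lt_card hs''
    rw [card_erase_of_mem hx] at this
    omega

end ListSizes

/-- An `n`-clique `K` attached to the rest of `U` as loosely as the degrees allow: `x ∈ K` has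
the single outside neighbor `z`, and every other vertex of `K` has exactly two. -/
structure IsTightClique (n : ℕ) (G : SimpleGraph V) (U K : Finset V) (x z : V) : Prop where
  subset : K ⊆ U
  isNClique : G.IsNClique n K
  mem : x ∈ K
  nbhd_self : nbhd G (U \ K) x = {z}
  deg_eq_two : ∀ w ∈ K.erase x, deg G (U \ K) w = 2

namespace IsTightClique

lemma right_mem (T : IsTightClique n G U K x z) : z ∈ U \ K :=
  nbhd_subset x (T.nbhd_self ▸ mem_singleton_self z)

lemma sdiff_ssubset (T : IsTightClique n G U K x z) : U \ K ⊂ U :=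
  Finset.sdiff_ssubset T.subset ⟨x, T.mem⟩

lemma nbhd_of_subset (T : IsTightClique n G U K x z) (hX : X ⊆ U \ K) :
    nbhd G X x = {z} ∩ X := by
  rw [nbhd_eq_inter hX, T.nbhd_self]

lemma edgePairs_sdiff (T : IsTightClique n G U K x z) :
    edgePairs G K (U \ K) = 2 * (n : ℤ) - 1 := by
  have hn : 1 ≤ n := T.isNClique.card_eq ▸ card_pos.2 ⟨x, T.mem⟩
  rw [edgePairs_eq_sum_deg, ← add_sum_erase K _ T.mem,
    sum_congr rfl fun w hw => by rw [T.deg_eq_two w hw], sum_const, card_erase_of_mem T.mem,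
    T.isNClique.card_eq, deg, T.nbhd_self, card_singleton, nsmul_eq_mul, Nat.cast_pred hn]
  push_cast
  ring

lemma colorableOn [NeZero n] (T : IsTightClique n G U K x z) {ψ : V → Fin n}
    (hψ : IsColoringOn G (U \ K) ψ) (hw₁ : w₁ ∈ K)
    (hzw₁ : ψ z ∉ (nbhd G (U \ K) w₁).image ψ) (hw₂ : w₂ ∈ K.erase x) (hw₃ : w₃ ∈ K.erase x)
    (hne : (nbhd G (U \ K) w₂).image ψ ≠ (nbhd G (U \ K) w₃).image ψ) : ColorableOn G U n := by
  refine hψ.colorableOn_of_forall_card_le fun s hs =>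
    card_le_card_biUnion_compl (by rw [T.isNClique.card_eq, Fintype.card_fin]) ?_ T.mem
      (by rw [T.nbhd_self, image_singleton]) hw₁ hzw₁ hw₂ hw₃ hne hs
  intro w hw
  refine card_image_le.trans ?_
  rcases eq_or_ne w x with rfl | hwx
  · simp [T.nbhd_self]
  · exact (T.deg_eq_two w (mem_erase.2 ⟨hwx, hw⟩)).le

lemma edgePairs_lt_rho (T : IsTightClique (k - 1) G U K x z) (M : IsMinCounterexample k G U)
    (hX : X ⊆ U \ K) (hne : X.Nonempty)
    (hρ : rho k G X ≤ (k : ℤ) * (k - 3) + 2 * ((k : ℤ) - 1) ^ 2) :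
    2 * ((k : ℤ) - 1) * edgePairs G K X < rho k G X := by
  have hk := M.four_le
  have hdisj : Disjoint K X := disjoint_sdiff.mono_right hX
  have hunion := rho_union k (G := G) hdisj
  rw [rho_of_isNClique (by omega) T.isNClique] at hunion
  have hsub : K ∪ X ⊆ U := union_subset T.subset (hX.trans sdiff_subset)
  rcases hsub.eq_or_ssubset with hU | hssub
  · have hXU : X = U \ K := by rw [← hU, union_sdiff_cancel_left hdisj]
    have hlt := M.lt_rho hsub (hne.mono subset_union_right)
    rw [hunion, hXU, T.edgePairs_sdiff, Nat.cast_pred (by omega), ← hXU] at hlt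
    linarith
  · have hcard : k ≤ #(K ∪ X) := by
      rw [card_union_of_disjoint hdisj, T.isNClique.card_eq]
      have := hne.card_pos
      omega
    linarith [M.lt_rho_of_ssubset hssub hcard]

lemma edgePairs_lt_rho_add_rho (T : IsTightClique (k - 1) G U K x z)
    (M : IsMinCounterexample k G U) {W W' : Finset V} (hW : W ⊆ U \ K) (hW' : W' ⊆ U \ K)
    (hinter : 2 ≤ #(W ∩ W'))
    (hρ : rho k G W + rho k G W' ≤
      (k : ℤ) * (k - 3) + 2 * ((k : ℤ) - 1) ^ 2 + 2 * ((k : ℤ) - 1) * ((k : ℤ) - 2)) :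
    2 * ((k : ℤ) - 1) * (edgePairs G K (W ∪ W') + (k - 2)) < rho k G W + rho k G W' := by
  have hsub := rho_union_add_rho_inter_le (k := k) (by have := M.four_le; omega) G W W'
  have hle := M.le_rho_of_ssubset ((inter_subset_left.trans hW).trans_ssubset T.sdiff_ssubset)
    hinter
  have hne : (W ∪ W').Nonempty := (card_pos.1 (by omega : 0 < #(W ∩ W'))).mono
    (inter_subset_left.trans subset_union_left)
  linarith [T.edgePairs_lt_rho M (union_subset hW hW') hne (by linarith)]

lemma colorableOn_of_addEdges [NeZero n] (T : IsTightClique n G U K x z) (hw₁ : w₁ ∈ K.erase x)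
    (hw₂ : w₂ ∈ K.erase x) (hab : a ≠ b) (hN₁ : nbhd G (U \ K) w₁ = {a, b})
    (hz₁ : z ∉ nbhd G (U \ K) w₁) (ha₂ : a ∉ nbhd G (U \ K) w₂)
    (h : ColorableOn
      (addEdges G (insert (z, b) ({a} ×ˢ (nbhd G (U \ K) w₂).erase b))) (U \ K) n) :
    ColorableOn G U n := by
  obtain ⟨ψ, hψ⟩ := h
  have haU : a ∈ U \ K := nbhd_subset (G := G) w₁ (by simp [hN₁])
  have hbU : b ∈ U \ K := nbhd_subset (G := G) w₁ (by simp [hN₁])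
  have hzb : z ≠ b := fun e => hz₁ (by simp [hN₁, e])
  have hE : insert (z, b) ({a} ×ˢ (nbhd G (U \ K) w₂).erase b) ⊆ (U \ K).offDiag := by
    rintro ⟨u, v⟩ huv
    rw [mem_insert, Prod.mk_inj, mem_product, mem_singleton, mem_erase] at huv
    rw [mem_offDiag]
    rcases huv with ⟨rfl, rfl⟩ | ⟨rfl, -, hv⟩
    · exact ⟨T.right_mem, hbU, hzb⟩
    · exact ⟨haU, nbhd_subset _ hv, fun e => ha₂ (e ▸ hv)⟩
  have hψzb : ψ z ≠ ψ b := hψ.ne_of_mem hE (mem_insert_self _ _)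
  have hψa : ∀ t ∈ nbhd G (U \ K) w₂, t ≠ b → ψ a ≠ ψ t := fun t ht htb =>
    hψ.ne_of_mem hE (p := (a, t)) (by simp [ht, htb])
  have himage₁ : (nbhd G (U \ K) w₁).image ψ = {ψ a, ψ b} := by
    rw [hN₁, image_insert, image_singleton]
  have hne : (nbhd G (U \ K) w₁).image ψ ≠ (nbhd G (U \ K) w₂).image ψ := by
    intro e
    obtain ⟨t, ht, hta⟩ := mem_image.1 (e ▸ himage₁ ▸ mem_insert_self (ψ a) _)
    obtain rfl : t = b := by_contra fun htb => hψa t ht htb hta.symm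
    obtain ⟨t', ht', htt'⟩ := exists_mem_ne
      (by have := T.deg_eq_two w₂ hw₂; rw [deg] at this; omega : 1 < #(nbhd G (U \ K) w₂)) t
    have := e ▸ mem_image_of_mem ψ ht'
    rw [himage₁, mem_insert, mem_singleton, hta, or_self] at this
    exact hψa t' ht' htt' this.symm
  by_cases hz : ψ z ∈ (nbhd G (U \ K) w₁).image ψ
  · refine T.colorableOn hψ.of_addEdges (mem_of_mem_erase hw₂) (fun hz₂ => ?_) hw₁ hw₂ hne
    rw [himage₁, mem_insert, mem_singleton, or_iff_left hψzb] at hz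
    obtain ⟨t, ht, htz⟩ := mem_image.1 hz₂
    exact hψa t ht (by rintro rfl; exact hψzb htz.symm) (hz.symm.trans htz.symm)
  · exact T.colorableOn hψ.of_addEdges (mem_of_mem_erase hw₁) hz hw₁ hw₂ hne

lemma card_insert_singleton_product_inter_le (F W : Finset V) :
    #(insert (z, b) ({a} ×ˢ F) ∩ W ×ˢ W) ≤
      #({z} ∩ W) * #({b} ∩ W) + #({a} ∩ W) * #(F ∩ W) := by
  rw [insert_eq, ← singleton_product_singleton, union_inter_distrib_right,
    product_inter_product, product_inter_product, ← card_product, ← card_product]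
  exact card_union_le _ _

lemma exists_rho_le (T : IsTightClique (k - 1) G U K x z) (M : IsMinCounterexample k G U)
    (hw₁ : w₁ ∈ K.erase x) (hw₂ : w₂ ∈ K.erase x) (hab : a ≠ b)
    (hN₁ : nbhd G (U \ K) w₁ = {a, b}) (hz₁ : z ∉ nbhd G (U \ K) w₁)
    (ha₂ : a ∉ nbhd G (U \ K) w₂) :
    ∃ W ⊆ U \ K, W.Nonempty ∧ ∃ i : ℕ, k - 1 ≤ 2 * i ∧
      rho k G W ≤ (k : ℤ) * (k - 3) + 2 * (k - 1) * i ∧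
      i ≤ #({z} ∩ W) * #({b} ∩ W) + #({a} ∩ W) * #((nbhd G (U \ K) w₂).erase b ∩ W) := by
  have : NeZero (k - 1) := ⟨by have := M.four_le; omega⟩
  obtain ⟨W, hW, hne, hρ, hcard⟩ := M.exists_rho_le_of_not_colorableOn_addEdges T.sdiff_ssubset
    fun h => M.not_colorableOn (T.colorableOn_of_addEdges hw₁ hw₂ hab hN₁ hz₁ ha₂ h)
  have hi := card_insert_singleton_product_inter_le (z := z) (b := b) (a := a)
    ((nbhd G (U \ K) w₂).erase b) W
  refine ⟨W, hW, hne, _, hcard fun hW₁ => ?_, hρ, hi⟩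
  obtain ⟨y, rfl⟩ := card_eq_one.1 hW₁
  refine hρ.not_gt ?_
  suffices h : insert (z, b) ({a} ×ˢ (nbhd G (U \ K) w₂).erase b) ∩ {y} ×ˢ {y} = ∅ by
    simpa only [h, card_empty, Nat.cast_zero, mul_zero, add_zero]
      using M.lt_rho (hW.trans sdiff_subset) hne
  have hzb : z ≠ b := fun e => hz₁ (by simp [hN₁, e])
  ext ⟨u, v⟩
  simp only [mem_inter, mem_insert, Prod.mk_inj, mem_product, mem_singleton, mem_erase,
    notMem_empty, iff_false]
  rintro ⟨⟨rfl, rfl⟩ | ⟨rfl, -, hv⟩, rfl, h⟩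
  · exact hzb h.symm
  · exact ha₂ (h ▸ hv)

lemma card_inter_le_edgePairs (T : IsTightClique n G U K x z) (hX : X ⊆ U \ K)
    (hw₁ : w₁ ∈ K.erase x) (hw₂ : w₂ ∈ K.erase x) (hw₁₂ : w₁ ≠ w₂) (hab : a ≠ b)
    (hN₁ : nbhd G (U \ K) w₁ = {a, b}) :
    (#({z} ∩ X) + (#({a} ∩ X) + #({b} ∩ X) + #(nbhd G (U \ K) w₂ ∩ X)) : ℤ) ≤
      edgePairs G K X := by
  have h := deg_add_sum_deg_le_edgePairs T.mem
    (insert_subset hw₁ (singleton_subset_iff.2 hw₂)) X (G := G)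
  have hdisj : Disjoint ({a} ∩ X) ({b} ∩ X) :=
    (disjoint_singleton.2 hab).mono inter_subset_left inter_subset_left
  rwa [sum_pair hw₁₂, deg, deg, deg, T.nbhd_of_subset hX, nbhd_eq_inter hX w₁, hN₁, insert_eq,
    union_inter_distrib_right, card_union_of_disjoint hdisj, nbhd_eq_inter hX w₂,
    Nat.cast_add] at h

lemma exists_mem_rho_le (T : IsTightClique (k - 1) G U K x z) (M : IsMinCounterexample k G U)
    (hw₁ : w₁ ∈ K.erase x) (hw₂ : w₂ ∈ K.erase x) (hab : a ≠ b)
    (hN₁ : nbhd G (U \ K) w₁ = {a, b}) (hz₁ : z ∉ nbhd G (U \ K) w₁)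
    (ha₂ : a ∉ nbhd G (U \ K) w₂) :
    ∃ W ⊆ U \ K, a ∈ W ∧ ∃ i : ℕ, k - 1 ≤ 2 * i ∧ i ≤ 3 ∧
      rho k G W ≤ (k : ℤ) * (k - 3) + 2 * (k - 1) * i ∧
      2 * ((k : ℤ) - 1) * edgePairs G K W < rho k G W ∧
      i ≤ #({z} ∩ W) * #({b} ∩ W) + #((nbhd G (U \ K) w₂).erase b ∩ W) := by
  have hk := M.four_le
  obtain ⟨W, hW, hne, i, hki, hρ, hi⟩ := T.exists_rho_le M hw₁ hw₂ hab hN₁ hz₁ ha₂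
  have hzb : #({z} ∩ W) * #({b} ∩ W) ≤ 1 :=
    Nat.mul_le_mul (card_le_card inter_subset_left : _ ≤ 1) (card_le_card inter_subset_left)
  have hN₂ : #((nbhd G (U \ K) w₂).erase b ∩ W) ≤ 2 :=
    T.deg_eq_two w₂ hw₂ ▸ card_le_card (inter_subset_left.trans (erase_subset _ _))
  have haW : a ∈ W := by
    by_contra haW
    rw [singleton_inter_of_notMem haW, card_empty] at hi
    omega
  rw [singleton_inter_of_mem haW, card_singleton, one_mul] at hi
  have hlt := T.edgePairs_lt_rho M hW hne (by
    have : (i : ℤ) ≤ 3 := by omega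
    nlinarith)
  exact ⟨W, hW, haW, i, hki, by omega, hρ, hlt, hi⟩

-- The bounds are the values of `k(k-3) + 2(k-1)i` at `(k, i) = (5, 2)` and `(7, 3)`, the only pairs
-- that the inequalities of the previous lemma allow.
lemma exists_rho_le_of_notMem (T : IsTightClique (k - 1) G U K x z)
    (M : IsMinCounterexample k G U) (hw₁ : w₁ ∈ K.erase x) (hw₂ : w₂ ∈ K.erase x) (hab : a ≠ b)
    (hN₁ : nbhd G (U \ K) w₁ = {a, b}) (hz₁ : z ∉ nbhd G (U \ K) w₁)
    (ha₂ : a ∉ nbhd G (U \ K) w₂) :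
    ∃ W ⊆ U \ K, a ∈ W ∧ nbhd G (U \ K) w₂ ⊆ W ∧
      (k = 5 ∧ b ∉ nbhd G (U \ K) w₂ ∧ rho k G W ≤ 26 ∨
        k = 7 ∧ b ∈ W ∧ z ∈ W ∧ rho k G W ≤ 64 ∧ edgePairs G K W ≤ 5) := by
  have hk := M.four_le
  have hw₁₂ : w₁ ≠ w₂ := by rintro rfl; exact ha₂ (by simp [hN₁])
  obtain ⟨W, hW, haW, i, hki, hi₃, hρ, hlt, hi⟩ :=
    T.exists_mem_rho_le M hw₁ hw₂ hab hN₁ hz₁ ha₂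
  have he := T.card_inter_le_edgePairs hW hw₁ hw₂ hw₁₂ hab hN₁
  have hdeg := T.deg_eq_two w₂ hw₂
  rw [deg] at hdeg
  rw [singleton_inter_of_mem haW, card_singleton] at he
  set N₂ := nbhd G (U \ K) w₂
  have hm : #(N₂.erase b ∩ W) ≤ #(N₂ ∩ W) :=
    card_le_card (inter_subset_inter_right (erase_subset b N₂))
  have hNW : 2 ≤ #(N₂ ∩ W) → N₂ ⊆ W := fun h =>
    inter_eq_left.1 (eq_of_subset_of_card_le inter_subset_left (by omega))
  have hn : #(N₂ ∩ W) ≤ 2 := hdeg ▸ card_le_card inter_subset_left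
  refine ⟨W, hW, haW, ?_⟩
  by_cases hzbW : z ∈ W ∧ b ∈ W
  · simp only [singleton_inter_of_mem hzbW.1, singleton_inter_of_mem hzbW.2,
      card_singleton] at hi he
    have hik : (k : ℤ) - 1 ≤ 2 * i := by omega
    have hie : (i : ℤ) + 2 ≤ edgePairs G K W := by push_cast at he; omega
    have hk₇ : k = 7 := by
      have : (k : ℤ) ≤ 7 := by omega
      have : 6 < (k : ℤ) := by nlinarith
      omega
    have hi₃ : i = 3 := by omega
    subst hk₇ hi₃
    exact ⟨hNW (by omega), .inr ⟨rfl, hzbW.2, hzbW.1, by norm_num at hρ; omega, by omega⟩⟩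
  · have hzb₀ : #({z} ∩ W) * #({b} ∩ W) = 0 := by
      rcases not_and_or.1 hzbW with h | h <;> simp [singleton_inter_of_notMem h]
    have hi₂ : i = 2 := by omega
    have : 3 ≤ edgePairs G K W := by push_cast at he; omega
    have hk₅ : k = 5 := by
      have : (k : ℤ) ≤ 5 := by omega
      have : 4 < (k : ℤ) := by subst hi₂; push_cast at hρ; nlinarith
      omega
    subst hk₅ hi₂
    refine ⟨hNW (by omega), .inl ⟨rfl, fun hbN => ?_, by norm_num at hρ; omega⟩⟩
    have := card_le_card (inter_subset_left : N₂.erase b ∩ W ⊆ N₂.erase b)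
    rw [card_erase_of_mem hbN] at this
    omega

lemma deg_eq_two_of_subset (T : IsTightClique n G U K x z) (hX : X ⊆ U \ K)
    (hw : w ∈ K.erase x) (h : nbhd G (U \ K) w ⊆ X) : deg G X w = 2 := by
  rw [deg, nbhd_eq_inter hX, inter_eq_left.2 h]
  exact T.deg_eq_two w hw

lemma false_of_five (T : IsTightClique 4 G U K x z) (M : IsMinCounterexample 5 G U)
    (hw₁ : w₁ ∈ K.erase x) (hw₂ : w₂ ∈ K.erase x) (hw₁₂ : w₁ ≠ w₂)
    (hN₁ : nbhd G (U \ K) w₁ = {a, b}) {W W' : Finset V} (hW : W ⊆ U \ K) (hW' : W' ⊆ U \ K)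
    (ha : a ∈ W) (hb : b ∈ W') (h₂ : nbhd G (U \ K) w₂ ⊆ W) (h₂' : nbhd G (U \ K) w₂ ⊆ W')
    (hρ : rho 5 G W ≤ 26) (hρ' : rho 5 G W' ≤ 26) : False := by
  have hX := union_subset hW hW'
  have hN₁X : nbhd G (U \ K) w₁ ⊆ W ∪ W' := by
    rw [hN₁, insert_subset_iff, singleton_subset_iff]
    exact ⟨mem_union_left _ ha, mem_union_right _ hb⟩
  have he := deg_add_sum_deg_le_edgePairs T.mem
    (insert_subset hw₁ (singleton_subset_iff.2 hw₂)) (W ∪ W') (G := G)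
  rw [sum_pair hw₁₂, T.deg_eq_two_of_subset hX hw₁ hN₁X,
    T.deg_eq_two_of_subset hX hw₂ (h₂.trans subset_union_left)] at he
  have hinter : 2 ≤ #(W ∩ W') := T.deg_eq_two w₂ hw₂ ▸ card_le_card (subset_inter h₂ h₂')
  have hlt := T.edgePairs_lt_rho_add_rho M hW hW' hinter (by norm_num; linarith)
  push_cast at hlt he
  linarith

lemma false_of_seven (T : IsTightClique 6 G U K x z) (M : IsMinCounterexample 7 G U)
    (hw₁ : w₁ ∈ K.erase x) (hw₂ : w₂ ∈ K.erase x) (hw₃ : w₃ ∈ K.erase x) (hw₁₂ : w₁ ≠ w₂)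
    (hw₁₃ : w₁ ≠ w₃) (hw₂₃ : w₂ ≠ w₃) {W W' : Finset V} (hW : W ⊆ U \ K) (hW' : W' ⊆ U \ K)
    (hz : z ∈ W) (h₁ : nbhd G (U \ K) w₁ ⊆ W) (h₁' : nbhd G (U \ K) w₁ ⊆ W')
    (h₂ : nbhd G (U \ K) w₂ ⊆ W) (h₃ : nbhd G (U \ K) w₃ ⊆ W')
    (hρ : rho 7 G W ≤ 64) (hρ' : rho 7 G W' ≤ 64) : False := by
  have hX := union_subset hW hW'
  have he := deg_add_sum_deg_le_edgePairs T.mem (P := {w₁, w₂, w₃})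
    (by simp only [insert_subset_iff, singleton_subset_iff, hw₁, hw₂, hw₃, and_self]) (W ∪ W')
    (G := G)
  rw [sum_insert (by simp [hw₁₂, hw₁₃]), sum_pair hw₂₃,
    T.deg_eq_two_of_subset hX hw₁ (h₁.trans subset_union_left),
    T.deg_eq_two_of_subset hX hw₂ (h₂.trans subset_union_left),
    T.deg_eq_two_of_subset hX hw₃ (h₃.trans subset_union_right), deg, T.nbhd_of_subset hX,
    singleton_inter_of_mem (mem_union_left _ hz), card_singleton] at he
  have hinter : 2 ≤ #(W ∩ W') := T.deg_eq_two w₁ hw₁ ▸ card_le_card (subset_inter h₁ h₁')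
  have hlt := T.edgePairs_lt_rho_add_rho M hW hW' hinter (by norm_num; linarith)
  push_cast at hlt he
  linarith

lemma disjoint_nbhd_of_edgePairs_le (T : IsTightClique n G U K x z) (hw₁ : w₁ ∈ K.erase x)
    (hw₂ : w₂ ∈ K.erase x) (hw₃ : w₃ ∈ K.erase x) (hw₁₂ : w₁ ≠ w₂) (hw₁₃ : w₁ ≠ w₃)
    (hw₂₃ : w₂ ≠ w₃) (hX : X ⊆ U \ K) (hz : z ∈ X) (h₁ : nbhd G (U \ K) w₁ ⊆ X)
    (h₂ : nbhd G (U \ K) w₂ ⊆ X) (he : edgePairs G K X ≤ 5) :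
    Disjoint (nbhd G (U \ K) w₃) X := by
  have h := deg_add_sum_deg_le_edgePairs T.mem (P := {w₁, w₂, w₃})
    (by simp only [insert_subset_iff, singleton_subset_iff, hw₁, hw₂, hw₃, and_self]) X
    (G := G)
  rw [sum_insert (by simp [hw₁₂, hw₁₃]), sum_pair hw₂₃, T.deg_eq_two_of_subset hX hw₁ h₁,
    T.deg_eq_two_of_subset hX hw₂ h₂, deg, T.nbhd_of_subset hX, singleton_inter_of_mem hz,
    card_singleton, deg, nbhd_eq_inter hX] at h
  rw [disjoint_iff_inter_eq_empty, ← card_eq_zero]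
  push_cast at h
  omega

lemma nbhd_eq (T : IsTightClique (k - 1) G U K x z) (M : IsMinCounterexample k G U)
    (hw₁ : w₁ ∈ K.erase x) (hw₂ : w₂ ∈ K.erase x) (hz₁ : z ∉ nbhd G (U \ K) w₁) :
    nbhd G (U \ K) w₂ = nbhd G (U \ K) w₁ := by
  have hdeg₁ := T.deg_eq_two w₁ hw₁
  by_contra hne
  have hw₁₂ : w₁ ≠ w₂ := by rintro rfl; exact hne rfl
  obtain ⟨a, ha₁, ha₂⟩ : ∃ a ∈ nbhd G (U \ K) w₁, a ∉ nbhd G (U \ K) w₂ := by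
    by_contra! h
    refine hne (eq_of_subset_of_card_le h ?_).symm
    exact (T.deg_eq_two w₂ hw₂).le.trans hdeg₁.ge
  obtain ⟨b, hab, hN₁⟩ : ∃ b, a ≠ b ∧ nbhd G (U \ K) w₁ = {a, b} := by
    obtain ⟨c, d, hcd, hN₁⟩ := card_eq_two.1 hdeg₁
    rw [hN₁, mem_insert, mem_singleton] at ha₁
    rcases ha₁ with rfl | rfl
    · exact ⟨d, hcd, hN₁⟩
    · exact ⟨c, hcd.symm, hN₁.trans (pair_comm c a)⟩
  obtain ⟨W, hW, haW, h₂W, ⟨rfl, hb₂, hρ⟩ | ⟨rfl, hbW, hzW, hρ, he⟩⟩ :=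
    T.exists_rho_le_of_notMem M hw₁ hw₂ hab hN₁ hz₁ ha₂
  · obtain ⟨W', hW', hbW', h₂W', ⟨-, -, hρ'⟩ | ⟨h, -⟩⟩ :=
      T.exists_rho_le_of_notMem M hw₁ hw₂ hab.symm (hN₁.trans (pair_comm a b)) hz₁ hb₂
    · exact T.false_of_five M hw₁ hw₂ hw₁₂ hN₁ hW hW' haW hbW' h₂W h₂W' hρ hρ'
    · omega
  · have hN₁W {W : Finset V} (ha : a ∈ W) (hb : b ∈ W) : nbhd G (U \ K) w₁ ⊆ W :=
      hN₁ ▸ insert_subset ha (singleton_subset_iff.2 hb)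
    obtain ⟨w₃, hw₃, hw₃'⟩ : ∃ w₃ ∈ K.erase x, w₃ ∉ ({w₁, w₂} : Finset V) := by
      refine exists_mem_notMem_of_card_lt_card ?_
      rw [card_erase_of_mem T.mem, T.isNClique.card_eq, card_pair hw₁₂]
      norm_num
    rw [mem_insert, mem_singleton, not_or] at hw₃'
    have hdisj := T.disjoint_nbhd_of_edgePairs_le hw₁ hw₂ hw₃ hw₁₂ (Ne.symm hw₃'.1)
      (Ne.symm hw₃'.2) hW hzW (hN₁W haW hbW) h₂W he
    obtain ⟨W', hW', haW', h₃W', ⟨h, -⟩ | ⟨-, hbW', -, hρ', -⟩⟩ :=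
      T.exists_rho_le_of_notMem M hw₁ hw₃ hab hN₁ hz₁ fun h => Finset.disjoint_left.1 hdisj h haW
    · omega
    · exact T.false_of_seven M hw₁ hw₂ hw₃ hw₁₂ (Ne.symm hw₃'.1) (Ne.symm hw₃'.2) hW hW' hzW
        (hN₁W haW hbW) (hN₁W haW' hbW') h₂W h₃W' hρ hρ'

end IsTightClique

section Tripod

variable {Q : Finset V} {p q : V}

/-- A `(k - 2)`-clique `Q` all of whose vertices have exactly the outside neighbors `x`, `p`
and `q`, where the only neighbor of `x` outside `Q` is `z`. -/
structure IsTripod (k : ℕ) (G : SimpleGraph V) (U Q : Finset V) (x p q z : V) : Prop where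
  subset : Q ⊆ U
  isNClique : G.IsNClique (k - 2) Q
  nbhd_of_mem : ∀ w ∈ Q, nbhd G (U \ Q) w = {x, p, q}
  nbhd_self : nbhd G (U \ Q) x = {z}
  ne_pq : p ≠ q
  ne_xp : x ≠ p
  ne_xq : x ≠ q
  ne_zp : z ≠ p
  ne_zq : z ≠ q

lemma IsColoringOn.of_rewire {α : Type*} {c : V → α} {v : V} {D : Finset V} (hv : v ∉ D)
    (hvU : v ∈ U) (hD : nbhd G U v ⊆ D) (h : IsColoringOn (rewire G v D) U c) :
    IsColoringOn G U c := by
  intro a ha b hb hab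
  by_cases hav : a = v
  · subst hav
    exact h a ha b hb ((rewire_adj_self hv).2 (hD (mem_nbhd.2 ⟨hb, hab⟩)))
  by_cases hbv : b = v
  · subst hbv
    exact (h b hb a ha ((rewire_adj_self hv).2 (hD (mem_nbhd.2 ⟨ha, hab.symm⟩)))).symm
  · exact h a ha b hb ((rewire_adj_of_ne hav hbv).2 hab)

/-- `G` with the edges at `p` inside `W` replaced by edges to `z` and to the neighbors of `p` or
`q`: on `W` not containing `q`, this identifies `q` with `p` and joins the result to `z`. -/
noncomputable def mergeNeighbors (G : SimpleGraph V) (W : Finset V) (p q z : V) : SimpleGraph V :=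
  rewire G p (insert z (nbhd G W p ∪ nbhd G W q))

lemma notMem_insert_nbhd_union (hzp : z ≠ p) (hpq : ¬ G.Adj p q) (W : Finset V) :
    p ∉ insert z (nbhd G W p ∪ nbhd G W q) := by
  simp only [mem_insert, mem_union, mem_nbhd, not_or, not_and]
  exact ⟨hzp.symm, fun _ => G.irrefl, fun _ h => hpq h.symm⟩

lemma deg_mergeNeighbors_le (hpq : p ≠ q) (hzp : z ≠ p) (hadj : ¬ G.Adj p q) (W X : Finset V) :
    (deg (mergeNeighbors G W p q z) X p : ℤ) ≤ edgePairs G X {p, q} + 1 := by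
  have hle : deg (mergeNeighbors G W p q z) X p ≤ deg G X p + deg G X q + 1 := by
    rw [mergeNeighbors, deg, nbhd_rewire_self (notMem_insert_nbhd_union hzp hadj W)]
    refine (card_le_card (t := insert z (nbhd G X p ∪ nbhd G X q)) fun u hu => ?_).trans
      ((card_insert_le _ _).trans (Nat.add_le_add_right (card_union_le _ _) 1))
    simp only [mem_inter, mem_insert, mem_union, mem_nbhd] at hu ⊢
    tauto
  rw [edgePairs_comm, edgePairs_eq_sum_deg, sum_pair hpq]
  exact_mod_cast hle

namespace IsTripod

lemma subset_sdiff (T : IsTripod k G U Q x p q z) (hk : 3 ≤ k) : {x, p, q} ⊆ U \ Q := by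
  obtain ⟨w, hw⟩ : Q.Nonempty := card_pos.1 (by rw [T.isNClique.card_eq]; omega)
  exact T.nbhd_of_mem w hw ▸ nbhd_subset w

lemma adj_left (T : IsTripod k G U Q x p q z) (hw : w ∈ Q) : G.Adj w p :=
  (mem_nbhd.1 (T.nbhd_of_mem w hw ▸ by simp : p ∈ nbhd G (U \ Q) w)).2

lemma adj_right (T : IsTripod k G U Q x p q z) (hw : w ∈ Q) : G.Adj w q :=
  (mem_nbhd.1 (T.nbhd_of_mem w hw ▸ by simp : q ∈ nbhd G (U \ Q) w)).2

lemma not_adj (T : IsTripod k G U Q x p q z) (M : IsMinCounterexample k G U) :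
    ¬ G.Adj p q := by
  intro hpq
  have hk := M.four_le
  have hsub := T.subset_sdiff (by omega)
  simp only [insert_subset_iff, singleton_subset_iff, mem_sdiff] at hsub
  have hclique : G.IsNClique (k - 2 + 1 + 1) (insert p (insert q Q)) := by
    refine (T.isNClique.insert fun w hw => (T.adj_right hw).symm).insert fun w hw => ?_
    rcases mem_insert.1 hw with rfl | hw
    · exact hpq
    · exact (T.adj_left hw).symm
  have := M.card_le_of_isClique
    (insert_subset hsub.2.1.1 (insert_subset hsub.2.2.1 T.subset)) hclique.isClique
  rw [hclique.card_eq] at this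
  omega

lemma rho_insert_insert (T : IsTripod k G U Q x p q z) (hk : 3 ≤ k) (hpq : ¬ G.Adj p q) :
    rho k G (insert p (insert q Q)) = ((k : ℤ) + 1) * (k - 2) := by
  have hsub := T.subset_sdiff hk
  simp only [insert_subset_iff, singleton_subset_iff, mem_sdiff] at hsub
  have hpQ : p ∉ insert q Q := by simp [T.ne_pq, hsub.2.1.2]
  have hp : nbhd G (insert q Q) p = Q := by
    ext u
    rw [mem_nbhd, mem_insert]
    refine ⟨?_, fun h => ⟨.inr h, (T.adj_left h).symm⟩⟩
    rintro ⟨rfl | h, hu⟩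
    exacts [absurd hu hpq, h]
  have hq : nbhd G Q q = Q := by
    ext u
    exact ⟨fun h => (mem_nbhd.1 h).1, fun h => mem_nbhd.2 ⟨h, (T.adj_right h).symm⟩⟩
  rw [rho_insert k hpQ, rho_insert k hsub.2.2.2, rho_of_isClique k T.isNClique.isClique, deg,
    deg, hp, hq, T.isNClique.card_eq]
  push_cast [show 2 ≤ k by omega]
  ring

-- Give `x` and `q` the color of `p`; then `Q` only has to avoid that single color.
lemma colorableOn (T : IsTripod k G U Q x p q z) (hk : 3 ≤ k) {ψ : V → Fin (k - 1)}
    (hψ : IsColoringOn G ((U \ Q) \ {x, q}) ψ) (hz : ψ p ≠ ψ z)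
    (hq : ∀ u ∈ nbhd G ((U \ Q) \ {x, q}) q, ψ p ≠ ψ u) : ColorableOn G U (k - 1) := by
  have : NeZero (k - 1) := ⟨by omega⟩
  obtain ⟨f, hf_inj, hf⟩ := exists_injOn_mapsTo (S := Q) (T := univ.erase (ψ p)) (by
    rw [T.isNClique.card_eq, card_erase_of_mem (mem_univ _), card_univ, Fintype.card_fin]
    omega)
  have hx : ∀ u ∈ U \ Q, G.Adj x u → u = z := fun u hu hxu =>
    mem_singleton.1 (T.nbhd_self ▸ mem_nbhd.2 ⟨hu, hxu⟩)
  have hsub := T.subset_sdiff hk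
  simp only [insert_subset_iff, singleton_subset_iff] at hsub
  have hxq : ¬ G.Adj x q := fun h => T.ne_zq (hx q hsub.2.2 h).symm
  have houter : IsColoringOn G (U \ Q) (({x, q} : Finset V).piecewise (fun _ => ψ p) ψ) := by
    refine .piecewise ?_ hψ ?_
    · intro u hu v hv huv
      simp only [mem_insert, mem_singleton] at hu hv
      rcases hu with rfl | rfl <;> rcases hv with rfl | rfl
      exacts [absurd rfl huv.ne, absurd huv hxq, absurd huv.symm hxq, absurd rfl huv.ne]
    · intro u hu v hv huv
      rcases mem_insert.1 hu with rfl | hu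
      · exact hx v (mem_sdiff.1 hv).1 huv ▸ hz
      · rw [mem_singleton.1 hu] at huv
        exact hq v (mem_nbhd.2 ⟨hv, huv⟩)
  refine ⟨_, .piecewise (fun u hu v hv huv e => huv.ne (hf_inj hu hv e)) houter ?_⟩
  intro w hw u hu hwu
  have hmem : u ∈ ({x, p, q} : Finset V) := T.nbhd_of_mem w hw ▸ mem_nbhd.2 ⟨hu, hwu⟩
  have hcolor : ({x, q} : Finset V).piecewise (fun _ => ψ p) ψ u = ψ p := by
    simp only [mem_insert, mem_singleton] at hmem
    rcases hmem with rfl | rfl | rfl <;> simp [Finset.piecewise, T.ne_pq, T.ne_xp.symm]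
  rw [hcolor]
  exact ne_of_mem_erase (hf w hw)

lemma mem_inner (T : IsTripod k G U Q x p q z) (hk : 3 ≤ k) :
    p ∈ (U \ Q) \ {x, q} ∧ z ∈ (U \ Q) \ {x, q} := by
  have hsub := T.subset_sdiff hk
  simp only [insert_subset_iff, singleton_subset_iff] at hsub
  have hz := mem_nbhd.1 (T.nbhd_self ▸ mem_singleton_self z)
  simp only [mem_sdiff (s := U \ Q), mem_insert, mem_singleton, not_or]
  exact ⟨⟨hsub.2.1, T.ne_xp.symm, T.ne_pq⟩, hz.1, hz.2.ne', T.ne_zq⟩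

lemma not_colorableOn_mergeNeighbors (T : IsTripod k G U Q x p q z)
    (M : IsMinCounterexample k G U) :
    ¬ ColorableOn (mergeNeighbors G ((U \ Q) \ {x, q}) p q z) ((U \ Q) \ {x, q}) (k - 1) := by
  rintro ⟨ψ, hψ⟩
  have hk : 3 ≤ k := by linarith [M.four_le]
  have hpD := notMem_insert_nbhd_union T.ne_zp (T.not_adj M) ((U \ Q) \ {x, q})
  obtain ⟨hp, hz⟩ := T.mem_inner hk
  refine M.not_colorableOn (T.colorableOn hk (hψ.of_rewire hpD hp fun u hu => ?_)
    (hψ p hp z hz ((rewire_adj_self hpD).2 (mem_insert_self _ _))) fun u hu => ?_)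
  · exact mem_insert_of_mem (mem_union_left _ hu)
  · exact hψ p hp u (nbhd_subset _ hu)
      ((rewire_adj_self hpD).2 (mem_insert_of_mem (mem_union_right _ hu)))

lemma lt_rho_of_subset (T : IsTripod k G U Q x p q z) (M : IsMinCounterexample k G U)
    (hX : X ⊆ (U \ Q) \ {x, q}) (hpX : p ∉ X) :
    2 * ((k : ℤ) - 1) * (k - 2) + 2 * ((k : ℤ) - 1) * edgePairs G X {p, q} <
      rho k G X + ((k : ℤ) + 1) * (k - 2) := by
  have hk : 3 ≤ k := by linarith [M.four_le]
  have hsub := T.subset_sdiff hk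
  simp only [insert_subset_iff, singleton_subset_iff, mem_sdiff] at hsub
  set S := insert p (insert q Q) with hS
  have hXU : X ⊆ U := hX.trans (sdiff_subset.trans sdiff_subset)
  have hmem : ∀ u ∈ X, u ∉ Q ∧ u ≠ x ∧ u ≠ q := fun u hu => by
    simpa [hXU hu] using hX hu
  have hdisj : Disjoint X S := Finset.disjoint_left.2 fun u hu huS => by
    simp only [hS, mem_insert] at huS
    rcases huS with rfl | rfl | huQ
    exacts [hpX hu, (hmem _ hu).2.2 rfl, (hmem u hu).1 huQ]
  have hssub : X ∪ S ⊂ U := by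
    refine (ssubset_iff_of_subset (union_subset hXU ?_)).2 ⟨x, hsub.1.1, fun hx => ?_⟩
    · exact insert_subset hsub.2.1.1 (insert_subset hsub.2.2.1 T.subset)
    · simp only [hS, mem_union, mem_insert] at hx
      rcases hx with hx | hx | hx | hx
      exacts [(hmem x hx).2.1 rfl, T.ne_xp hx, T.ne_xq hx, hsub.1.2 hx]
  have hcard : k ≤ #(X ∪ S) := by
    refine le_trans (le_of_eq ?_) (card_le_card subset_union_right)
    rw [hS, card_insert_of_notMem (by simp [T.ne_pq, hsub.2.1.2]),
      card_insert_of_notMem hsub.2.2.2, T.isNClique.card_eq]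
    omega
  have hlt := M.lt_rho_of_ssubset hssub hcard
  rw [rho_union k hdisj, T.rho_insert_insert hk (T.not_adj M)] at hlt
  have hmono : edgePairs G X {p, q} ≤ edgePairs G X S :=
    edgePairs_mono subset_rfl (by simp [hS, insert_subset_iff])
  have : (4 : ℤ) ≤ k := M.four_le_cast
  nlinarith

lemma false (T : IsTripod k G U Q x p q z) (M : IsMinCounterexample k G U) : False := by
  have hU' : (U \ Q) \ {x, q} ⊂ U := by
    have hx := T.subset_sdiff (by linarith [M.four_le]) (mem_insert_self x _)
    exact (ssubset_iff_of_subset (sdiff_subset.trans sdiff_subset)).2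
      ⟨x, (mem_sdiff.1 hx).1, by simp⟩
  obtain ⟨W, hW, hne, hρ⟩ :=
    M.exists_rho_le_of_card_lt (card_lt_card hU') (T.not_colorableOn_mergeNeighbors M)
  have hpW : p ∈ W := by
    by_contra hp
    exact (M.lt_rho (hW.trans hU'.subset) hne).not_ge ((rho_rewire_of_notMem k hp).ge.trans hρ)
  obtain ⟨X, hpX, rfl⟩ : ∃ X, p ∉ X ∧ insert p X = W :=
    ⟨W.erase p, notMem_erase _ _, insert_erase hpW⟩
  have hlt := T.lt_rho_of_subset M ((subset_insert _ _).trans hW) hpX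
  rw [rho_insert k hpX, mergeNeighbors, rho_rewire_of_notMem k hpX, ← mergeNeighbors] at hρ
  have hdeg := deg_mergeNeighbors_le T.ne_pq T.ne_zp (T.not_adj M) ((U \ Q) \ {x, q}) X
  have : (4 : ℤ) ≤ k := M.four_le_cast
  nlinarith

end IsTripod

end Tripod

lemma IsTightClique.false (T : IsTightClique (k - 1) G U K x z) (M : IsMinCounterexample k G U) :
    False := by
  have := M.four_le
  obtain ⟨w₁, hw₁, hz₁⟩ : ∃ w ∈ K.erase x, z ∉ nbhd G (U \ K) w := by
    by_contra! hz
    have hclique : G.IsNClique (k - 1 + 1) (insert z K) := T.isNClique.insert fun w hw => by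
      by_cases hwx : w = x
      · exact hwx ▸ (mem_nbhd.1 (T.nbhd_self ▸ mem_singleton_self z)).2.symm
      · exact (mem_nbhd.1 (hz w (mem_erase.2 ⟨hwx, hw⟩))).2.symm
    have := M.card_le_of_isClique
      (insert_subset (mem_sdiff.1 T.right_mem).1 T.subset) hclique.isClique
    rw [hclique.card_eq] at this
    omega
  obtain ⟨p, q, hpq, hN₁⟩ := card_eq_two.1 (T.deg_eq_two w₁ hw₁)
  have hsdiff : U \ K.erase x = insert x (U \ K) := sdiff_erase (T.subset T.mem)
  have hsub : {p, q} ⊆ U \ K := hN₁ ▸ nbhd_subset w₁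
  simp only [insert_subset_iff, singleton_subset_iff, mem_sdiff] at hsub
  rw [hN₁, mem_insert, mem_singleton, not_or] at hz₁
  have htripod : IsTripod k G U (K.erase x) x p q z :=
    { subset := (erase_subset _ _).trans T.subset
      isNClique := T.isNClique.erase_of_mem T.mem
      nbhd_of_mem := fun w hw => by
        rw [← hN₁, ← T.nbhd_eq M hw₁ hw (by simp [hN₁, hz₁]), hsdiff]
        ext u
        simp only [mem_nbhd, mem_insert]
        have := T.isNClique.isClique (mem_of_mem_erase hw) T.mem (ne_of_mem_erase hw)
        grind
      nbhd_self := by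
        rw [← T.nbhd_self, hsdiff]
        ext u
        simp only [mem_nbhd, mem_insert]
        grind [G.irrefl]
      ne_pq := hpq
      ne_xp := fun h => hsub.1.2 (h ▸ T.mem)
      ne_xq := fun h => hsub.2.2 (h ▸ T.mem)
      ne_zp := hz₁.1
      ne_zq := hz₁.2 }
  exact htripod.false M

lemma IsMinCounterexample.exists_deg_ne (M : IsMinCounterexample k G U) (hx : x ∈ U)
    (hz : z ∈ nbhd G U x) (hc : G.IsNClique (k - 1) ((closedNbhd G U x).erase z)) :
    ∃ w ∈ ((closedNbhd G U x).erase z).erase x, deg G U w ≠ k := by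
  by_contra! hdeg
  have := M.four_le
  have hsub : (closedNbhd G U x).erase z ⊆ U := (erase_subset _ _).trans (closedNbhd_subset hx)
  refine IsTightClique.false (K := (closedNbhd G U x).erase z) (x := x) (z := z) ⟨hsub, hc, ?_,
    ?_, fun w hw => ?_⟩ M
  · exact mem_erase.2 ⟨(mem_nbhd.1 hz).2.ne, self_mem_closedNbhd⟩
  · ext u
    rw [mem_nbhd] at hz
    simp only [mem_nbhd, mem_sdiff, mem_erase, mem_closedNbhd, mem_singleton]
    grind
  · have := deg_eq_add_deg_sdiff hc hsub (mem_of_mem_erase hw)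
    have := hdeg w hw
    omega

end TightClique

section Share

variable {d s : ℕ}

/-- The charge that a vertex of degree `d` sends along each incident edge: it spreads
`(k - 1) * d - (k + 1) * (k - 2)`, minus the contribution of the vertex to the potential, evenly
over the edges. -/
noncomputable def share (k d : ℕ) : ℚ := ((k : ℚ) - 1) - ((k : ℚ) + 1) * ((k : ℚ) - 2) / d

lemma natCast_mul_share (hd : d ≠ 0) :
    (d : ℚ) * share k d = ((k : ℚ) - 1) * d - ((k : ℚ) + 1) * ((k : ℚ) - 2) := by
  rw [share]
  field_simp

lemma one_le_share (hk : 2 ≤ k) (hd : k + 1 ≤ d) : 1 ≤ share k d := by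
  have : (2 : ℚ) ≤ k := by exact_mod_cast hk
  have : (k : ℚ) + 1 ≤ d := by exact_mod_cast hd
  refine le_of_mul_le_mul_left ?_ (show (0 : ℚ) < d by linarith)
  rw [natCast_mul_share (by omega)]
  nlinarith

-- For `d = k - 1 + s` the difference of the two sides, times `d`, is
-- `(k - 1) * (s - 2) * (k - 3 - s)`.
lemma le_mul_share (hs : 2 ≤ s) (hsk : s + 3 ≤ k) (hd : k - 1 + s ≤ d) :
    (k : ℚ) - 3 ≤ ((k : ℚ) - 1 - s) * share k d := by
  have hs' : (0 : ℚ) ≤ s - 2 := by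
    have : (2 : ℚ) ≤ s := by exact_mod_cast hs
    linarith
  have hsk' : (0 : ℚ) ≤ k - 3 - s := by
    have : (s : ℚ) + 3 ≤ k := by exact_mod_cast hsk
    linarith
  have hd' : (0 : ℚ) ≤ d - (k - 1 + s) := by
    have : (k : ℚ) + s ≤ d + 1 := by exact_mod_cast (by omega : k + s ≤ d + 1)
    linarith
  have hslope : (0 : ℚ) ≤ (k - 1 - s) * (k - 1) - (k - 3) := by nlinarith
  refine le_of_mul_le_mul_left ?_ (show (0 : ℚ) < d by linarith)
  rw [mul_left_comm, natCast_mul_share (by omega)]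
  linarith [mul_nonneg hd' hslope,
    mul_nonneg (mul_nonneg hs' hsk') (show (0 : ℚ) ≤ k - 1 by linarith)]

end Share

section Discharging

variable {x y w v : V} {B K : Finset V} {P Q : Finset (V × V)}

/-- The vertices of `U` of degree `k - 1` in `G[U]`, the smallest degree in a minimal
counterexample. -/
noncomputable def lowVertices (k : ℕ) (G : SimpleGraph V) (U : Finset V) : Finset V :=
  {v ∈ U | deg G U v = k - 1}

/-- The vertices of `U` of degree `k` in `G[U]`. -/
noncomputable def midVertices (k : ℕ) (G : SimpleGraph V) (U : Finset V) : Finset V :=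
  {v ∈ U | deg G U v = k}

/-- The vertices of `U` of degree at least `k + 1` in `G[U]`, which have charge to give away. -/
noncomputable def highVertices (k : ℕ) (G : SimpleGraph V) (U : Finset V) : Finset V :=
  {v ∈ U | k + 1 ≤ deg G U v}

/-- The low vertices without low neighbors. -/
noncomputable def isolatedLowVertices (k : ℕ) (G : SimpleGraph V) (U : Finset V) : Finset V :=
  {v ∈ lowVertices k G U | ∀ u ∈ nbhd G U v, k ≤ deg G U u}

/-- `P` is a set of ordered pairs along which the low vertex `x` may collect charge: either the
edges from high vertices to `x`, or, if `x` is the only low vertex of a `(k - 1)`-clique `K`, the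
edges from one high vertex of `K` to the rest of `K`. -/
inductive IsClaim (k : ℕ) (G : SimpleGraph V) (U : Finset V) (x : V) : Finset (V × V) → Prop
  | star : IsClaim k G U x (nbhd G (highVertices k G U) x ×ˢ {x})
  | clique {K : Finset V} {w : V} (hKU : K ⊆ U) (hK : G.IsNClique (k - 1) K) (hx : x ∈ K)
      (hdeg : ∀ u ∈ K.erase x, k ≤ deg G U u) (hw : w ∈ K) (hwH : w ∈ highVertices k G U) :
      IsClaim k G U x ({w} ×ˢ K.erase w)

lemma mem_lowVertices : v ∈ lowVertices k G U ↔ v ∈ U ∧ deg G U v = k - 1 := mem_filter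

lemma mem_highVertices : v ∈ highVertices k G U ↔ v ∈ U ∧ k + 1 ≤ deg G U v := mem_filter

lemma IsClaim.subset (hP : IsClaim k G U x P) (hx : x ∈ U) :
    P ⊆ G.interedges (highVertices k G U) U := by
  rintro ⟨a, b⟩ hab
  rw [mem_interedges_iff]
  cases hP with
  | star =>
    obtain ⟨ha, hb⟩ := mem_product.1 hab
    obtain rfl := mem_singleton.1 hb
    exact ⟨(mem_nbhd.1 ha).1, hx, (mem_nbhd.1 ha).2.symm⟩
  | clique hKU hK _ _ hw hwH =>
    obtain ⟨ha, hb⟩ := mem_product.1 hab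
    obtain rfl := mem_singleton.1 ha
    exact ⟨hwH, hKU (mem_of_mem_erase hb),
      hK.isClique hw (mem_of_mem_erase hb) (ne_of_mem_erase hb).symm⟩

-- Distinct `(k - 1)`-cliques share at most one vertex, and a clique claim of `x` reaches no other
-- low vertex.
lemma IsClaim.disjoint (hP : IsClaim k G U x P) (hQ : IsClaim k G U y Q)
    (M : IsMinCounterexample k G U) (hdx : deg G U x < k) (hdy : deg G U y < k) (hxy : x ≠ y) :
    Disjoint P Q := by
  rw [Finset.disjoint_left]
  rintro ⟨a, b⟩ hab hab'
  cases hP with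
  | star =>
    obtain rfl := mem_singleton.1 (mem_product.1 hab).2
    cases hQ with
    | star => exact hxy (mem_singleton.1 (mem_product.1 hab').2)
    | clique _ _ _ hdeg _ _ =>
      exact hdx.not_ge (hdeg b (mem_erase.2 ⟨hxy, mem_of_mem_erase (mem_product.1 hab').2⟩))
  | clique hKU hK hx hdeg hw hwH =>
    have hb := (mem_product.1 hab).2
    obtain rfl := mem_singleton.1 (mem_product.1 hab).1
    cases hQ with
    | star =>
      obtain rfl := mem_singleton.1 (mem_product.1 hab').2
      exact hdy.not_ge (hdeg b (mem_erase.2 ⟨hxy.symm, mem_of_mem_erase hb⟩))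
    | clique hKU' hK' hy _ hw' _ =>
      have hb' := (mem_product.1 hab').2
      obtain rfl := mem_singleton.1 (mem_product.1 hab').1
      refine hdy.not_ge (hdeg y (mem_erase.2 ⟨hxy.symm, ?_⟩))
      refine (M.eq_of_two_le_card_inter hKU hKU' hK hK' ?_).symm ▸ hy
      rw [← card_pair (ne_of_mem_erase hb).symm]
      refine card_le_card (insert_subset (mem_inter.2 ⟨hw, hw'⟩) (singleton_subset_iff.2 ?_))
      exact mem_inter.2 ⟨mem_of_mem_erase hb, mem_of_mem_erase hb'⟩

lemma sum_interedges (S T : Finset V) (f : V → ℚ) :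
    ∑ p ∈ G.interedges S T, f p.1 = ∑ v ∈ S, deg G T v * f v := by
  rw [interedges, Rel.interedges, sum_filter, sum_product]
  refine sum_congr rfl fun v _ => ?_
  simp only [← sum_filter, sum_const, nsmul_eq_mul]
  rfl

namespace IsMinCounterexample

lemma one_le_share (M : IsMinCounterexample k G U) (hw : w ∈ highVertices k G U) :
    1 ≤ share k (deg G U w) :=
  KostochkaYancey.one_le_share (by linarith [M.four_le]) (mem_highVertices.1 hw).2

lemma exists_subset_nbhd_le_deg (M : IsMinCounterexample k G U) (hx : x ∈ lowVertices k G U) :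
    ∃ Y ⊆ nbhd G U x, k ≤ #Y + #(cluster G U x) + 1 ∧
      ∀ w ∈ Y, k - 1 + #(cluster G U x) ≤ deg G U w := by
  obtain ⟨hxU, hdx⟩ := mem_lowVertices.1 hx
  by_cases hclique : ∃ z ∈ nbhd G U x, G.IsNClique (k - 1) ((closedNbhd G U x).erase z)
  · obtain ⟨z, hz, hc⟩ := hclique
    refine ⟨(closedNbhd G U x).erase z \ cluster G U x, fun w hw => ?_, ?_, fun w hw => ?_⟩
    · obtain ⟨hw, hwC⟩ := mem_sdiff.1 hw
      refine mem_nbhd.2 ((mem_closedNbhd.1 (mem_of_mem_erase hw)).resolve_left ?_)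
      rintro rfl
      exact hwC (self_mem_cluster hxU)
    · have := le_card_sdiff (cluster G U x) ((closedNbhd G U x).erase z)
      rw [hc.card_eq] at this
      omega
    · obtain ⟨hw, hwC⟩ := mem_sdiff.1 hw
      exact M.le_deg_of_mem_isNClique hxU hz hc hw hwC
  · push Not at hclique
    refine ⟨nbhd G U x \ cluster G U x, sdiff_subset, ?_, fun w hw => ?_⟩
    · have := le_card_sdiff (cluster G U x) (nbhd G U x)
      rw [← deg, hdx] at this
      omega
    · obtain ⟨hw, hwC⟩ := mem_sdiff.1 hw
      exact M.le_deg_of_notMem_cluster hxU hdx hclique hw hwC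

lemma le_sum_share_of_two_le_card_cluster (M : IsMinCounterexample k G U)
    (hx : x ∈ lowVertices k G U) (h₂ : 2 ≤ #(cluster G U x)) :
    (k : ℚ) - 3 ≤ ∑ w ∈ nbhd G (highVertices k G U) x, share k (deg G U w) := by
  obtain ⟨hxU, hdx⟩ := mem_lowVertices.1 hx
  obtain ⟨Y, hYx, hY, hdeg⟩ := M.exists_subset_nbhd_le_deg hx
  have hs := M.card_cluster_le hxU hdx
  have hk := M.four_le
  set s := #(cluster G U x)
  have hs_pos : (0 : ℚ) < k - 1 - s := by
    have : (s : ℚ) + 3 ≤ k := by exact_mod_cast (by omega : s + 3 ≤ k)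
    linarith
  have hY' : (k : ℚ) - 1 - s ≤ #Y := by
    have : (k : ℚ) ≤ #Y + s + 1 := by exact_mod_cast hY
    linarith
  have hYH : Y ⊆ nbhd G (highVertices k G U) x := fun w hw => by
    obtain ⟨hwU, hxw⟩ := mem_nbhd.1 (hYx hw)
    have := hdeg w hw
    exact mem_nbhd.2 ⟨mem_highVertices.2 ⟨hwU, by omega⟩, hxw⟩
  have hshare : ∀ w ∈ Y, ((k : ℚ) - 3) / (k - 1 - s) ≤ share k (deg G U w) := fun w hw => by
    rw [div_le_iff₀ hs_pos, mul_comm]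
    exact le_mul_share h₂ (by omega) (hdeg w hw)
  have hk' : (0 : ℚ) ≤ k - 3 := by
    have : (4 : ℚ) ≤ k := by exact_mod_cast hk
    linarith
  calc (k : ℚ) - 3 = (k - 1 - s) * (((k : ℚ) - 3) / (k - 1 - s)) := by field_simp
    _ ≤ #Y * (((k : ℚ) - 3) / (k - 1 - s)) := by gcongr
    _ = #Y • (((k : ℚ) - 3) / (k - 1 - s)) := (nsmul_eq_mul _ _).symm
    _ ≤ ∑ w ∈ Y, share k (deg G U w) := card_nsmul_le_sum _ _ _ hshare
    _ ≤ ∑ w ∈ nbhd G (highVertices k G U) x, share k (deg G U w) :=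
      sum_le_sum_of_subset_of_nonneg hYH fun w hw _ =>
        zero_le_one.trans (M.one_le_share (mem_nbhd.1 hw).1)

lemma le_sum_share_of_mem_isolatedLowVertices (M : IsMinCounterexample k G U)
    (hx : x ∈ isolatedLowVertices k G U) :
    (k : ℚ) - 3 ≤ ∑ w ∈ nbhd G (highVertices k G U) x, share k (deg G U w) +
      (deg G (midVertices k G U) x - 2) := by
  obtain ⟨hxL, hdeg⟩ := mem_filter.1 hx
  have hcover : nbhd G U x ⊆ nbhd G (highVertices k G U) x ∪ nbhd G (midVertices k G U) x := by
    intro v hv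
    have := hdeg v hv
    simp only [mem_union, mem_nbhd, highVertices, midVertices, mem_filter] at hv ⊢
    grind
  have hcard : k - 1 ≤ deg G (highVertices k G U) x + deg G (midVertices k G U) x :=
    (mem_lowVertices.1 hxL).2 ▸ (card_le_card hcover).trans (card_union_le _ _)
  have hcard' : (k : ℚ) ≤
      deg G (highVertices k G U) x + deg G (midVertices k G U) x + 1 := by
    exact_mod_cast Nat.le_add_of_sub_le hcard
  have hsum := card_nsmul_le_sum (nbhd G (highVertices k G U) x)
    (fun w => share k (deg G U w)) 1 fun w hw => M.one_le_share (mem_nbhd.1 hw).1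
  rw [nsmul_one, ← deg] at hsum
  linarith

lemma exists_isClaim_of_card_cluster_eq_one (M : IsMinCounterexample k G U)
    (hx : x ∈ lowVertices k G U) (hxI : x ∉ isolatedLowVertices k G U)
    (h₁ : #(cluster G U x) = 1) :
    ∃ P, IsClaim k G U x P ∧ (k : ℚ) - 3 ≤ ∑ p ∈ P, share k (deg G U p.1) := by
  obtain ⟨hxU, hdx⟩ := mem_lowVertices.1 hx
  have hk := M.four_le
  have hcluster : ∀ w ≠ x, w ∉ cluster G U x := fun w hw hwC =>
    hw (card_le_one.1 h₁.le w hwC x (self_mem_cluster hxU))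
  obtain ⟨z, hz, hc⟩ :
      ∃ z ∈ nbhd G U x, G.IsNClique (k - 1) ((closedNbhd G U x).erase z) := by
    by_contra! hno
    refine hxI (mem_filter.2 ⟨hx, fun v hv => ?_⟩)
    have := M.le_deg_of_notMem_cluster hxU hdx hno hv (hcluster v (mem_nbhd.1 hv).2.ne')
    omega
  have hdeg : ∀ w ∈ ((closedNbhd G U x).erase z).erase x, k ≤ deg G U w := fun w hw => by
    have := M.le_deg_of_mem_isNClique hxU hz hc (mem_of_mem_erase hw)
      (hcluster w (ne_of_mem_erase hw))
    omega
  obtain ⟨w, hw, hwk⟩ := M.exists_deg_ne hxU hz hc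
  have hwK := mem_of_mem_erase hw
  have hKU := (erase_subset z _).trans (closedNbhd_subset (G := G) hxU)
  have hwH : w ∈ highVertices k G U :=
    mem_highVertices.2 ⟨hKU hwK, (hdeg w hw).lt_of_ne hwk.symm⟩
  refine ⟨_, .clique hKU hc (mem_erase.2 ⟨(mem_nbhd.1 hz).2.ne, self_mem_closedNbhd⟩) hdeg hwK
    hwH, ?_⟩
  rw [sum_product, sum_singleton]
  simp only [sum_const, card_erase_of_mem hwK, hc.card_eq, nsmul_eq_mul, Nat.sub_sub]
  rw [Nat.cast_sub (by omega)]
  have := M.one_le_share hwH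
  have : (4 : ℚ) ≤ k := by exact_mod_cast hk
  push_cast
  nlinarith

lemma exists_isClaim (M : IsMinCounterexample k G U) (hx : x ∈ lowVertices k G U) :
    ∃ P, IsClaim k G U x P ∧ (k : ℚ) - 3 ≤ ∑ p ∈ P, share k (deg G U p.1) +
      if x ∈ isolatedLowVertices k G U then (deg G (midVertices k G U) x : ℚ) - 2 else 0 := by
  have hstar : ∑ p ∈ nbhd G (highVertices k G U) x ×ˢ {x}, share k (deg G U p.1) =
      ∑ w ∈ nbhd G (highVertices k G U) x, share k (deg G U w) := by
    simp only [sum_product, sum_singleton]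
  by_cases hxI : x ∈ isolatedLowVertices k G U
  · refine ⟨_, .star, ?_⟩
    rw [if_pos hxI, hstar]
    exact M.le_sum_share_of_mem_isolatedLowVertices hxI
  simp only [if_neg hxI, add_zero]
  have hpos : 0 < #(cluster G U x) := card_pos.2 ⟨x, self_mem_cluster (mem_lowVertices.1 hx).1⟩
  obtain h₁ | h₂ := (Nat.succ_le_of_lt hpos).eq_or_lt'
  · exact M.exists_isClaim_of_card_cluster_eq_one hx hxI h₁
  · exact ⟨_, .star, hstar ▸ M.le_sum_share_of_two_le_card_cluster hx h₂⟩

lemma edgePairs_isolatedLowVertices_le (M : IsMinCounterexample k G U) :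
    edgePairs G (isolatedLowVertices k G U) (midVertices k G U) ≤
      #(isolatedLowVertices k G U) + 2 * #(midVertices k G U) := by
  have hk := M.four_le
  have hlow : ∀ x ∈ isolatedLowVertices k G U, x ∈ U ∧ deg G U x = k - 1 := fun x hx =>
    mem_lowVertices.1 (mem_filter.1 hx).1
  refine M.edgePairs_le_of_isIndepSet (fun x hx => (hlow x hx).1) (filter_subset _ _)
    (Finset.disjoint_left.2 fun v hv hv' => ?_) (fun u hu v hv _ huv => ?_)
    (fun x hx => (hlow x hx).2) fun b hb => (mem_filter.1 hb).2
  · have := (hlow v hv).2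
    have := (mem_filter.1 hv').2
    omega
  · have := (mem_filter.1 hu).2 v (mem_nbhd.2 ⟨(hlow v hv).1, huv⟩)
    have := (hlow v hv).2
    omega

lemma card_mul_le_sum_share (M : IsMinCounterexample k G U) :
    #(lowVertices k G U) * ((k : ℚ) - 3) ≤
      ∑ w ∈ highVertices k G U, deg G U w * share k (deg G U w) +
        2 * #(midVertices k G U) := by
  have hk := M.four_le
  choose! P hP hsum using fun x => M.exists_isClaim (x := x)
  set L := lowVertices k G U
  set I := isolatedLowVertices k G U with hI
  set B := midVertices k G U
  set H := highVertices k G U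
  have hL_mem : ∀ x ∈ L, x ∈ U ∧ deg G U x < k := fun x hx =>
    ⟨(mem_lowVertices.1 hx).1, by have := (mem_lowVertices.1 hx).2; omega⟩
  have hclaims : ∑ x ∈ L, ∑ p ∈ P x, share k (deg G U p.1) ≤
      ∑ w ∈ H, deg G U w * share k (deg G U w) := by
    rw [← sum_biUnion fun x hx y hy hxy =>
        (hP x hx).disjoint (hP y hy) M (hL_mem x hx).2 (hL_mem y hy).2 hxy,
      ← sum_interedges H U fun w => share k (deg G U w)]
    refine sum_le_sum_of_subset_of_nonneg
      (biUnion_subset.2 fun x hx => (hP x hx).subset (hL_mem x hx).1) fun p hp _ => ?_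
    exact zero_le_one.trans (M.one_le_share ((mem_interedges_iff G).1 hp).1)
  have hisolated : ∑ x ∈ L, (if x ∈ I then (deg G B x : ℚ) - 2 else 0) ≤ 2 * #B := by
    rw [← sum_filter, hI, isolatedLowVertices, filter_mem_eq_inter,
      inter_eq_right.2 (filter_subset _ _), sum_sub_distrib, sum_const, nsmul_eq_mul,
      ← isolatedLowVertices, ← hI]
    have hle := M.edgePairs_isolatedLowVertices_le
    rw [edgePairs_eq_sum_deg] at hle
    have hle' : ∑ x ∈ I, (deg G B x : ℚ) ≤ #I + 2 * #B := by exact_mod_cast hle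
    linarith [(#I).cast_nonneg (α := ℚ)]
  calc #L * ((k : ℚ) - 3) = ∑ x ∈ L, ((k : ℚ) - 3) := by rw [sum_const, nsmul_eq_mul]
    _ ≤ ∑ x ∈ L, (∑ p ∈ P x, share k (deg G U p.1) +
          if x ∈ I then (deg G B x : ℚ) - 2 else 0) := sum_le_sum hsum
    _ ≤ _ := by
      rw [sum_add_distrib]
      exact add_le_add hclaims hisolated

lemma sum_eq_sum_lowVertices_add (M : IsMinCounterexample k G U) (f : V → ℚ) :
    ∑ v ∈ U, f v = ∑ v ∈ lowVertices k G U, f v + ∑ v ∈ midVertices k G U, f v +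
      ∑ v ∈ highVertices k G U, f v := by
  have hk := M.four_le
  have hsplit : U = (lowVertices k G U ∪ midVertices k G U) ∪ highVertices k G U := by
    ext v
    simp only [mem_union, lowVertices, midVertices, highVertices, mem_filter]
    have hdeg : v ∈ U → k - 1 ≤ deg G U v := M.le_deg
    constructor
    · intro hv
      have := hdeg hv
      by_cases h₁ : deg G U v = k - 1 <;> by_cases h₂ : deg G U v = k <;> grind
    · tauto
  conv_lhs => rw [hsplit]
  rw [sum_union, sum_union] <;>
    simp only [Finset.disjoint_left, mem_union, lowVertices, midVertices, highVertices,
      mem_filter] <;> grind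

theorem rho_nonpos (M : IsMinCounterexample k G U) : rho k G U ≤ 0 := by
  have hk := M.four_le
  have hrho : (rho k G U : ℚ) =
      ∑ v ∈ U, (((k : ℚ) + 1) * ((k : ℚ) - 2) - ((k : ℚ) - 1) * deg G U v) := by
    rw [rho, edgePairs_eq_sum_deg, sum_sub_distrib, sum_const, ← mul_sum, nsmul_eq_mul]
    push_cast
    ring
  have hlow : ∑ v ∈ lowVertices k G U,
      (((k : ℚ) + 1) * ((k : ℚ) - 2) - ((k : ℚ) - 1) * deg G U v) =
        #(lowVertices k G U) * ((k : ℚ) - 3) := by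
    rw [← nsmul_eq_mul, ← sum_const]
    refine sum_congr rfl fun v hv => ?_
    rw [(mem_lowVertices.1 hv).2, Nat.cast_sub (by omega)]
    push_cast
    ring
  have hmid : ∑ v ∈ midVertices k G U,
      (((k : ℚ) + 1) * ((k : ℚ) - 2) - ((k : ℚ) - 1) * deg G U v) =
        -(2 * #(midVertices k G U)) := by
    rw [show -(2 * (#(midVertices k G U) : ℚ)) = #(midVertices k G U) * (-2) by ring,
      ← nsmul_eq_mul, ← sum_const]
    refine sum_congr rfl fun v hv => ?_
    rw [(mem_filter.1 hv).2]
    ring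
  have hhigh : ∑ v ∈ highVertices k G U,
      (((k : ℚ) + 1) * ((k : ℚ) - 2) - ((k : ℚ) - 1) * deg G U v) =
        -∑ v ∈ highVertices k G U, deg G U v * share k (deg G U v) := by
    rw [← sum_neg_distrib]
    refine sum_congr rfl fun v hv => ?_
    rw [natCast_mul_share (by have := (mem_highVertices.1 hv).2; omega)]
    ring
  have hcast : (rho k G U : ℚ) ≤ 0 := by
    rw [hrho, M.sum_eq_sum_lowVertices_add, hlow, hmid, hhigh]
    linarith [M.card_mul_le_sum_share]
  exact_mod_cast hcast

end IsMinCounterexample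

end Discharging

theorem HighPotential.colorableOn (hk : 4 ≤ k) (h : HighPotential k G U) :
    ColorableOn G U (k - 1) := by
  by_contra hc
  obtain ⟨G', U', M⟩ := exists_isMinCounterexample hk h hc
  have hne : U'.Nonempty := by
    rw [nonempty_iff_ne_empty]
    rintro rfl
    exact M.not_colorableOn ⟨fun _ => ⟨0, by have := M.four_le; omega⟩, by simp [IsColoringOn]⟩
  have hpos := M.lt_rho subset_rfl hne
  have : (4 : ℤ) ≤ k := M.four_le_cast
  nlinarith [M.rho_nonpos]

lemma two_mul_card_edgeFinset_induce (G : SimpleGraph V) (S : Finset V)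
    [Fintype (G.induce (S : Set V)).edgeSet] :
    2 * (#(G.induce (S : Set V)).edgeFinset : ℤ) = edgePairs G S S := by
  have hdeg (v : (S : Set V)) : (G.induce (S : Set V)).degree v = deg G S v := by
    rw [← card_neighborFinset_eq_degree, deg]
    refine card_bij (fun a _ => a.1) (fun a ha => ?_) (fun a _ b _ => Subtype.ext) fun b hb => ?_
    · exact mem_nbhd.2 ⟨a.2, by simpa using ha⟩
    · obtain ⟨hbS, hvb⟩ := mem_nbhd.1 hb
      exact ⟨⟨b, hbS⟩, by simpa using hvb, rfl⟩
  have hsum := (G.induce (S : Set V)).sum_degrees_eq_twice_card_edges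
  simp only [hdeg] at hsum
  rw [edgePairs_eq_sum_deg, ← sum_coe_sort S]
  convert (congrArg (Nat.cast : ℕ → ℤ) hsum).symm using 1
  · push_cast
    congr!
  · push_cast
    rfl

lemma potential_eq_rho [Fintype V] [DecidableEq V] [DecidableRel G.Adj] (k : ℕ) (S : Finset V) :
    potential k G S = rho k G S := by
  rw [potential, rho, ← two_mul_card_edgeFinset_induce]
  ring

end KostochkaYancey

/-- Written with `rho`, so that `V` may be infinite; the colorings of the finite subgraphs are glued
by compactness. -/
theorem colorable_of_high_potential_general {V : Type*} (k : ℕ) (hk : 4 ≤ k) (G : SimpleGraph V)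
    (hρ : ∀ S : Finset V, S.Nonempty → (k : ℤ) * ((k : ℤ) - 3) < KostochkaYancey.rho k G S) :
    G.Colorable (k - 1) := by
  refine nonempty_hom_of_forall_finite_subgraph_hom fun H hH => ?_
  have hcol : KostochkaYancey.ColorableOn G hH.toFinset (k - 1) :=
    KostochkaYancey.HighPotential.colorableOn hk fun S _ hS => hρ S hS
  have hc := hcol.choose_spec
  exact Coloring.mk (fun v => hcol.choose v) fun {u v} huv =>
    hc u (hH.mem_toFinset.2 u.2) v (hH.mem_toFinset.2 v.2) huv.adj_sub

/-- **Corollary.** Let `k ≥ 4` and let `G` be a graph with `ρ_{k,G}(S) > k(k-3)` for all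
nonempty `S ⊆ V(G)`. Then `G` is `(k-1)`-colorable. -/
theorem colorable_of_high_potential {V : Type*} [Fintype V] [DecidableEq V] (k : ℕ)
    (hk : 4 ≤ k) (G : SimpleGraph V) [DecidableRel G.Adj]
    (hpot : ∀ S : Finset V, S.Nonempty → (k : ℤ) * ((k : ℤ) - 3) < potential k G S) :
    G.Colorable (k - 1) := by
  exact colorable_of_high_potential_general k hk G fun S hS => by
    rw [← KostochkaYancey.potential_eq_rho]
    exact hpot S hS
end

section
/- Let k ≥ 6 and let H'_k be the graph with vertex set {u_1, …, u_{k−1}, v_1, …, v_{k−1}, w} and edge set consisting of all edges u_iu_j for 1 ≤ i < j ≤ k−1, all edges v_iv_j for 1 ≤ i < j ≤ k−1, the edges u_2v_1 and u_2v_2, and the edges wu_i and wv_i for all i > 2. Then every proper (k−1)-coloring φ of H'_k satisfies φ(u_1) = φ(w). -/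
open SimpleGraph

/-- The graph `H'_k = H_{k,2} - {u₁v₁, u₁v₂}`: two disjoint `(k-1)`-cliques
`{u_1, …, u_{k-1}}` and `{v_1, …, v_{k-1}}` (indexed here from `0` to `k-2`), the cross edges
`u_2v_1` and `u_2v_2`, and a vertex `w` joined to `u_i` and `v_i` for all `i > 2`. -/
def HkPrime (k : ℕ) : SimpleGraph (Fin (k - 1) ⊕ Fin (k - 1) ⊕ Unit) :=
  SimpleGraph.fromRel (fun a b =>
    match a, b with
    | Sum.inl _, Sum.inl _ => True
    | Sum.inr (Sum.inl _), Sum.inr (Sum.inl _) => True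
    | Sum.inl i, Sum.inr (Sum.inl j) => i.val = 1 ∧ j.val ≤ 1
    | Sum.inr (Sum.inr _), Sum.inl i => 2 ≤ i.val
    | Sum.inr (Sum.inr _), Sum.inr (Sum.inl i) => 2 ≤ i.val
    | _, _ => False)

section RainbowClique

variable {V α ι : Type*} [Finite α] {G : SimpleGraph V} {v : ι → V}

theorem exists_not_adj_and_coloring_eq_of_pairwise_adj (C : G.Coloring α)
    (hv : Pairwise fun i j => G.Adj (v i) (v j)) (hcard : Nat.card α ≤ Nat.card ι) (w : V) :
    ∃ i, ¬G.Adj w (v i) ∧ C (v i) = C w := by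
  have hbij : Function.Bijective (C ∘ v) :=
    (C.injective_comp_of_pairwise_adj v hv).bijective_of_nat_card_le hcard
  obtain ⟨i, hi⟩ := hbij.surjective (C w)
  exact ⟨i, fun hadj => C.valid hadj hi.symm, hi⟩

theorem coloring_ne_of_pairwise_adj_of_forall_adj_or_adj (C : G.Coloring α)
    (hv : Pairwise fun i j => G.Adj (v i) (v j)) (hcard : Nat.card α ≤ Nat.card ι) {x w : V}
    (hxw : ∀ i, G.Adj x (v i) ∨ G.Adj w (v i)) : C x ≠ C w := by
  obtain ⟨i, hwi, hi⟩ := exists_not_adj_and_coloring_eq_of_pairwise_adj C hv hcard w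
  have hxi : G.Adj x (v i) := (hxw i).resolve_right hwi
  exact hi ▸ C.valid hxi

end RainbowClique

namespace HkPrime

variable {k : ℕ} {i j : Fin (k - 1)}

theorem adj_u_u : (HkPrime k).Adj (.inl i) (.inl j) ↔ i ≠ j := by
  simp [HkPrime]

theorem adj_v_v : (HkPrime k).Adj (.inr (.inl i)) (.inr (.inl j)) ↔ i ≠ j := by
  simp [HkPrime]

theorem adj_u_v : (HkPrime k).Adj (.inl i) (.inr (.inl j)) ↔ i.val = 1 ∧ j.val ≤ 1 := by
  simp [HkPrime]

theorem adj_w_u : (HkPrime k).Adj (.inr (.inr ())) (.inl i) ↔ 2 ≤ i.val := by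
  simp [HkPrime]

theorem adj_w_v : (HkPrime k).Adj (.inr (.inr ())) (.inr (.inl j)) ↔ 2 ≤ j.val := by
  simp [HkPrime]

theorem coloring_u₂_ne_w {α : Type*} [Finite α] (C : (HkPrime k).Coloring α)
    (hα : Nat.card α ≤ k - 1) (hi : i.val = 1) :
    C (.inl i) ≠ C (.inr (.inr ())) := by
  refine coloring_ne_of_pairwise_adj_of_forall_adj_or_adj C (v := fun j => .inr (.inl j))
    (fun _ _ => adj_v_v.mpr) (hα.trans_eq (Nat.card_fin _).symm) fun j => ?_
  rw [adj_u_v, adj_w_v]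
  omega

end HkPrime

/-- With only `k-1` colors, a `(k-1)`-clique carries every color, and the color of `w` can occur
only on non-neighbors of `w`. Among the `v_j` these are `v_1` and `v_2`, both adjacent to `u_2`, so
`u_2` cannot share the color of `w`. Among the `u_i` this leaves only `u_1`. -/
theorem HkPrime_coloring_u₁_eq_w_general (k : ℕ) (hk : 2 ≤ k) {α : Type*} [Finite α]
    (hα : Nat.card α ≤ k - 1) (C : (HkPrime k).Coloring α) :
    C (Sum.inl ⟨0, by omega⟩) = C (Sum.inr (Sum.inr ())) := by
  obtain ⟨i, hwi, hi⟩ := exists_not_adj_and_coloring_eq_of_pairwise_adj C (v := Sum.inl)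
    (fun _ _ => HkPrime.adj_u_u.mpr) (hα.trans_eq (Nat.card_fin _).symm) (.inr (.inr ()))
  have hi_lt : i.val < 2 := not_le.mp (mt HkPrime.adj_w_u.mpr hwi)
  have hi_ne : i.val ≠ 1 := fun h => HkPrime.coloring_u₂_ne_w C hα h hi
  have hi_zero : i.val = 0 := by omega
  have hi_eq : i = ⟨0, by omega⟩ := Fin.ext hi_zero
  exact hi_eq ▸ hi

/-- **Claim.** Let `k ≥ 6`. Then every proper `(k-1)`-coloring `φ` of `H'_k` satisfies
`φ(u_1) = φ(w)`. -/
theorem HkPrime_coloring_u₁_eq_w (k : ℕ) (hk : 6 ≤ k)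
    (C : (HkPrime k).Coloring (Fin (k - 1))) :
    C (Sum.inl ⟨0, by omega⟩) = C (Sum.inr (Sum.inr ())) :=
  HkPrime_coloring_u₁_eq_w_general k (by omega) (Nat.card_fin _).le C
end
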